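/- Let X and Y be compact topological 2-manifolds with boundary that are homeomorphic to each other, and let h : X → Y be a continuous, surjective, monotone mapping. Then Int(Y) ⊂ h(Int(X)), ∂Y = h(∂X), and the restriction h|_{∂X} : ∂X → ∂Y is monotone. -/

import Mathlib

open Set

/-!
STATEMENT 18 (Youngs): Let `X` and `Y` be compact topological 2-manifolds with boundary
that are homeomorphic, and `h : X → Y` a continuous, surjective, monotone map.  Then
`Int Y ⊆ h(Int X)`, `∂Y = h(∂X)`, and the restriction of `h` to `∂X` is monotone.

A point of a topological 2-manifold-with-boundary is an interior point if it admits an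
open neighborhood homeomorphic to `ℝ²`; the manifold boundary is the complement of the set
of interior points.  Monotonicity of `h|∂X : ∂X → ∂Y` means that the preimage in `∂X` of
every point of `∂Y` is connected (connectedness of a subset of `∂X` being the same whether
computed in the subspace `∂X` or in `X`).
-/

/-- The manifold interior of a topological space: points with an open neighborhood
homeomorphic to the plane `ℝ²`. -/
def manifoldInterior (Z : Type*) [TopologicalSpace Z] : Set Z :=
  {x | ∃ U : Set Z, IsOpen U ∧ x ∈ U ∧ Nonempty (↥U ≃ₜ EuclideanSpace ℝ (Fin 2))}

/-- The manifold boundary: the complement of the manifold interior. -/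
def manifoldBoundary (Z : Type*) [TopologicalSpace Z] : Set Z :=
  (manifoldInterior Z)ᶜ

open Set Topology Filter

namespace BM

variable {X Y M : Type*} [TopologicalSpace X] [TopologicalSpace Y] [TopologicalSpace M]

def Triv (φ : X → X → ZMod 2) (c : X → ZMod 2) (x : X) : Prop :=
  ∃ V : Set X, IsOpen V ∧ x ∈ V ∧ ∀ a ∈ V, ∀ b ∈ V, φ a b = c a + c b

def Reg (φ : X → X → ZMod 2) (x : X) : Prop := ∃ c, Triv φ c x

def dl (c : X → ZMod 2) : X → X → ZMod 2 := fun a b => c a + c b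

def pull (f : X → Y) (φ : Y → Y → ZMod 2) : X → X → ZMod 2 := fun a b => φ (f a) (f b)

def Coc (φ : X → X → ZMod 2) (U : Set X) : Prop := ∀ x ∈ U, Reg φ x

def Cob (φ : X → X → ZMod 2) (U : Set X) : Prop := ∃ c, ∀ x ∈ U, Triv φ c x

def SCo (U : Set X) : Prop := ∀ φ : X → X → ZMod 2, Coc φ U → Cob φ U

lemma addself_fun {α : Type*} (c : α → ZMod 2) : c + c = 0 := by
  ext a; simp only [Pi.add_apply, Pi.zero_apply]; grind

lemma addself_fun₂ {α : Type*} (φ : α → α → ZMod 2) : φ + φ = 0 := by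
  ext a b; simp only [Pi.add_apply, Pi.zero_apply]; grind

lemma cancel_fun {α : Type*} (c d : α → ZMod 2) : c + (c + d) = d := by
  rw [← add_assoc, addself_fun, zero_add]

lemma cancel_fun₂ {α : Type*} (c d : α → α → ZMod 2) : c + (c + d) = d := by
  rw [← add_assoc, addself_fun₂, zero_add]

lemma cancel_fun₂' {α : Type*} (c d : α → α → ZMod 2) : (c + d) + d = c := by
  rw [add_assoc, addself_fun₂, add_zero]

lemma zmod_cases (a : ZMod 2) : a = 0 ∨ a = 1 := by decide +revert

section basics

variable {φ ψ : X → X → ZMod 2} {c d : X → ZMod 2} {x : X}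

lemma Triv.add (h1 : Triv φ c x) (h2 : Triv ψ d x) : Triv (φ + ψ) (c + d) x := by
  obtain ⟨V, hV, hx, h1⟩ := h1
  obtain ⟨W, hW, hx', h2⟩ := h2
  refine ⟨V ∩ W, hV.inter hW, ⟨hx, hx'⟩, fun a ha b hb => ?_⟩
  simp only [Pi.add_apply, h1 a ha.1 b hb.1, h2 a ha.2 b hb.2]
  ring

lemma Triv.sub' (h1 : Triv φ c x) (h2 : Triv φ d x) : Triv 0 (c + d) x := by
  have := h1.add h2
  rwa [addself_fun₂] at this

lemma Triv.lc (h1 : Triv φ c x) (h2 : Triv 0 d x) : Triv φ (c + d) x := by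
  have := h1.add h2
  rwa [add_zero] at this

lemma Triv.open (h : Triv φ c x) : ∃ V : Set X, IsOpen V ∧ x ∈ V ∧ ∀ y ∈ V, Triv φ c y := by
  obtain ⟨V, hV, hx, h1⟩ := h
  exact ⟨V, hV, hx, fun y hy => ⟨V, hV, hy, h1⟩⟩

lemma isOpen_triv (φ : X → X → ZMod 2) (c : X → ZMod 2) : IsOpen {x | Triv φ c x} := by
  rw [isOpen_iff_forall_mem_open]
  intro x hx
  obtain ⟨V, hV, hx, h1⟩ := Triv.open hx
  exact ⟨V, h1, hV, hx⟩

lemma isOpen_reg (φ : X → X → ZMod 2) : IsOpen {x | Reg φ x} := by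
  have : {x | Reg φ x} = ⋃ c, {x | Triv φ c x} := by ext; simp [Reg]
  rw [this]
  exact isOpen_iUnion fun c => isOpen_triv φ c

lemma triv_dl (c : X → ZMod 2) (x : X) : Triv (dl c) c x :=
  ⟨univ, isOpen_univ, mem_univ _, fun _ _ _ _ => rfl⟩

lemma triv_zero (x : X) : Triv (0 : X → X → ZMod 2) 0 x :=
  ⟨univ, isOpen_univ, mem_univ _, fun _ _ _ _ => by simp⟩

lemma triv_const (k : ZMod 2) (x : X) : Triv (0 : X → X → ZMod 2) (fun _ => k) x :=
  ⟨univ, isOpen_univ, mem_univ _, fun _ _ _ _ => by simp; grind⟩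

lemma Triv.congr {U : Set X} (h : Triv φ c x) (hU : U ∈ 𝓝 x)
    (h1 : ∀ a ∈ U, ∀ b ∈ U, φ a b = ψ a b) (h2 : ∀ a ∈ U, c a = d a) : Triv ψ d x := by
  obtain ⟨V, hV, hx, h⟩ := h
  obtain ⟨W, hWU, hW, hxW⟩ := mem_nhds_iff.1 hU
  refine ⟨V ∩ W, hV.inter hW, ⟨hx, hxW⟩, fun a ha b hb => ?_⟩
  rw [← h1 a (hWU ha.2) b (hWU hb.2), h a ha.1 b hb.1, h2 a (hWU ha.2), h2 b (hWU hb.2)]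

lemma Triv.congr_right {U : Set X} (h : Triv φ c x) (hU : U ∈ 𝓝 x)
    (h2 : ∀ a ∈ U, c a = d a) : Triv φ d x := h.congr hU (fun _ _ _ _ => rfl) h2

lemma Triv.congr_left {U : Set X} (h : Triv φ c x) (hU : U ∈ 𝓝 x)
    (h1 : ∀ a ∈ U, ∀ b ∈ U, φ a b = ψ a b) : Triv ψ c x := h.congr hU h1 (fun _ _ => rfl)

lemma Triv.pull {f : Y → X} {y : Y} (h : Triv φ c (f y)) (hf : ContinuousAt f y) :
    Triv (pull f φ) (c ∘ f) y := by
  obtain ⟨V, hV, hx, h⟩ := h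
  obtain ⟨W, hWU, hW, hxW⟩ := mem_nhds_iff.1 (hf (hV.mem_nhds hx))
  exact ⟨W, hW, hxW, fun a ha b hb => h _ (hWU ha) _ (hWU hb)⟩

lemma Reg.pull {f : Y → X} {y : Y} (h : Reg φ (f y)) (hf : ContinuousAt f y) :
    Reg (pull f φ) y := by
  obtain ⟨c, h⟩ := h
  exact ⟨_, h.pull hf⟩

lemma Reg.add (h1 : Reg φ x) (h2 : Reg ψ x) : Reg (φ + ψ) x := by
  obtain ⟨c, h1⟩ := h1
  obtain ⟨d, h2⟩ := h2
  exact ⟨_, h1.add h2⟩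

lemma reg_dl (c : X → ZMod 2) (x : X) : Reg (dl c) x := ⟨c, triv_dl c x⟩

lemma Triv.symm' (h : Triv φ c x) (h0 : Triv φ 0 x) : Triv 0 c x := by
  simpa using h.sub' h0

/-- locally constant on preconnected set is constant -/
lemma lc_const {S : Set X} (hS : IsPreconnected S) (h : ∀ x ∈ S, Triv 0 d x) {a b : X}
    (ha : a ∈ S) (hb : b ∈ S) : d a = d b := by
  refine IsPreconnected.induction₂ hS (fun x y => d x = d y) ?_ ?_ ?_ ha hb
  · intro x hx
    obtain ⟨V, hV, hx, h1⟩ := h x hx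
    filter_upwards [mem_nhdsWithin_of_mem_nhds (hV.mem_nhds hx)] with y hy
    have := h1 x hx y hy
    simp only [Pi.zero_apply] at this
    grind
  · intro x y z _ _ _ h1 h2; exact h1.trans h2
  · intro x y _ _ h1; exact h1.symm

lemma Cob.glue {U V : Set X} (hU : IsOpen U) (hV : IsOpen V) (hUV : IsPreconnected (U ∩ V))
    (h1 : Cob φ U) (h2 : Cob φ V) : Cob φ (U ∪ V) := by
  classical
  obtain ⟨c, h1⟩ := h1
  obtain ⟨d, h2⟩ := h2
  have hk : ∃ k, ∀ x ∈ U ∩ V, c x + d x = k := by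
    by_cases hne : (U ∩ V).Nonempty
    · obtain ⟨x0, hx0⟩ := hne
      exact ⟨c x0 + d x0, fun x hx =>
        lc_const (d := c + d) hUV (fun x hx => (h1 x hx.1).sub' (h2 x hx.2)) hx hx0⟩
    · exact ⟨0, fun x hx => (hne ⟨x, hx⟩).elim⟩
  obtain ⟨k, hk⟩ := hk
  refine ⟨fun x => if x ∈ U then c x else d x + k, ?_⟩
  rintro x (hx | hx)
  · refine (h1 x hx).congr_right (hU.mem_nhds hx) ?_
    intro a ha; simp [ha]
  · refine ((h2 x hx).lc (triv_const k x)).congr_right (hV.mem_nhds hx) ?_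
    intro a ha
    simp only [Pi.add_apply]
    split_ifs with h
    · have := hk a ⟨h, ha⟩; grind
    · rfl

lemma Cob.mono {U V : Set X} (h : Cob φ V) (hUV : U ⊆ V) : Cob φ U := by
  obtain ⟨c, h⟩ := h
  exact ⟨c, fun x hx => h x (hUV hx)⟩

lemma Cob.coc {U : Set X} (h : Cob φ U) : Coc φ U := by
  obtain ⟨c, h⟩ := h
  exact fun x hx => ⟨c, h x hx⟩

lemma Cob.add {U : Set X} (h : Cob φ U) (h' : Cob ψ U) : Cob (φ + ψ) U := by
  obtain ⟨c, h⟩ := h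
  obtain ⟨d, h'⟩ := h'
  exact ⟨c + d, fun x hx => (h x hx).add (h' x hx)⟩

end basics

section VB

variable {h : X → Y} 

/-- neighborhoods of fibers -/
lemma fiber_nhds (hcl : IsClosedMap h) {O : Set X} (hO : IsOpen O) {y : Y}
    (hy : h ⁻¹' {y} ⊆ O) : ∃ V : Set Y, IsOpen V ∧ y ∈ V ∧ h ⁻¹' V ⊆ O := by
  refine ⟨(h '' Oᶜ)ᶜ, (hcl _ hO.isClosed_compl).isOpen_compl, ?_, ?_⟩
  · rintro ⟨x, hx, rfl⟩
    exact hx (hy rfl)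
  · intro x hx
    by_contra hxO
    exact hx ⟨x, hxO, rfl⟩

lemma preimage_preconnected (hcl : IsClosedMap h) (hs : Function.Surjective h)
    (hm : ∀ y : Y, IsPreconnected (h ⁻¹' {y})) {S : Set Y} (hS : IsPreconnected S) :
    IsPreconnected (h ⁻¹' S) := by
  apply isPreconnected_of_forall_constant
  intro f hf
  have hfib : ∀ y ∈ S, ∀ a ∈ h ⁻¹' {y}, ∀ b ∈ h ⁻¹' {y}, f a = f b := by
    intro y hy a ha b hb
    refine (hm y).constant (f := f) (hf.mono ?_) ha hb
    rintro x rfl; exact hy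
  have key : ∀ a ∈ S, ∀ b ∈ S, f (Function.surjInv hs a) = f (Function.surjInv hs b) := by
    intro a ha b hb
    refine IsPreconnected.induction₂ hS
      (fun x y => f (Function.surjInv hs x) = f (Function.surjInv hs y)) ?_ ?_ ?_ ha hb
    · intro y hy
      obtain ⟨O, hO, hO2⟩ := (continuousOn_iff'.1 hf) {f (Function.surjInv hs y)}
        (isOpen_discrete _)
      obtain ⟨V, hV, hyV, hVO⟩ := fiber_nhds hcl hO (y := y) (by
        intro x hx
        have : x ∈ O ∩ h ⁻¹' S := by
          rw [← hO2]
          refine ⟨hfib y hy _ hx _ (Function.surjInv_eq hs y), ?_⟩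
          have : h x = y := hx
          simpa [this] using hy
        exact this.1)
      filter_upwards [mem_nhdsWithin_of_mem_nhds (hV.mem_nhds hyV), self_mem_nhdsWithin]
        with z hz hzS
      have : Function.surjInv hs z ∈ O ∩ h ⁻¹' S := by
        refine ⟨hVO ?_, ?_⟩ <;> simpa [Function.surjInv_eq hs z]
      rw [← hO2] at this
      exact (this.1 : _ = _).symm
    · intro x y z _ _ _ h1 h2; exact h1.trans h2
    · intro x y _ _ h1; exact h1.symm
  intro x hx y hy
  rw [hfib (h x) hx x rfl _ (Function.surjInv_eq hs (h x)),
    hfib (h y) hy y rfl _ (Function.surjInv_eq hs (h y))]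
  exact key _ hx _ hy

lemma VB (hc : Continuous h) (hcl : IsClosedMap h) (hs : Function.Surjective h)
    (hm : ∀ y : Y, IsPreconnected (h ⁻¹' {y})) {Z : Set Y} (hZ : IsOpen Z)
    {w : Y → Y → ZMod 2} (hw : Coc w Z) (hcob : Cob (pull h w) (h ⁻¹' Z)) : Cob w Z := by
  obtain ⟨c, hcob⟩ := hcob
  refine ⟨fun y => c (Function.surjInv hs y), ?_⟩
  intro y hy
  obtain ⟨c', hc'⟩ := hw y hy
  have hlc : ∀ x ∈ h ⁻¹' {y}, Triv 0 (c + c' ∘ h) x := by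
    intro x hx
    have hx' : h x = y := hx
    refine (hcob x (by simpa [hx'] using hy)).sub' ?_
    apply Triv.pull _ hc.continuousAt
    rwa [hx']
  have hconst : ∀ x ∈ h ⁻¹' {y}, ∀ x' ∈ h ⁻¹' {y}, (c + c' ∘ h) x = (c + c' ∘ h) x' :=
    fun x hx x' hx' => lc_const (hm y) hlc hx hx'
  set k := (c + c' ∘ h) (Function.surjInv hs y) with hk
  have hO : IsOpen {x | ∃ V : Set X, IsOpen V ∧ x ∈ V ∧ ∀ a ∈ V, (c + c' ∘ h) a = k} := by
    rw [isOpen_iff_forall_mem_open]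
    rintro x ⟨V, hV, hx, h1⟩
    exact ⟨V, fun z hz => ⟨V, hV, hz, h1⟩, hV, hx⟩
  obtain ⟨V, hV, hyV, hVO⟩ := fiber_nhds hcl hO (y := y) (by
    intro x hx
    obtain ⟨V, hV, hxV, h1⟩ := hlc x hx
    refine ⟨V, hV, hxV, fun a ha => ?_⟩
    have h2 := h1 a ha x hxV
    have h3 := hconst x hx _ (Function.surjInv_eq hs y)
    rw [← hk] at h3
    simp only [Pi.zero_apply] at h2
    grind)
  refine hc'.congr_right (hV.mem_nhds hyV) (d := fun y => c (Function.surjInv hs y) + k) ?_ |>.lc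
    (triv_const k y) |>.congr_right univ_mem ?_
  · intro a ha
    obtain ⟨V, hV, haV, h1⟩ := hVO (show Function.surjInv hs a ∈ h ⁻¹' V by
      simpa [Function.surjInv_eq hs a])
    have := h1 _ haV
    simp only [Pi.add_apply, Function.comp, Function.surjInv_eq hs a] at this
    grind
  · intro a _
    simp only [Pi.add_apply]; grind

end VB

section star

lemma seg_triv {φ : ℂ → ℂ → ZMod 2} {x0 x : ℂ} (h : ∀ z ∈ segment ℝ x0 x, Reg φ z) :
    ∃ c, ∀ z ∈ segment ℝ x0 x, Triv φ c z := by
  classical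
  by_cases hx : x = x0
  · subst hx
    obtain ⟨c, hc⟩ := h x (by simp)
    exact ⟨c, by simpa using hc⟩
  have hx' : x - x0 ≠ 0 := sub_ne_zero.2 hx
  let γ : unitInterval → ℂ := fun t => x0 + (t : ℝ) * (x - x0)
  have hγc : Continuous γ := by fun_prop
  have hseg : ∀ z, z ∈ segment ℝ x0 x ↔ ∃ t : unitInterval, γ t = z := by
    intro z
    rw [segment_eq_image']
    constructor
    · rintro ⟨t, ht, rfl⟩
      exact ⟨⟨t, ht⟩, by simp [γ]⟩
    · rintro ⟨t, rfl⟩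
      exact ⟨t, t.2, by simp [γ]⟩
  let p : ℂ → ℝ := fun z => ((z - x0) / (x - x0)).re
  have hp : Continuous p := by fun_prop
  have hpγ : ∀ t, p (γ t) = t := by
    intro t
    simp only [p, γ, add_sub_cancel_left]
    rw [mul_div_cancel_right₀ _ hx', Complex.ofReal_re]
  obtain ⟨t, ht0, htm, ⟨n, hn⟩, ht⟩ := exists_monotone_Icc_subset_open_cover_unitInterval
    (c := fun c => γ ⁻¹' {z | Triv φ c z}) (fun c => (isOpen_triv φ c).preimage hγc) (by
      intro t _
      obtain ⟨c, hc⟩ := h (γ t) ((hseg _).2 ⟨t, rfl⟩)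
      exact mem_iUnion.2 ⟨c, hc⟩)
  have key : ∀ m, ∃ c, ∀ s ≤ t m, Triv φ c (γ s) := by
    intro m
    induction m with
    | zero =>
      obtain ⟨c, hc⟩ := ht 0
      refine ⟨c, fun s hs => hc ⟨?_, ?_⟩⟩
      · rw [ht0]; exact s.2.1
      · exact hs.trans (htm (Nat.zero_le _))
    | succ m ih =>
      obtain ⟨c, hc⟩ := ih
      obtain ⟨c', hc'⟩ := ht m
      obtain ⟨V, hV, hxV, hlc⟩ := (hc (t m) le_rfl).sub' (hc' ⟨le_rfl, htm (Nat.le_succ m)⟩)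
      set k := c (γ (t m)) + c' (γ (t m)) with hk
      refine ⟨fun z => if p z < t m then c z else c' z + k, fun s hs => ?_⟩
      rcases lt_trichotomy s (t m) with hlt | heq | hgt
      · refine (hc s hlt.le).congr_right (U := {z | p z < t m})
          ((isOpen_lt hp continuous_const).mem_nhds ?_) ?_
        · simp only [mem_setOf_eq, hpγ]; exact hlt
        · intro a ha; simp only [mem_setOf_eq] at ha; simp [ha]
      · subst heq
        refine (hc _ le_rfl).congr_right (hV.mem_nhds hxV) ?_
        intro a ha
        split_ifs
        · rfl
        · have := hlc a ha _ hxV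
          simp only [Pi.zero_apply, Pi.add_apply] at this
          grind
      · refine ((hc' (⟨hgt.le, hs⟩ : s ∈ Icc _ _)).lc (triv_const k _)).congr_right
          (U := {z | t m < p z}) ((isOpen_lt continuous_const hp).mem_nhds ?_) ?_
        · simp only [mem_setOf_eq, hpγ]; exact hgt
        · intro a ha; simp only [mem_setOf_eq] at ha; simp [ha.not_gt]
  obtain ⟨c, hc⟩ := key n
  refine ⟨c, fun z hz => ?_⟩
  obtain ⟨s, rfl⟩ := (hseg z).1 hz
  exact hc s (by rw [hn n le_rfl]; exact s.2.2)

lemma star_SCo {B : Set ℂ} {x0 : ℂ} (hB : IsOpen B) (hst : StarConvex ℝ x0 B) : SCo B := by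
  intro φ hφ
  have h1 : ∀ x, ∃ c, x ∈ B → ∀ z ∈ segment ℝ x0 x, Triv φ c z := by
    intro x
    by_cases hx : x ∈ B
    · obtain ⟨c, hc⟩ := seg_triv (φ := φ) (x0 := x0) (x := x)
        (fun z hz => hφ z (hst.segment_subset hx hz))
      exact ⟨c, fun _ => hc⟩
    · exact ⟨0, fun h => (hx h).elim⟩
  choose c hc using h1
  refine ⟨fun x => c x x + c x x0, fun y hy => ?_⟩
  have hev : ∀ᶠ z in 𝓝 y, ∀ t ∈ Icc (0:ℝ) 1, Triv φ (c y) (x0 + t • (z - x0)) := by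
    apply isCompact_Icc.eventually_forall_of_forall_eventually
    intro t ht
    have hcont : ContinuousAt (fun q : ℂ × ℝ => x0 + q.2 • (q.1 - x0)) (y, t) := by fun_prop
    have := hcont ((isOpen_triv φ (c y)).mem_nhds (hc y hy (x0 + t • (y - x0)) (by
      rw [segment_eq_image']; exact ⟨t, ht, rfl⟩)))
    exact this
  have hev2 : {z | z ∈ B ∧ ∀ t ∈ Icc (0:ℝ) 1, Triv φ (c y) (x0 + t • (z - x0))} ∈ 𝓝 y := by
    filter_upwards [hev, hB.mem_nhds hy] with z h1 h2 using ⟨h2, h1⟩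
  have hself := hc y hy y (right_mem_segment ℝ x0 y)
  refine (hself.lc (triv_const (c y x0) y)).congr_right hev2 ?_
  rintro z ⟨hzB, hz⟩
  have := lc_const (d := c y + c z) (convex_segment (𝕜 := ℝ) x0 z).isPreconnected (by
    intro u hu
    have h2 := hc z hzB u hu
    rw [segment_eq_image'] at hu
    obtain ⟨t, ht, rfl⟩ := hu
    exact (hz t ht).sub' h2) (left_mem_segment ℝ x0 z) (right_mem_segment ℝ x0 z)
  simp only [Pi.add_apply] at this ⊢
  grind

lemma SCo_univ_C : SCo (univ : Set ℂ) := star_SCo (x0 := 0) isOpen_univ (starConvex_univ _)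

end star

/-- half plane -/
abbrev HP := {z : ℂ // 0 ≤ z.im}

def hpr : ℂ → HP := fun z => ⟨⟨z.re, max z.im 0⟩, le_max_right _ _⟩

lemma continuous_mk_complex {f g : X → ℝ} (hf : Continuous f) (hg : Continuous g) :
    Continuous (fun x => (⟨f x, g x⟩ : ℂ)) := by
  have : (fun x => (⟨f x, g x⟩ : ℂ)) = fun x => (f x : ℂ) + g x * Complex.I := by
    ext x; apply Complex.ext <;> simp
  rw [this]; fun_prop

lemma continuous_hpr : Continuous hpr := by
  apply Continuous.subtype_mk
  exact continuous_mk_complex Complex.continuous_re (Complex.continuous_im.max continuous_const)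

lemma hpr_coe (z : HP) : hpr z = z := by
  apply Subtype.ext
  apply Complex.ext <;> simp [hpr, z.2]

lemma SCo_univ_HP : SCo (univ : Set HP) := by
  intro φ hφ
  obtain ⟨c, hc⟩ := SCo_univ_C (pull hpr φ) (fun z _ => (hφ _ (mem_univ _)).pull
    continuous_hpr.continuousAt)
  refine ⟨c ∘ Subtype.val, fun z _ => ?_⟩
  have := (hc z (mem_univ _)).pull (f := Subtype.val) (y := z) continuous_subtype_val.continuousAt
  refine this.congr_left univ_mem ?_
  intro a _ b _
  simp [pull, hpr_coe]

lemma SCo_chart (hM : SCo (univ : Set M)) (e : OpenPartialHomeomorph X M)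
    (he : e.target = univ) : SCo e.source := by
  intro φ hφ
  obtain ⟨c, hc⟩ := hM (pull e.symm φ) (fun z _ => by
    have hz : z ∈ e.target := he ▸ mem_univ z
    exact (hφ _ (e.map_target hz)).pull (e.symm.continuousAt hz))
  refine ⟨c ∘ e, fun z hz => ?_⟩
  have := (hc (e z) (mem_univ _)).pull (f := e) (y := z) (e.continuousAt hz)
  refine this.congr_left (e.open_source.mem_nhds hz) ?_
  intro a ha b hb
  simp [pull, ha, hb]

end BM

open Set Topology Filter

namespace BM

variable {X Y M : Type} [TopologicalSpace X] [TopologicalSpace Y] [TopologicalSpace M]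

lemma finiteness [CompactSpace X] [T2Space X] [LocallyConnectedSpace X]
    (hU : ∀ x : X, ∃ U : Set X, IsOpen U ∧ x ∈ U ∧ SCo U) :
    ∃ (T : Type) (_ : Finite T) (τ : (X → X → ZMod 2) → T), ∀ φ ψ, Coc φ univ → Coc ψ univ →
      τ φ = τ ψ → Cob (φ + ψ) univ := by
  classical
  choose U hUo hUx hUS using hU
  obtain ⟨t, ht⟩ := isCompact_univ.elim_finite_subcover U hUo
    (fun x _ => mem_iUnion.2 ⟨x, hUx x⟩)
  obtain ⟨K, hKc, hKcl, hKU⟩ := exists_subset_iUnion_closed_subset (u := fun i : t => U i)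
    isClosed_univ (fun i => hUo i) (fun x _ => toFinite _) (by
      intro x hx
      obtain ⟨i, hi, hxi⟩ := mem_iUnion₂.1 (ht hx)
      exact mem_iUnion.2 ⟨⟨i, hi⟩, hxi⟩)
  have hB : ∀ i j : t, ∃ B : Finset X, (∀ b ∈ B, b ∈ U i ∩ U j) ∧
      K i ∩ K j ⊆ ⋃ b ∈ B, connectedComponentIn (U i ∩ U j) b := by
    intro i j
    have hc : IsCompact (K i ∩ K j) := ((hKcl i).inter (hKcl j)).isCompact
    obtain ⟨B, hB, hB'⟩ := hc.elim_nhds_subcover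
      (fun b => connectedComponentIn (U i ∩ U j) b) (by
        rintro x ⟨hx, hx'⟩
        exact ((hUo i).inter (hUo j)).connectedComponentIn.mem_nhds
          (mem_connectedComponentIn ⟨hKU i hx, hKU j hx'⟩))
    exact ⟨B, fun b hb => ⟨hKU i (hB b hb).1, hKU j (hB b hb).2⟩, hB'⟩
  choose B hBU hBK using hB
  have hch : ∀ φ : X → X → ZMod 2, ∀ i : X, ∃ c, Coc φ univ → ∀ x ∈ U i, Triv φ c x := by
    intro φ i
    by_cases h : Coc φ univ
    · obtain ⟨c, hc⟩ := hUS i φ (fun x _ => h x (mem_univ x))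
      exact ⟨c, fun _ => hc⟩
    · exact ⟨0, fun h' => (h h').elim⟩
  choose c hc using hch
  refine ⟨(i : t) → (j : t) → (B i j) → ZMod 2, inferInstance,
    fun φ i j b => c φ i b + c φ j b, ?_⟩
  intro φ ψ hφ hψ hτ
  let d : t → X → ZMod 2 := fun i => c φ i + c ψ i
  have hd : ∀ i : t, ∀ x ∈ U i, Triv (φ + ψ) (d i) x := fun i x hx =>
    (hc φ i hφ x hx).add (hc ψ i hψ x hx)
  have hdd : ∀ i j : t, ∀ x ∈ K i ∩ K j, d i x = d j x := by
    intro i j x hx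
    obtain ⟨b, hb, hxb⟩ := mem_iUnion₂.1 (hBK i j hx)
    have h1 := lc_const (d := d i + d j) isPreconnected_connectedComponentIn (by
      intro z hz
      have hz := connectedComponentIn_subset _ _ hz
      exact (hd i z hz.1).sub' (hd j z hz.2)) hxb (mem_connectedComponentIn (hBU i j b hb))
    have h2 := congrFun (congrFun (congrFun hτ i) j) ⟨b, hb⟩
    simp only [Pi.add_apply, d] at h1 h2 ⊢
    grind
  have hi : ∀ x : X, ∃ i : t, x ∈ K i := fun x => mem_iUnion.1 (hKc (mem_univ x))
  choose ι hι using hi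
  refine ⟨fun x => d (ι x) x, fun x _ => ?_⟩
  have hN : ∀ i : t, ∀ᶠ a in 𝓝 x, a ∈ K i → d i a = d (ι x) a := by
    intro i
    by_cases hx : x ∈ K i
    · obtain ⟨V, hV, hxV, h1⟩ := (hd i x (hKU i hx)).sub' (hd (ι x) x (hKU _ (hι x)))
      filter_upwards [hV.mem_nhds hxV] with a ha _
      have h2 := h1 a ha x hxV
      have h3 := hdd i (ι x) x ⟨hx, hι x⟩
      simp only [Pi.add_apply, Pi.zero_apply] at h2
      grind
    · filter_upwards [(hKcl i).isOpen_compl.mem_nhds hx] with a ha ha' using (ha ha').elim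
  have hN' : {a | ∀ i : t, a ∈ K i → d i a = d (ι x) a} ∈ 𝓝 x := eventually_all.2 hN
  refine (hd (ι x) x (hKU _ (hι x))).congr_right hN' ?_
  intro a ha
  exact (ha (ι a) (hι a)).symm

lemma surj_H1 [CompactSpace X] [T2Space X] [T2Space Y] [LocallyConnectedSpace X]
    (hU : ∀ x : X, ∃ U : Set X, IsOpen U ∧ x ∈ U ∧ SCo U) (g : X ≃ₜ Y)
    {h : X → Y} (hc : Continuous h) (hs : Function.Surjective h)
    (hm : ∀ y : Y, IsPreconnected (h ⁻¹' {y})) {φ : X → X → ZMod 2} (hφ : Coc φ univ) :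
    ∃ w, Coc w univ ∧ Cob (φ + pull h w) univ := by
  obtain ⟨T, _, τ, hτ⟩ := finiteness hU
  let η : X → X := g.symm ∘ h
  have hηc : Continuous η := g.symm.continuous.comp hc
  have hηs : Function.Surjective η := g.symm.surjective.comp hs
  have hηm : ∀ y : X, IsPreconnected (η ⁻¹' {y}) := by
    intro y
    have : η ⁻¹' {y} = h ⁻¹' {g y} := by
      ext x; simp [η, Homeomorph.symm_apply_eq]
    rw [this]; exact hm _
  let p : ℕ → X → X → ZMod 2 := fun k => (pull η)^[k] φ
  have hp : ∀ k, p (k+1) = pull η (p k) := fun k => Function.iterate_succ_apply' _ _ _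
  have hpc : ∀ k, Coc (p k) univ := by
    intro k
    induction k with
    | zero => exact hφ
    | succ k ih => rw [hp]; exact fun x _ => (ih _ (mem_univ _)).pull hηc.continuousAt
  obtain ⟨m, n, hmn, hτe⟩ := Finite.exists_ne_map_eq_of_infinite (fun k => τ (p k))
  wlog hlt : m < n generalizing m n
  · exact this n m hmn.symm hτe.symm (lt_of_le_of_ne (not_lt.1 hlt) hmn.symm)
  have key : ∀ m j, Cob (p m + p (m + j)) univ → Cob (p 0 + p j) univ := by
    intro m j
    induction m with
    | zero => intro h; simpa using h
    | succ m ih =>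
      intro h
      apply ih
      apply VB hηc hηc.isClosedMap hηs hηm isOpen_univ
      · exact fun x hx => (hpc _ x hx).add (hpc _ x hx)
      · rw [hp m, show m + 1 + j = (m + j) + 1 by ring, hp] at h
        exact h
  obtain ⟨j, rfl⟩ := Nat.exists_eq_add_of_lt hlt
  have h1 := key m (j+1) (hτ _ _ (hpc _) (hpc _) hτe)
  rw [hp] at h1
  refine ⟨pull g.symm (p j), fun y _ => (hpc j _ (mem_univ _)).pull g.symm.continuous.continuousAt, ?_⟩
  exact h1

end BM

open Set Topology Filter

namespace BM

variable {X Y M : Type} [TopologicalSpace X] [TopologicalSpace Y] [TopologicalSpace M]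

/-- locally zero -/
abbrev LZ (φ : X → X → ZMod 2) (x : X) : Prop := Triv φ 0 x

def EvenAt (φ : X → X → ZMod 2) (x : X) : Prop := ∃ c, ∀ᶠ y in 𝓝[≠] x, Triv φ c y

section
variable {φ ψ χ : X → X → ZMod 2} {c d : X → ZMod 2} {x : X}

lemma LZ.add (h1 : LZ φ x) (h2 : LZ ψ x) : LZ (φ + ψ) x := by
  have := Triv.add h1 h2
  rwa [add_zero] at this

lemma LZ.trans (h1 : LZ (φ + ψ) x) (h2 : LZ (ψ + χ) x) : LZ (φ + χ) x := by
  have := h1.add h2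
  rwa [show φ + ψ + (ψ + χ) = φ + χ by rw [add_assoc, cancel_fun₂]] at this

lemma LZ.symm (h1 : LZ (φ + ψ) x) : LZ (ψ + φ) x := by rwa [add_comm]

lemma LZ.triv (h1 : LZ (φ + ψ) x) (h2 : Triv φ c x) : Triv ψ c x := by
  have := Triv.add h1 h2
  rwa [add_comm φ ψ, cancel_fun₂', zero_add] at this

lemma LZ.reg (h1 : LZ (φ + ψ) x) (h2 : Reg φ x) : Reg ψ x := by
  obtain ⟨c, hc⟩ := h2
  exact ⟨c, h1.triv hc⟩

lemma LZ.to_reg (h1 : LZ φ x) : Reg φ x := ⟨0, h1⟩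

lemma lz_add_dl_iff : LZ (φ + dl c) x ↔ Triv φ c x := by
  constructor
  · intro h
    have := Triv.add h (triv_dl c x)
    rwa [cancel_fun₂', zero_add] at this
  · intro h
    have := h.add (triv_dl c x)
    rwa [addself_fun] at this

lemma lz_self : LZ (φ + φ) x := by rw [addself_fun₂]; exact triv_zero x

lemma lz_of_eq_nhds {U : Set X} (hU : U ∈ 𝓝 x) (h : ∀ a ∈ U, ∀ b ∈ U, φ a b = ψ a b) :
    LZ (φ + ψ) x := by
  refine (triv_zero x).congr_left hU ?_
  intro a ha b hb
  simp only [Pi.zero_apply, Pi.add_apply, h a ha b hb]; grind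

lemma lz_of_zero_nhds {U : Set X} (hU : U ∈ 𝓝 x) (h : ∀ a ∈ U, ∀ b ∈ U, φ a b = 0) :
    LZ φ x := by
  refine (triv_zero x).congr_left hU ?_
  intro a ha b hb
  simp [h a ha b hb]

lemma LZ.pull {f : Y → X} {y : Y} (h : LZ φ (f y)) (hf : ContinuousAt f y) : LZ (pull f φ) y :=
  Triv.pull h hf

lemma lz_dl (h : Triv 0 c x) : LZ (dl c) x := by
  have := (triv_dl c x).lc h
  rwa [addself_fun] at this

lemma lz_dl_of_const {U : Set X} (hU : U ∈ 𝓝 x) {k : ZMod 2} (h : ∀ a ∈ U, c a = k) :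
    LZ (dl c) x := by
  refine lz_of_zero_nhds hU ?_
  intro a ha b hb; simp only [dl, h a ha, h b hb]; grind

lemma EvenAt.add (h1 : EvenAt φ x) (h2 : EvenAt ψ x) : EvenAt (φ + ψ) x := by
  obtain ⟨c, h1⟩ := h1
  obtain ⟨d, h2⟩ := h2
  refine ⟨c + d, ?_⟩
  filter_upwards [h1, h2] with y h1 h2 using h1.add h2

lemma EvenAt.of_add (h1 : EvenAt φ x) (h2 : EvenAt (φ + ψ) x) : EvenAt ψ x := by
  have := h1.add h2; rwa [cancel_fun₂] at this

lemma Triv.eventually (h : Triv φ c x) : ∀ᶠ y in 𝓝 x, Triv φ c y := (isOpen_triv φ c).mem_nhds h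

lemma Reg.even (h : Reg φ x) : EvenAt φ x := by
  obtain ⟨c, hc⟩ := h
  exact ⟨c, mem_nhdsWithin_of_mem_nhds hc.eventually⟩

lemma EvenAt.of_lz (h : ∀ᶠ y in 𝓝[≠] x, LZ φ y) : EvenAt φ x := ⟨0, h⟩

lemma EvenAt.congr (h : ∀ᶠ y in 𝓝[≠] x, LZ (φ + ψ) y) (h2 : EvenAt φ x) : EvenAt ψ x :=
  h2.of_add (EvenAt.of_lz h)

lemma EvenAt.pull {f : Y → X} {y : Y} (h : EvenAt φ (f y)) (hf : Tendsto f (𝓝[≠] y) (𝓝[≠] (f y)))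
    (hf2 : ∀ᶠ z in 𝓝[≠] y, ContinuousAt f z) : EvenAt (pull f φ) y := by
  obtain ⟨c, h⟩ := h
  refine ⟨c ∘ f, ?_⟩
  filter_upwards [hf.eventually h, hf2] with z h1 h2 using h1.pull h2

open Classical in
noncomputable def eps (φ : X → X → ZMod 2) (x : X) : ZMod 2 := if EvenAt φ x then 0 else 1

lemma eps_zero_iff : eps φ x = 0 ↔ EvenAt φ x := by
  unfold eps; split_ifs <;> simp_all

lemma eps_one_iff : eps φ x = 1 ↔ ¬ EvenAt φ x := by
  unfold eps; split_ifs <;> simp_all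

lemma eps_iff {x : X} {y : Y} {φ : X → X → ZMod 2} {ψ : Y → Y → ZMod 2}
    (h : EvenAt φ x ↔ EvenAt ψ y) : eps φ x = eps ψ y := by
  by_cases h1 : EvenAt φ x
  · rw [eps_zero_iff.2 h1, eps_zero_iff.2 (h.1 h1)]
  · rw [eps_one_iff.2 h1, eps_one_iff.2 (fun h2 => h1 (h.2 h2))]

lemma eps_congr (h : ∀ᶠ y in 𝓝[≠] x, LZ (φ + ψ) y) : eps φ x = eps ψ x := by
  have : EvenAt φ x ↔ EvenAt ψ x :=
    ⟨EvenAt.congr h, EvenAt.congr (h.mono fun y hy => hy.symm)⟩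
  exact eps_iff this

lemma eps_congr' (h : LZ (φ + ψ) x) : eps φ x = eps ψ x :=
  eps_congr (mem_nhdsWithin_of_mem_nhds h.eventually)

lemma eps_of_reg (h : Reg φ x) : eps φ x = 0 := eps_zero_iff.2 h.even
end

section chartPull

lemma tendsto_ne_chart (e : OpenPartialHomeomorph X Y) {x : X} (hx : x ∈ e.source) :
    Tendsto e (𝓝[≠] x) (𝓝[≠] (e x)) := by
  apply tendsto_nhdsWithin_of_tendsto_nhds_of_eventually_within
  · exact (e.continuousAt hx).tendsto.mono_left nhdsWithin_le_nhds
  · filter_upwards [mem_nhdsWithin_of_mem_nhds (e.open_source.mem_nhds hx), self_mem_nhdsWithin]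
      with y hy hne heq
    exact hne (e.injOn hy hx heq)

lemma pull_pull_symm (e : OpenPartialHomeomorph X Y) (φ : X → X → ZMod 2) {x : X}
    (hx : x ∈ e.source) : LZ (pull e (pull e.symm φ) + φ) x := by
  refine lz_of_eq_nhds (e.open_source.mem_nhds hx) ?_
  intro a ha b hb
  simp [pull, ha, hb]

lemma EvenAt.pull_chart (e : OpenPartialHomeomorph X Y) {φ : Y → Y → ZMod 2} {x : X}
    (hx : x ∈ e.source) (h : EvenAt φ (e x)) : EvenAt (BM.pull e φ) x := by
  refine h.pull (tendsto_ne_chart e hx) ?_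
  filter_upwards [mem_nhdsWithin_of_mem_nhds (e.open_source.mem_nhds hx)] with y hy
    using e.continuousAt hy

lemma eps_pull (e : OpenPartialHomeomorph X Y) (φ : Y → Y → ZMod 2) {x : X}
    (hx : x ∈ e.source) : eps (pull e φ) x = eps φ (e x) := by
  have h1 : EvenAt (pull e φ) x ↔ EvenAt φ (e x) := by
    constructor
    · intro h
      have hx' : e x ∈ e.symm.source := e.map_source hx
      have h2 : EvenAt (pull e φ) (e.symm (e x)) := by rwa [e.left_inv hx]
      have := h2.pull_chart e.symm hx'
      refine this.congr (mem_nhdsWithin_of_mem_nhds (Triv.eventually ?_))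
      exact pull_pull_symm e.symm φ hx'
    · exact EvenAt.pull_chart e hx
  exact eps_iff h1

lemma reg_pull_symm (e : OpenPartialHomeomorph X Y) {φ : X → X → ZMod 2} {y : Y}
    (hy : y ∈ e.target) : Reg (pull e.symm φ) y ↔ Reg φ (e.symm y) := by
  constructor
  · intro h
    have h2 : Reg (pull e.symm φ) (e (e.symm y)) := by rwa [e.right_inv hy]
    have := h2.pull (e.continuousAt (e.map_target hy))
    exact (pull_pull_symm e φ (e.map_target hy)).reg this
  · intro h
    exact h.pull (e.symm.continuousAt hy)

end chartPull

section dichotomy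

lemma slit_even {φ : ℂ → ℂ → ZMod 2} {r : ℝ} (hr : 0 < r) {c1 c2 : ℂ → ZMod 2}
    (h1 : ∀ z ∈ Metric.ball (0:ℂ) r, z ∈ Complex.slitPlane → Triv φ c1 z)
    (h2 : ∀ z ∈ Metric.ball (0:ℂ) r, -z ∈ Complex.slitPlane → Triv φ c2 z)
    {k : ZMod 2} (hk : ∀ z ∈ Metric.ball (0:ℂ) r, z.im ≠ 0 → c1 z + c2 z = k) : EvenAt φ 0 := by
  classical
  refine ⟨fun z => if z ∈ Complex.slitPlane then c1 z else c2 z + k, ?_⟩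
  filter_upwards [mem_nhdsWithin_of_mem_nhds (Metric.ball_mem_nhds (0:ℂ) hr), self_mem_nhdsWithin]
    with z hz hz0
  have hz0 : z ≠ 0 := hz0
  by_cases hs : z ∈ Complex.slitPlane
  · refine (h1 z hz hs).congr_right (Complex.isOpen_slitPlane.mem_nhds hs) ?_
    intro a ha; simp [ha]
  · have hs' : -z ∈ Complex.slitPlane := by
      rw [Complex.mem_slitPlane_iff] at hs ⊢
      push Not at hs
      left
      rcases hs.1.lt_or_eq with h | h
      · simpa using h
      · exact (hz0 (Complex.ext h hs.2)).elim
    have hre : z.re < 0 := by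
      rw [Complex.mem_slitPlane_iff] at hs hs'
      push Not at hs
      rcases hs' with h | h
      · simpa using h
      · simp [hs.2] at h
    have hU : {w : ℂ | w ∈ Metric.ball (0:ℂ) r ∧ w.re < 0} ∈ 𝓝 z :=
      ((Metric.isOpen_ball).inter (isOpen_lt Complex.continuous_re continuous_const)).mem_nhds
        ⟨hz, hre⟩
    refine ((h2 z hz hs').lc (triv_const k z)).congr_right hU ?_
    rintro a ⟨ha, har⟩
    simp only [Pi.add_apply]
    split_ifs with hsa
    · rw [Complex.mem_slitPlane_iff] at hsa
      have := hk a ha (hsa.resolve_left (not_lt.2 har.le))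
      grind
    · rfl

lemma starConvex_slit (r : ℝ) (hr : 0 < r) :
    StarConvex ℝ ((r/2 : ℝ) : ℂ) (Metric.ball (0:ℂ) r ∩ Complex.slitPlane) := by
  apply StarConvex.inter
  · apply (convex_ball (0:ℂ) r).starConvex
    simp [abs_of_pos hr, hr]
  · exact Complex.starConvex_ofReal_slitPlane (by positivity)

lemma slit_exists {φ : ℂ → ℂ → ZMod 2} {r : ℝ} (hr : 0 < r)
    (h : ∀ z ∈ Metric.ball (0:ℂ) r, z ≠ 0 → Reg φ z) : ∃ c1 c2 kp km,
    (∀ z ∈ Metric.ball (0:ℂ) r, z ∈ Complex.slitPlane → Triv φ c1 z) ∧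
    (∀ z ∈ Metric.ball (0:ℂ) r, -z ∈ Complex.slitPlane → Triv φ c2 z) ∧
    (∀ z ∈ Metric.ball (0:ℂ) r, 0 < z.im → c1 z + c2 z = kp) ∧
    (∀ z ∈ Metric.ball (0:ℂ) r, z.im < 0 → c1 z + c2 z = km) := by
  have hne : ∀ z ∈ Complex.slitPlane, z ≠ 0 := fun z hz => Complex.slitPlane_ne_zero hz
  obtain ⟨c1, hc1⟩ := star_SCo (Metric.isOpen_ball.inter Complex.isOpen_slitPlane)
    (starConvex_slit r hr) φ (fun z hz => h z hz.1 (hne z hz.2))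
  have hst2 : StarConvex ℝ (-((r/2 : ℝ) : ℂ)) (-(Metric.ball (0:ℂ) r ∩ Complex.slitPlane)) :=
    (starConvex_slit r hr).neg
  have hmem : ∀ z, z ∈ -(Metric.ball (0:ℂ) r ∩ Complex.slitPlane) ↔
      z ∈ Metric.ball (0:ℂ) r ∧ -z ∈ Complex.slitPlane := by
    intro z; simp
  obtain ⟨c2, hc2⟩ := star_SCo (Metric.isOpen_ball.inter Complex.isOpen_slitPlane).neg hst2
    φ (fun z hz => h z ((hmem z).1 hz).1 (fun h0 => hne _ ((hmem z).1 hz).2 (by simp [h0])))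
  have hp : IsPreconnected (Metric.ball (0:ℂ) r ∩ {z | 0 < z.im}) :=
    ((convex_ball _ _).inter (convex_halfSpace_im_gt 0)).isPreconnected
  have hm : IsPreconnected (Metric.ball (0:ℂ) r ∩ {z | z.im < 0}) :=
    ((convex_ball _ _).inter (convex_halfSpace_im_lt 0)).isPreconnected
  have hlc : ∀ z ∈ Metric.ball (0:ℂ) r, z.im ≠ 0 → Triv 0 (c1 + c2) z := by
    intro z hz him
    refine (hc1 z ⟨hz, ?_⟩).sub' (hc2 z ((hmem z).2 ⟨hz, ?_⟩))
    · rw [Complex.mem_slitPlane_iff]; exact Or.inr him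
    · rw [Complex.mem_slitPlane_iff]; right; simpa using him
  refine ⟨c1, c2, (c1 + c2) ⟨0, r/2⟩, (c1 + c2) ⟨0, -(r/2)⟩, fun z hz hs => hc1 z ⟨hz, hs⟩,
    fun z hz hs => hc2 z ((hmem z).2 ⟨hz, hs⟩), ?_, ?_⟩
  · intro z hz him
    refine lc_const hp (fun w hw => hlc w hw.1 (ne_of_gt hw.2)) ⟨hz, him⟩ ⟨?_, ?_⟩
    · have : (⟨0, r/2⟩ : ℂ) = ((r/2 : ℝ) : ℂ) * Complex.I := by apply Complex.ext <;> simp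
      rw [this]; simp [abs_of_pos hr, hr]
    · simpa using hr
  · intro z hz him
    refine lc_const hm (fun w hw => hlc w hw.1 (ne_of_lt hw.2)) ⟨hz, him⟩ ⟨?_, ?_⟩
    · have : (⟨0, -(r/2)⟩ : ℂ) = -(((r/2 : ℝ) : ℂ) * Complex.I) := by apply Complex.ext <;> simp
      rw [this]; simp [abs_of_pos hr, hr]
    · simpa using hr

lemma dichotomy0 {φ ψ : ℂ → ℂ → ZMod 2} (h1 : ∀ᶠ z in 𝓝[≠] 0, Reg φ z)
    (h2 : ∀ᶠ z in 𝓝[≠] 0, Reg ψ z) (h3 : ¬ EvenAt φ 0) (h4 : ¬ EvenAt ψ 0) :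
    EvenAt (φ + ψ) 0 := by
  have h5 := h1.and h2
  rw [eventually_nhdsWithin_iff, Metric.eventually_nhds_iff_ball] at h5
  obtain ⟨r, hr, h5⟩ := h5
  obtain ⟨c1, c2, kp, km, a1, a2, a3, a4⟩ := slit_exists hr (fun z hz h0 => (h5 z hz h0).1)
  obtain ⟨d1, d2, lp, lm, b1, b2, b3, b4⟩ := slit_exists hr (fun z hz h0 => (h5 z hz h0).2)
  have hk : kp ≠ km := by
    rintro rfl
    exact h3 (slit_even hr a1 a2 (fun z hz him => (him.lt_or_gt).elim (a4 z hz) (a3 z hz)))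
  have hl : lp ≠ lm := by
    rintro rfl
    exact h4 (slit_even hr b1 b2 (fun z hz him => (him.lt_or_gt).elim (b4 z hz) (b3 z hz)))
  have hkl : kp + lp = km + lm := by
    clear * - hk hl
    decide +revert
  refine slit_even (k := kp + lp) hr (fun z hz hs => (a1 z hz hs).add (b1 z hz hs))
    (fun z hz hs => (a2 z hz hs).add (b2 z hz hs)) (fun z hz him => ?_)
  rcases him.lt_or_gt with h | h
  · have := a4 z hz h
    have := b4 z hz h
    simp only [Pi.add_apply]; grind
  · have := a3 z hz h
    have := b3 z hz h
    simp only [Pi.add_apply]; grind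

end dichotomy

def Iset (X : Type) [TopologicalSpace X] : Set X :=
  {x | ∃ e : OpenPartialHomeomorph X ℂ, x ∈ e.source ∧ e.target = univ}

lemma isOpen_Iset : IsOpen (Iset X) := by
  rw [isOpen_iff_forall_mem_open]
  rintro x ⟨e, hx, he⟩
  exact ⟨e.source, fun y hy => ⟨e, hy, he⟩, e.open_source, hx⟩

lemma Iset_center {x : X} (hx : x ∈ Iset X) :
    ∃ e : OpenPartialHomeomorph X ℂ, x ∈ e.source ∧ e.target = univ ∧ e x = 0 := by
  obtain ⟨e, hx, he⟩ := hx
  refine ⟨e.transHomeomorph (Homeomorph.addRight (-(e x))), ?_, ?_, ?_⟩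
  · simpa using hx
  · simp [he]
  · simp

lemma Iset_C : Iset ℂ = univ := by
  ext z; simp only [mem_univ, iff_true]
  exact ⟨OpenPartialHomeomorph.refl ℂ, by simp, by simp⟩

lemma dichotomy {φ ψ : X → X → ZMod 2} {x : X} (hx : x ∈ Iset X)
    (h1 : ∀ᶠ z in 𝓝[≠] x, Reg φ z)
    (h2 : ∀ᶠ z in 𝓝[≠] x, Reg ψ z) : eps (φ + ψ) x = eps φ x + eps ψ x := by
  by_cases h3 : EvenAt φ x
  · rw [eps_zero_iff.2 h3, zero_add]
    have : EvenAt (φ + ψ) x ↔ EvenAt ψ x := ⟨h3.of_add, h3.add⟩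
    exact eps_iff this
  by_cases h4 : EvenAt ψ x
  · rw [eps_zero_iff.2 h4, add_zero]
    have : EvenAt (φ + ψ) x ↔ EvenAt φ x :=
      ⟨fun h => h4.of_add (by rwa [add_comm]), fun h => h.add h4⟩
    exact eps_iff this
  rw [eps_one_iff.2 h3, eps_one_iff.2 h4, show (1:ZMod 2) + 1 = 0 by decide, eps_zero_iff]
  obtain ⟨e, hxe, he, hx0⟩ := Iset_center hx
  have h0 : (0:ℂ) ∈ e.symm.source := by simp [he]
  have hsx : e.symm 0 = x := by rw [← hx0, e.left_inv hxe]
  have ht := tendsto_ne_chart e.symm h0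
  rw [hsx] at ht
  have hcon : ∀ z, ContinuousAt e.symm z := fun z => e.symm.continuousAt (by simp [he])
  have hE : ∀ φ : X → X → ZMod 2, EvenAt φ x ↔ EvenAt (pull e.symm φ) 0 := by
    intro φ
    rw [← eps_zero_iff, ← eps_zero_iff, eps_pull e.symm φ h0, hsx]
  rw [hE] at h3 h4 ⊢
  exact dichotomy0 ((ht.eventually h1).mono fun z hz => hz.pull (hcon z))
    ((ht.eventually h2).mono fun z hz => hz.pull (hcon z)) h3 h4

structure Good (φ : X → X → ZMod 2) : Prop where
  fin : {x | ¬ Reg φ x}.Finite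
  int : ∀ x, ¬ Reg φ x → x ∈ Iset X

section good
variable {φ ψ : X → X → ZMod 2}

lemma eventually_ne_reg [T1Space X] (hf : {x | ¬ Reg φ x}.Finite) (x : X) : ∀ᶠ z in 𝓝[≠] x, Reg φ z := by
  have h1 : ({x | ¬ Reg φ x} \ {x}).Finite := hf.subset diff_subset
  have h2 : ({x | ¬ Reg φ x} \ {x})ᶜ ∈ 𝓝 x := h1.isClosed.isOpen_compl.mem_nhds (by simp)
  filter_upwards [mem_nhdsWithin_of_mem_nhds h2, self_mem_nhdsWithin] with z hz hzx
  by_contra h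
  exact hz ⟨h, hzx⟩

lemma Good.add (h1 : Good φ) (h2 : Good ψ) : Good (φ + ψ) := by
  have : ∀ x, ¬ Reg (φ + ψ) x → ¬ Reg φ x ∨ ¬ Reg ψ x := by
    intro x hx
    by_contra! h
    exact hx (h.1.add h.2)
  refine ⟨(h1.fin.union h2.fin).subset this, fun x hx => ?_⟩
  rcases this x hx with h | h
  · exact h1.int x h
  · exact h2.int x h

lemma Good.eps_add [T1Space X] (h1 : Good φ) (h2 : Good ψ) (x : X) : eps (φ + ψ) x = eps φ x + eps ψ x := by
  by_cases hx : x ∈ Iset X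
  · exact dichotomy hx (eventually_ne_reg h1.fin x) (eventually_ne_reg h2.fin x)
  · have a1 : Reg φ x := by by_contra h; exact hx (h1.int x h)
    have a2 : Reg ψ x := by by_contra h; exact hx (h2.int x h)
    rw [eps_of_reg a1, eps_of_reg a2, eps_of_reg (a1.add a2), add_zero]

noncomputable def deg (φ : X → X → ZMod 2) : ZMod 2 := ∑ᶠ x, eps φ x

lemma Good.supp_fin (h1 : Good φ) : (Function.support (eps φ)).Finite :=
  h1.fin.subset fun _ hx h => hx (eps_of_reg h)

lemma Good.deg_add [T1Space X] (h1 : Good φ) (h2 : Good ψ) : deg (φ + ψ) = deg φ + deg ψ := by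
  unfold deg
  rw [← finsum_add_distrib h1.supp_fin h2.supp_fin]
  exact finsum_congr (h1.eps_add h2)

lemma Good.of_coc (h : Coc φ univ) : Good φ :=
  ⟨by convert finite_empty; ext x; simpa using h x (mem_univ x), fun x hx => (hx (h x (mem_univ x))).elim⟩

lemma good_dl (c : X → ZMod 2) : Good (dl c) := Good.of_coc fun x _ => reg_dl c x

lemma good_zero : Good (0 : X → X → ZMod 2) := Good.of_coc fun x _ => ⟨0, triv_zero x⟩

end good

section removal
variable [RegularSpace X]

lemma removal_one {φ : X → X → ZMod 2} {p : X} {c : X → ZMod 2}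
    (h : ∀ᶠ y in 𝓝[≠] p, Triv φ c y) :
    ∃ φ', Triv φ' c p ∧ ∀ x, x ≠ p → LZ (φ + φ') x := by
  classical
  rw [eventually_nhdsWithin_iff] at h
  obtain ⟨K, hK, hKc, hKV⟩ := exists_mem_nhds_isClosed_subset h
  obtain ⟨V, hVK, hV, hpV⟩ := mem_nhds_iff.1 hK
  refine ⟨fun a b => if a ∈ V ∧ b ∈ V then c a + c b else φ a b, ?_, ?_⟩
  · refine ⟨V, hV, hpV, fun a ha b hb => by simp [ha, hb]⟩
  · intro x hx
    by_cases hxK : x ∈ K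
    · obtain ⟨W, hW, hxW, h1⟩ := hKV hxK hx
      refine lz_of_eq_nhds (hW.mem_nhds hxW) ?_
      intro a ha b hb
      split_ifs
      · exact h1 a ha b hb
      · rfl
    · refine lz_of_eq_nhds (hKc.isOpen_compl.mem_nhds hxK) ?_
      intro a ha b hb
      rw [if_neg]
      exact fun h => ha (hVK h.1)

lemma removal {φ : X → X → ZMod 2} {S : Set X} (hS : S.Finite) (h : ∀ p ∈ S, EvenAt φ p) :
    ∃ φ', (∀ p ∈ S, Reg φ' p) ∧ ∀ x ∉ S, LZ (φ + φ') x := by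
  induction S, hS using Set.Finite.induction_on with
  | empty => exact ⟨φ, by simp, fun x _ => lz_self⟩
  | @insert p S hp hS ih =>
    obtain ⟨φ', h1, h2⟩ := ih (fun q hq => h q (mem_insert_of_mem _ hq))
    have h3 : EvenAt φ' p := (h p (mem_insert _ _)).congr
      (mem_nhdsWithin_of_mem_nhds (h2 p hp).eventually)
    obtain ⟨c, hc⟩ := h3
    obtain ⟨φ'', h4, h5⟩ := removal_one hc
    refine ⟨φ'', ?_, ?_⟩
    · rintro q (rfl | hq)
      · exact ⟨c, h4⟩
      · exact (h5 q (by rintro rfl; exact hp hq)).reg (h1 q hq)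
    · intro x hx
      simp only [mem_insert_iff, not_or] at hx
      exact (h2 x hx.2).trans (h5 x hx.1)

end removal

section cut

open Classical in
noncomputable def cut (N : Set X) (φ : X → X → ZMod 2) : X → X → ZMod 2 :=
  fun a b => if a ∈ N ∧ b ∈ N then φ a b else 0

lemma cut_in {N : Set X} (hN : IsOpen N) (φ : X → X → ZMod 2) {x : X} (hx : x ∈ N) :
    LZ (φ + cut N φ) x := by
  refine lz_of_eq_nhds (hN.mem_nhds hx) ?_
  intro a ha b hb; simp [cut, ha, hb]

lemma cut_lz {N : Set X} {φ : X → X → ZMod 2} {x : X} (h : LZ φ x) : LZ (cut N φ) x := by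
  obtain ⟨V, hV, hx, h⟩ := h
  refine lz_of_zero_nhds (hV.mem_nhds hx) ?_
  intro a ha b hb
  have := h a ha b hb
  simp only [Pi.zero_apply, add_zero] at this
  simp [cut, this]

lemma cut_out {N : Set X} {φ : X → X → ZMod 2} (h : ∀ x ∈ closure N, x ∉ N → LZ φ x)
    {x : X} (hx : x ∉ N) : LZ (cut N φ) x := by
  by_cases hx' : x ∈ closure N
  · exact cut_lz (h x hx' hx)
  · refine lz_of_zero_nhds (isClosed_closure.isOpen_compl.mem_nhds hx') ?_
    intro a ha b hb
    simp only [cut]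
    rw [if_neg]
    exact fun h => ha (subset_closure h.1)

end cut

section ext

lemma ext_exists [T2Space X] {M : Type} [MetricSpace M] [ProperSpace M]
    (e : OpenPartialHomeomorph X M) (he : e.target = univ) {ψ : M → M → ZMod 2} {p : M} {R : ℝ}
    (hψ : ∀ z, R < dist z p → LZ ψ z) :
    ∃ φ : X → X → ZMod 2, (∀ x ∈ e.source, LZ (φ + pull e ψ) x) ∧ ∀ x ∉ e.source, LZ φ x := by
  let B : Set M := Metric.ball p (R + 1)
  let N : Set X := e.source ∩ e ⁻¹' B
  have hN : IsOpen N := e.isOpen_inter_preimage Metric.isOpen_ball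
  have hcl : IsClosed (e.symm '' Metric.closedBall p (R+1)) :=
    ((isCompact_closedBall p (R+1)).image_of_continuousOn
      (e.continuousOn_symm.mono (by simp [he]))).isClosed
  have hNs : N ⊆ e.symm '' Metric.closedBall p (R+1) := by
    rintro x ⟨hx, hx'⟩
    exact ⟨e x, Metric.ball_subset_closedBall hx', e.left_inv hx⟩
  have hcN : closure N ⊆ e.source := by
    refine (hcl.closure_subset_iff.2 hNs).trans ?_
    rintro _ ⟨y, _, rfl⟩
    exact e.map_target (by simp [he])
  have hout : ∀ x ∈ e.source, x ∉ N → LZ (pull e ψ) x := by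
    intro x hx hxN
    refine LZ.pull (hψ _ ?_) (e.continuousAt hx)
    by_contra hlt
    apply hxN
    refine ⟨hx, ?_⟩
    simp only [mem_preimage, B, Metric.mem_ball]
    linarith
  refine ⟨cut N (pull e ψ), ?_, ?_⟩
  · intro x hx
    by_cases hxN : x ∈ N
    · exact (cut_in hN _ hxN).symm
    · exact (cut_lz (hout x hx hxN)).add (hout x hx hxN)
  · intro x hx
    exact cut_out (fun y hy hyN => hout y (hcN hy) hyN) (fun h => hx h.1)

end ext

end BM

open Set Topology Filter

namespace BM

variable {X Y M : Type} [TopologicalSpace X] [TopologicalSpace Y] [TopologicalSpace M]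

open Classical in
noncomputable def sgn (z : ℂ) : ZMod 2 := if 0 < z.im then 1 else 0

open Classical in
noncomputable def W (r : ℝ) : ℂ → ℂ → ZMod 2 :=
  fun x y => if x.re < r ∧ y.re < r then sgn x + sgn y else 0

lemma W_triv {r : ℝ} {z : ℂ} (hz : z.re < r) : Triv (W r) sgn z :=
  ⟨{w | w.re < r}, isOpen_lt Complex.continuous_re continuous_const, hz,
    fun a (ha : a.re < r) b (hb : b.re < r) => by simp [W, ha, hb]⟩

lemma sgn_lc {z : ℂ} (hz : z.im ≠ 0) : ∃ U ∈ 𝓝 z, ∀ a ∈ U, sgn a = sgn z := by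
  rcases hz.lt_or_gt with h | h
  · refine ⟨{w | w.im < 0}, (isOpen_lt Complex.continuous_im continuous_const).mem_nhds h, ?_⟩
    intro a (ha : a.im < 0)
    simp [sgn, ha.not_gt, h.not_gt]
  · refine ⟨{w | 0 < w.im}, (isOpen_lt continuous_const Complex.continuous_im).mem_nhds h, ?_⟩
    intro a (ha : 0 < a.im)
    simp [sgn, ha, h]

lemma W_lz {r : ℝ} {z : ℂ} (hz : r < z.re ∨ z.im ≠ 0) : LZ (W r) z := by
  rcases hz with h | h
  · refine lz_of_zero_nhds ((isOpen_lt continuous_const Complex.continuous_re).mem_nhds h) ?_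
    intro a (ha : r < a.re) b (hb : r < b.re)
    simp [W, ha.not_gt]
  · obtain ⟨U, hU, h1⟩ := sgn_lc h
    refine lz_of_zero_nhds hU ?_
    intro a ha b hb
    simp only [W, h1 a ha, h1 b hb]
    split_ifs
    · grind
    · rfl

lemma W_reg {r : ℝ} {z : ℂ} (hz : z ≠ r) : Reg (W r) z := by
  by_cases h1 : z.re < r
  · exact ⟨_, W_triv h1⟩
  · refine ⟨_, W_lz ?_⟩
    by_cases h2 : z.im = 0
    · left
      refine lt_of_le_of_ne (not_lt.1 h1) ?_
      intro h3
      exact hz (Complex.ext (by simp [h3]) (by simp [h2]))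
    · exact Or.inr h2

lemma W_sphere {r ρ : ℝ} (hρ : 0 < ρ) (c : ℂ → ZMod 2)
    (hc : ∀ z : ℂ, dist z r = ρ → Triv (W r) c z) : False := by
  let γ : ℝ → ℂ := fun θ => r + ρ * Complex.exp (θ * Complex.I)
  have hγ : Continuous γ := by fun_prop
  have hre : ∀ θ, (γ θ).re = r + ρ * Real.cos θ := by
    intro θ; simp [γ, Complex.exp_ofReal_mul_I_re]
  have him : ∀ θ, (γ θ).im = ρ * Real.sin θ := by
    intro θ; simp [γ, Complex.exp_ofReal_mul_I_im]
  have hd : ∀ θ, dist (γ θ) r = ρ := by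
    intro θ
    simp [γ, dist_eq_norm, Complex.norm_exp_ofReal_mul_I, abs_of_pos hρ]
  have hS : IsPreconnected (γ '' Ioo (-Real.pi) Real.pi) :=
    isPreconnected_Ioo.image _ hγ.continuousOn
  have hlc : ∀ z ∈ γ '' Ioo (-Real.pi) Real.pi, Triv 0 c z := by
    rintro _ ⟨θ, hθ, rfl⟩
    refine (hc _ (hd θ)).symm' (W_lz ?_)
    by_cases h0 : θ = 0
    · left; rw [hre, h0]; simp [hρ]
    · right; rw [him]
      have : Real.sin θ ≠ 0 := by
        rw [Ne, Real.sin_eq_zero_iff_of_lt_of_lt hθ.1 hθ.2]; exact h0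
      positivity
  have hpi : γ Real.pi = γ (-Real.pi) := by
    apply Complex.ext <;> simp [hre, him]
  have hp : (γ Real.pi).re < r := by rw [hre]; simp [hρ]
  obtain ⟨V, hV, hpV, h1⟩ := (hc _ (hd Real.pi)).sub' (W_triv hp)
  have e1 : ∀ᶠ θ in 𝓝[<] Real.pi, γ θ ∈ V :=
    mem_nhdsWithin_of_mem_nhds (hγ.continuousAt (hV.mem_nhds hpV))
  have e2 : ∀ᶠ θ in 𝓝[<] Real.pi, γ (-θ) ∈ V := by
    have : Continuous fun θ => γ (-θ) := hγ.comp continuous_neg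
    exact mem_nhdsWithin_of_mem_nhds (this.continuousAt (hV.mem_nhds (by rw [← hpi]; exact hpV)))
  have e3 : ∀ᶠ θ in 𝓝[<] Real.pi, θ ∈ Ioo 0 Real.pi := Ioo_mem_nhdsLT Real.pi_pos
  obtain ⟨θ, ⟨h2, h3⟩, h4⟩ := ((e1.and e2).and e3).exists
  have hcc := lc_const hS hlc (a := γ θ) (b := γ (-θ))
    ⟨θ, ⟨by linarith [h4.1, Real.pi_pos], h4.2⟩, rfl⟩
    ⟨-θ, ⟨by linarith [h4.2], by linarith [h4.1, Real.pi_pos]⟩, rfl⟩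
  have h5 := h1 _ h2 _ h3
  have hsin := Real.sin_pos_of_pos_of_lt_pi h4.1 h4.2
  have s1 : sgn (γ θ) = 1 := by
    have : 0 < ρ * Real.sin θ := by positivity
    simp [sgn, him, this]
  have s2 : sgn (γ (-θ)) = 0 := by
    have : 0 < ρ * Real.sin θ := by positivity
    simp [sgn, him, this.le]
  simp only [Pi.zero_apply, Pi.add_apply, s1, s2, hcc] at h5
  generalize c (γ (-θ)) = k at h5
  clear * - h5
  revert h5
  decide +revert

lemma W_odd (r : ℝ) : ¬ EvenAt (W r) r := by
  rintro ⟨c, hc⟩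
  rw [eventually_nhdsWithin_iff, Metric.eventually_nhds_iff_ball] at hc
  obtain ⟨δ, hδ, hc⟩ := hc
  refine W_sphere (r := r) (ρ := δ / 2) (by positivity) c (fun z hz => hc z ?_ ?_)
  · rw [Metric.mem_ball, hz]; linarith
  · intro h0
    rw [mem_singleton_iff] at h0
    rw [h0, dist_self] at hz
    linarith

noncomputable def W2 : ℂ → ℂ → ZMod 2 := W 1 + W 0

lemma W2_lz {z : ℂ} (hz : z.im = 0 → z.re < 0 ∨ 1 < z.re) : LZ W2 z := by
  by_cases h : z.im = 0
  · rcases hz h with h1 | h1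
    · have := (W_triv (r := 1) (z := z) (by linarith)).add (W_triv h1)
      rwa [addself_fun] at this
    · exact (W_lz (Or.inl h1)).add (W_lz (Or.inl (by linarith)))
  · exact (W_lz (Or.inr h)).add (W_lz (Or.inr h))

lemma W2_reg {z : ℂ} (h0 : z ≠ 0) (h1 : z ≠ 1) : Reg W2 z :=
  (W_reg (by simpa using h1)).add (W_reg (by simpa using h0))

lemma W2_odd0 : ¬ EvenAt W2 0 := by
  intro h
  have h1 : EvenAt (W 1) (0:ℂ) := (W_reg (by simp)).even
  have := h1.of_add h
  exact W_odd 0 (by simpa using this)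

lemma W2_odd1 : ¬ EvenAt W2 1 := by
  intro h
  have h1 : EvenAt (W 0) (1:ℂ) := (W_reg (by simp)).even
  have := h1.of_add (by rw [add_comm]; exact h)
  exact W_odd 1 (by simpa using this)

lemma W2_triv {z : ℂ} (h0 : 0 < z.re) (h1 : z.re < 1) : Triv W2 sgn z := by
  have := (W_triv h1).add (W_lz (r := 0) (Or.inl h0))
  rwa [add_zero] at this

noncomputable def uu (a : ℂ) : ℂ → ℂ → ZMod 2 := pull (fun z => z / a) W2

lemma uu_lz {a z : ℂ} (hz : (z/a).im = 0 → (z/a).re < 0 ∨ 1 < (z/a).re) : LZ (uu a) z :=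
  (W2_lz hz).pull (f := fun z => z / a) (by fun_prop)

lemma uu_lz' {a z : ℂ} (ha : a ≠ 0) (hz : z ∉ segment ℝ 0 a) : LZ (uu a) z := by
  apply uu_lz
  intro him
  by_contra! h
  apply hz
  rw [segment_eq_image']
  refine ⟨(z/a).re, h, ?_⟩
  have : ((z/a).re : ℂ) = z / a := Complex.ext (by simp) (by simp [him])
  simp only [sub_zero, zero_add, Complex.real_smul, this]
  field_simp

lemma uu_reg {a z : ℂ} (ha : a ≠ 0) (h0 : z ≠ 0) (h1 : z ≠ a) : Reg (uu a) z := by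
  refine Reg.pull (f := fun z => z / a) (W2_reg ?_ ?_) (by fun_prop)
  · exact div_ne_zero h0 ha
  · rwa [Ne, div_eq_one_iff_eq ha]

lemma eps_uu {a : ℂ} (ha : a ≠ 0) (z : ℂ) : eps (uu a) z = eps W2 (z / a) := by
  have := eps_pull (Homeomorph.mulRight₀ a⁻¹ (inv_ne_zero ha)).toOpenPartialHomeomorph W2 (x := z)
    (by simp)
  simpa [uu, div_eq_mul_inv] using this

lemma eps_uu0 {a : ℂ} (ha : a ≠ 0) : eps (uu a) 0 = 1 := by
  rw [eps_uu ha, zero_div, eps_one_iff]; exact W2_odd0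

lemma eps_uua {a : ℂ} (ha : a ≠ 0) : eps (uu a) a = 1 := by
  rw [eps_uu ha, div_self ha, eps_one_iff]; exact W2_odd1

lemma good_uu {a : ℂ} (ha : a ≠ 0) : Good (uu a) := by
  refine ⟨(toFinite {0, a}).subset ?_, fun x _ => Iset_C ▸ mem_univ x⟩
  intro z hz
  by_contra h
  simp only [mem_insert_iff, mem_singleton_iff, not_or] at h
  exact hz (uu_reg ha h.1 h.2)

lemma deg_uu {a : ℂ} (ha : a ≠ 0) : deg (uu a) = 0 := by
  unfold deg
  rw [finsum_eq_sum_of_support_subset (s := {0, a})]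
  · rw [Finset.sum_pair ha.symm, eps_uu0 ha, eps_uua ha]; decide
  · intro z hz
    by_contra h
    simp only [Finset.coe_insert, Finset.coe_singleton, mem_insert_iff, mem_singleton_iff,
      not_or] at h
    exact hz (eps_of_reg (uu_reg ha h.1 h.2))

lemma deg_zero_of_eps {φ : X → X → ZMod 2} (h : ∀ x, eps φ x = 0) : deg φ = 0 := by
  unfold deg; simp [h]

structure CS (ψ : ℂ → ℂ → ZMod 2) : Prop where
  fin : {z | ¬ Reg ψ z}.Finite
  bdd : ∃ R, ∀ z, R < dist z 0 → LZ ψ z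

lemma CS.good {ψ : ℂ → ℂ → ZMod 2} (h : CS ψ) : Good ψ :=
  ⟨h.fin, fun x _ => Iset_C ▸ mem_univ x⟩

lemma CS.add {ψ χ : ℂ → ℂ → ZMod 2} (h : CS ψ) (h' : CS χ) : CS (ψ + χ) := by
  refine ⟨(h.good.add h'.good).fin, ?_⟩
  obtain ⟨R, hR⟩ := h.bdd
  obtain ⟨R', hR'⟩ := h'.bdd
  exact ⟨max R R', fun z hz => (hR z (lt_of_le_of_lt (le_max_left _ _) hz)).add
    (hR' z (lt_of_le_of_lt (le_max_right _ _) hz))⟩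

lemma cs_zero : CS 0 := ⟨good_zero.fin, 0, fun z _ => triv_zero z⟩

lemma seg_norm {a z : ℂ} (hz : z ∈ segment ℝ 0 a) : ‖z‖ ≤ ‖a‖ := by
  rw [segment_eq_image'] at hz
  obtain ⟨t, ht, rfl⟩ := hz
  simp only [sub_zero, zero_add, norm_smul, Real.norm_eq_abs, abs_of_nonneg ht.1]
  nlinarith [norm_nonneg a, ht.2]

lemma seg_norm_eq {a z : ℂ} (hz : z ∈ segment ℝ 0 a) (h : ‖a‖ ≤ ‖z‖) : z = a := by
  rw [segment_eq_image'] at hz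
  obtain ⟨t, ht, rfl⟩ := hz
  simp only [sub_zero, zero_add, norm_smul, Real.norm_eq_abs, abs_of_nonneg ht.1] at h ⊢
  by_cases ha : a = 0
  · simp [ha]
  · have : 0 < ‖a‖ := norm_pos_iff.2 ha
    have : t = 1 := le_antisymm ht.2 (by nlinarith)
    simp [this]

lemma cs_uu {a : ℂ} (ha : a ≠ 0) : CS (uu a) :=
  ⟨(good_uu ha).fin, ‖a‖, fun z hz => uu_lz' ha fun h => by
    rw [dist_zero_right] at hz; linarith [seg_norm h]⟩

lemma kill (F : Finset ℂ) (h0 : (0:ℂ) ∉ F) (κ : ℂ → ZMod 2) :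
    ∃ v, CS v ∧ deg v = 0 ∧ (∀ p ∈ F, eps v p = κ p) ∧ (∀ p ∉ F, p ≠ 0 → eps v p = 0) ∧
      ∀ z, (∀ p ∈ F, z ∉ segment ℝ 0 p) → LZ v z := by
  induction F using Finset.induction_on with
  | empty =>
    exact ⟨0, cs_zero, deg_zero_of_eps fun x => eps_of_reg ⟨0, triv_zero x⟩, by simp,
      fun p _ _ => eps_of_reg ⟨0, triv_zero p⟩, fun z _ => triv_zero z⟩
  | @insert a F ha ih =>
    simp only [Finset.mem_insert, not_or] at h0
    obtain ⟨v, h1, h2, h3, h4, h5⟩ := ih h0.2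
    have ha0 : a ≠ 0 := Ne.symm h0.1
    rcases zmod_cases (κ a) with hk | hk
    · refine ⟨v, h1, h2, ?_, ?_, ?_⟩
      · intro p hp
        rcases Finset.mem_insert.1 hp with rfl | hp
        · rw [hk]; exact h4 _ ha ha0
        · exact h3 p hp
      · intro p hp hp0
        exact h4 p (fun h => hp (Finset.mem_insert_of_mem h)) hp0
      · intro z hz
        exact h5 z (fun p hp => hz p (Finset.mem_insert_of_mem hp))
    · refine ⟨v + uu a, h1.add (cs_uu ha0), ?_, ?_, ?_, ?_⟩
      · rw [h1.good.deg_add (good_uu ha0), h2, deg_uu ha0, add_zero]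
      · intro p hp
        rw [h1.good.eps_add (good_uu ha0)]
        rcases Finset.mem_insert.1 hp with rfl | hp'
        · rw [h4 _ ha ha0, eps_uua ha0, hk, zero_add]
        · rw [h3 p hp', eps_of_reg (uu_reg ha0 _ _), add_zero]
          · rintro rfl; exact h0.2 hp'
          · rintro rfl; exact ha hp'
      · intro p hp hp0
        rw [h1.good.eps_add (good_uu ha0), h4 p (fun h => hp (Finset.mem_insert_of_mem h)) hp0,
          eps_of_reg (uu_reg ha0 hp0 _), add_zero]
        rintro rfl; exact hp (Finset.mem_insert_self _ _)
      · intro z hz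
        exact (h5 z (fun p hp => hz p (Finset.mem_insert_of_mem hp))).add
          (uu_lz' ha0 (hz a (Finset.mem_insert_self _ _)))

lemma good_W (r : ℝ) : Good (W r) := by
  refine ⟨(toFinite {(r:ℂ)}).subset ?_, fun x _ => Iset_C ▸ mem_univ x⟩
  intro z hz
  by_contra h
  exact hz (W_reg h)

theorem planar {ψ : ℂ → ℂ → ZMod 2} (h : CS ψ) : deg ψ = 0 := by
  classical
  obtain ⟨v, h1, h2, h3, h4, -⟩ := kill (h.fin.toFinset.erase 0) (by simp) (eps ψ)
  have hψ' := h.add h1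
  have he : ∀ p, p ≠ 0 → eps (ψ + v) p = 0 := by
    intro p hp
    rw [h.good.eps_add h1.good]
    by_cases hp2 : Reg ψ p
    · rw [eps_of_reg hp2, h4 p _ hp, add_zero]
      simp [hp2]
    · rw [h3 p (by simp [hp, hp2])]; grind
  have hdeg : deg (ψ + v) = 0 := by
    apply deg_zero_of_eps
    intro x
    by_cases hx : x = 0
    swap
    · exact he x hx
    subst hx
    by_contra hodd
    have hodd : eps (ψ + v) 0 = 1 := (zmod_cases _).resolve_left hodd
    have hgood := hψ'.good.add (good_W 0)
    have heps : ∀ p, EvenAt (ψ + v + W 0) p := by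
      intro p
      rw [← eps_zero_iff, hψ'.good.eps_add (good_W 0)]
      by_cases hp : p = 0
      · subst hp
        have : eps (W 0) 0 = 1 := eps_one_iff.2 (by simpa using W_odd 0)
        rw [hodd, this]; decide
      · rw [he p hp, eps_of_reg (W_reg (by simpa using hp)), add_zero]
    obtain ⟨χ, c1, c2⟩ := removal hgood.fin (fun p _ => heps p)
    have hcoc : Coc χ univ := by
      intro x _
      by_cases hx : Reg (ψ + v + W 0) x
      · exact (c2 x (by simpa using hx)).reg hx
      · exact c1 x hx
    obtain ⟨c, hc⟩ := SCo_univ_C χ hcoc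
    obtain ⟨R, hR⟩ := hψ'.bdd
    obtain ⟨R', hR'⟩ := hgood.fin.isBounded.subset_closedBall (0:ℂ)
    have hpos : 0 < max 0 (max R R') + 1 := by positivity
    refine W_sphere (r := 0) hpos c (fun z hz => ?_)
    have b1 : R < dist z 0 := by
      have : R ≤ max 0 (max R R') := (le_max_left _ _).trans (le_max_right _ _)
      simp only [Complex.ofReal_zero] at hz
      linarith
    have b2 : R' < dist z 0 := by
      have : R' ≤ max 0 (max R R') := (le_max_right _ _).trans (le_max_right _ _)
      simp only [Complex.ofReal_zero] at hz
      linarith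
    have hz2 := c2 z (fun h => by
      have := hR' h
      rw [Metric.mem_closedBall] at this
      linarith)
    have hz3 := hz2.symm.triv (hc z (mem_univ z))
    have := Triv.add (hR z b1) hz3
    rwa [cancel_fun₂, zero_add] at this
  have := h.good.deg_add h1.good
  rw [hdeg, h2, add_zero] at this
  exact this.symm

end BM

namespace BM
open Set Topology Filter
variable {X Y M : Type} [TopologicalSpace X] [TopologicalSpace Y] [TopologicalSpace M]

lemma jumps {l0 l1 : ℝ} (hl : l0 ≤ l1) {L : Set ℝ} (hL : L ⊆ Ioo l0 l1) (f : ℝ → ZMod 2)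
    (hf : ∀ s ∈ Icc l0 l1, ∃ V, IsOpen V ∧ s ∈ V ∧ ∃ γ, ∀ t ∈ V ∩ L, f t = γ) :
    ∃ J : Finset ℝ, (∀ k ∈ J, k ∈ Icc l0 l1 ∧ k ∉ L) ∧
      (∀ t ∈ L, (∑ k ∈ J, if k < t then (1 : ZMod 2) else 0) = f t) ∧ (∑ _k ∈ J, (1 : ZMod 2)) = 0 := by
  classical
  choose! V hV hsV hγ using hf
  obtain ⟨t, ht0, htm, ⟨N, hN⟩, ht⟩ := exists_monotone_Icc_subset_open_cover_Icc (c := fun s : Icc l0 l1 => (Subtype.val ⁻¹' V s : Set (Icc l0 l1)))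
    hl (fun s => (hV s s.2).preimage continuous_subtype_val)
    (fun x _ => mem_iUnion.2 ⟨x, hsV x x.2⟩)
  have key : ∀ m, ∃ J : Finset ℝ, (∀ k ∈ J, k ∈ Icc l0 l1 ∧ k ∉ L ∧ k < t m) ∧
      (∀ x ∈ L, x ≤ t m → (∑ k ∈ J, if k < x then (1 : ZMod 2) else 0) = f x) := by
    intro m
    induction m with
    | zero =>
      refine ⟨∅, by simp, ?_⟩
      intro x hx hx2
      rw [ht0] at hx2
      exact absurd (hL hx).1 (not_lt.2 hx2)
    | succ m ih =>
      obtain ⟨J, hJ1, hJ2⟩ := ih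
      have hle : t m ≤ t (m+1) := htm (Nat.le_succ m)
      have hle' : (t m : ℝ) ≤ t (m+1) := hle
      obtain ⟨s, hs⟩ := ht m
      obtain ⟨γ, hγ'⟩ := hγ s s.2
      have hmid : ∀ x ∈ L, (t m : ℝ) ≤ x → x ≤ t (m+1) → f x = γ := by
        intro x hx h1 h2
        exact hγ' x ⟨hs (a := ⟨x, Ioo_subset_Icc_self (hL hx)⟩) ⟨h1, h2⟩, hx⟩
      have hval : ∀ x, (t m : ℝ) ≤ x → (∑ k ∈ J, if k < x then (1 : ZMod 2) else 0) = ∑ _k ∈ J, 1 := by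
        intro x hx
        refine Finset.sum_congr rfl fun k hk => ?_
        rw [if_pos ((hJ1 k hk).2.2.trans_le hx)]
      by_cases hpar : (∑ _k ∈ J, (1:ZMod 2)) = γ
      · refine ⟨J, fun k hk => ⟨(hJ1 k hk).1, (hJ1 k hk).2.1, (hJ1 k hk).2.2.trans_le hle⟩, ?_⟩
        intro x hx hx2
        by_cases h : x ≤ t m
        · exact hJ2 x hx h
        · rw [hval x (not_le.1 h).le, hpar, hmid x hx (not_le.1 h).le hx2]
      · have htL : (t m : ℝ) ∉ L := by
          intro h
          exact hpar (by rw [← hval _ le_rfl, hJ2 _ h le_rfl, hmid _ h le_rfl hle])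
        rcases hle'.eq_or_lt with heq | hlt
        · exact ⟨J, by rw [← heq]; exact hJ1, by rw [← heq]; exact hJ2⟩
        have hnot : (t m : ℝ) ∉ J := fun h => lt_irrefl _ (hJ1 _ h).2.2
        refine ⟨insert (t m : ℝ) J, ?_, ?_⟩
        · intro k hk
          rcases Finset.mem_insert.1 hk with rfl | hk
          · exact ⟨(t m).2, htL, hlt⟩
          · exact ⟨(hJ1 k hk).1, (hJ1 k hk).2.1, (hJ1 k hk).2.2.trans_le hle⟩
        · intro x hx hx2
          rw [Finset.sum_insert hnot]
          by_cases h : x ≤ t m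
          · rw [if_neg (not_lt.2 h), zero_add, hJ2 x hx h]
          · rw [if_pos (not_le.1 h), hval x (not_le.1 h).le, hmid x hx (not_le.1 h).le hx2]
            clear * - hpar
            generalize (∑ _k ∈ J, (1:ZMod 2)) = a at *
            revert a γ; decide
  obtain ⟨J, h1, h2⟩ := key N
  have hN' := hN N le_rfl
  rcases zmod_cases (∑ _k ∈ J, (1:ZMod 2)) with h | h
  · refine ⟨J, fun k hk => ⟨(h1 k hk).1, (h1 k hk).2.1⟩, fun x hx => h2 x hx ?_, h⟩
    rw [hN']; exact (hL hx).2.le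
  · have hnot : l1 ∉ J := fun h => lt_irrefl l1 (by simpa [hN'] using (h1 _ h).2.2)
    refine ⟨insert l1 J, ?_, ?_, ?_⟩
    · intro k hk
      rcases Finset.mem_insert.1 hk with rfl | hk
      · exact ⟨⟨hl, le_rfl⟩, fun h => lt_irrefl _ (hL h).2⟩
      · exact ⟨(h1 k hk).1, (h1 k hk).2.1⟩
    · intro x hx
      rw [Finset.sum_insert hnot, if_neg (not_lt.2 (hL hx).2.le), zero_add]
      apply h2 x hx
      rw [hN']; exact (hL hx).2.le
    · rw [Finset.sum_insert hnot, h]; decide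

noncomputable def astep (θ : ℝ) (z : ℂ) : ZMod 2 := if θ < z.arg then 1 else 0

lemma astep_lc {θ : ℝ} {z : ℂ} (hz : z ∈ Complex.slitPlane) (h : z.arg ≠ θ) :
    ∀ᶠ a in 𝓝 z, astep θ a = astep θ z := by
  have hc := Complex.continuousAt_arg hz
  unfold astep
  rcases h.lt_or_gt with h | h
  · filter_upwards [hc.eventually (gt_mem_nhds h)] with a ha
    rw [if_neg (not_lt.2 ha.le), if_neg (not_lt.2 h.le)]
  · filter_upwards [hc.eventually (lt_mem_nhds h)] with a ha
    rw [if_pos ha, if_pos h]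

noncomputable def ce (θ : ℝ) : ℂ := Complex.exp (θ * Complex.I)

lemma ce_ne (θ : ℝ) : ce θ ≠ 0 := Complex.exp_ne_zero _
lemma norm_ce (θ : ℝ) : ‖ce θ‖ = 1 := Complex.norm_exp_ofReal_mul_I θ
lemma polar (z : ℂ) : z = ‖z‖ * ce z.arg := (Complex.norm_mul_exp_arg_mul_I z).symm
lemma arg_ce {r θ : ℝ} (hr : 0 < r) (h : θ ∈ Ioc (-Real.pi) Real.pi) : (r * ce θ).arg = θ := by
  have := Complex.arg_mul_cos_add_sin_mul_I hr h
  rwa [← Complex.exp_mul_I] at this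
lemma div_ce (z : ℂ) (θ : ℝ) : z / ce θ = ‖z‖ * ce (z.arg - θ) := by
  rw [div_eq_iff (ce_ne θ), mul_assoc]
  unfold ce
  rw [← Complex.exp_add]
  conv_lhs => rw [polar z]
  unfold ce
  congr 2; push_cast; ring
lemma ce_re (θ : ℝ) : (ce θ).re = Real.cos θ := Complex.exp_ofReal_mul_I_re θ
lemma ce_im (θ : ℝ) : (ce θ).im = Real.sin θ := Complex.exp_ofReal_mul_I_im θ

lemma uu_step {θ : ℝ} (hθ : θ ∈ Ioo (-Real.pi) Real.pi) {z : ℂ} (hz : z ∈ Complex.slitPlane)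
    (hz1 : ‖z‖ < 1) : LZ (uu (ce θ) + dl (astep θ)) z := by
  have hz0 : z ≠ 0 := Complex.slitPlane_ne_zero hz
  have hpos : 0 < ‖z‖ := norm_pos_iff.2 hz0
  have hθ' : θ ∈ Ioc (-Real.pi) Real.pi := ⟨hθ.1, hθ.2.le⟩
  by_cases h : z.arg = θ
  · rw [lz_add_dl_iff]
    have h1 : z / ce θ = ‖z‖ := by
      rw [div_ce, h, sub_self]; simp [ce]
    have h2 : Triv W2 sgn (z / ce θ) := W2_triv (by simp [h1, hpos, hz0]) (by simpa [h1] using hz1)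
    have h3 := Triv.pull (f := fun y => y / ce θ) h2 (by fun_prop)
    refine h3.congr_right (U := {a | a ∈ Complex.slitPlane ∧ a.arg ∈ Ioo (θ - Real.pi) (θ + Real.pi)}) ?_ ?_
    · refine (Complex.isOpen_slitPlane.eventually_mem hz).and ((Complex.continuousAt_arg hz).eventually (Ioo_mem_nhds ?_ ?_))
      · rw [h]; linarith [Real.pi_pos]
      · rw [h]; linarith [Real.pi_pos]
    · rintro a ⟨ha, ha1, ha2⟩
      have ha0 : 0 < ‖a‖ := norm_pos_iff.2 (Complex.slitPlane_ne_zero ha)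
      have him : (a / ce θ).im = ‖a‖ * Real.sin (a.arg - θ) := by
        rw [div_ce, Complex.im_ofReal_mul, ce_im]
      simp only [Function.comp, sgn, astep, him]
      by_cases hlt : θ < a.arg
      · rw [if_pos hlt, if_pos]
        exact mul_pos ha0 (Real.sin_pos_of_pos_of_lt_pi (by linarith) (by linarith))
      · rw [if_neg hlt, if_neg]
        have := Real.sin_nonpos_of_nonpos_of_neg_pi_le (x := a.arg - θ) (by linarith) (by linarith)
        nlinarith
  · have h1 : z ∉ segment ℝ 0 (ce θ) := by
      intro hs
      rw [segment_eq_image'] at hs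
      obtain ⟨t, ht, rfl⟩ := hs
      simp only [sub_zero, zero_add] at *
      have ht0 : 0 < t := ht.1.lt_of_ne (by rintro rfl; simp at hz0)
      apply h
      rw [Complex.real_smul]
      exact arg_ce ht0 hθ'
    exact (uu_lz' (ce_ne θ) h1).add (lz_dl_of_const (astep_lc hz h) (fun a ha => ha))

lemma CS.sum {ι : Type*} (J : Finset ι) {g : ι → ℂ → ℂ → ZMod 2} (h : ∀ i ∈ J, CS (g i)) :
    CS (∑ i ∈ J, g i) := by
  classical
  induction J using Finset.induction_on with
  | empty => simpa using cs_zero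
  | insert a s ha ih =>
    rw [Finset.sum_insert ha]
    exact (h a (Finset.mem_insert_self _ _)).add (ih fun i hi => h i (Finset.mem_insert_of_mem hi))

lemma LZ.sum {ι : Type*} (J : Finset ι) {g : ι → X → X → ZMod 2} {x : X} (h : ∀ i ∈ J, LZ (g i) x) :
    LZ (∑ i ∈ J, g i) x := by
  classical
  induction J using Finset.induction_on with
  | empty => simpa using triv_zero x
  | insert a s ha ih =>
    rw [Finset.sum_insert ha]
    exact (h a (Finset.mem_insert_self _ _)).add (ih fun i hi => h i (Finset.mem_insert_of_mem hi))

lemma dl_sum {ι : Type*} (J : Finset ι) (g : ι → X → ZMod 2) :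
    dl (∑ i ∈ J, g i) = ∑ i ∈ J, dl (g i) := by
  ext a b; simp [dl, Finset.sum_add_distrib]

lemma dl_add (c d : X → ZMod 2) : dl (c + d) = dl c + dl d := by
  ext a b; simp only [dl, Pi.add_apply]; ring

end BM

namespace BM
open Set Topology Filter
variable {X Y M : Type} [TopologicalSpace X] [TopologicalSpace Y] [TopologicalSpace M]

lemma neg_axis {l : ℝ} (hl0 : 0 ≤ l) (hl : l < Real.pi) {z : ℂ} (hz : z ∉ Complex.slitPlane) (hz0 : z ≠ 0) :
    ∀ᶠ a in 𝓝 z, l < |a.arg| := by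
  rw [Complex.mem_slitPlane_iff] at hz
  push Not at hz
  have hre : z.re < 0 := lt_of_le_of_ne hz.1 (fun h => hz0 (Complex.ext h hz.2))
  have hnorm : ‖z‖ = - z.re := by
    have : z = (z.re : ℂ) := Complex.ext rfl (by simpa using hz.2)
    rw [this, Complex.norm_real, Real.norm_eq_abs, abs_of_neg hre, Complex.ofReal_re]
  have hcos : -1 < Real.cos l := by
    rw [← Real.cos_pi]
    exact Real.strictAntiOn_cos ⟨hl0, hl.le⟩ ⟨Real.pi_pos.le, le_rfl⟩ hl
  have hct : ContinuousAt (fun a : ℂ => a.re / ‖a‖) z :=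
    Complex.continuous_re.continuousAt.div continuous_norm.continuousAt (by simpa using hz0)
  have h1 : z.re / ‖z‖ < Real.cos l := by
    rw [hnorm, div_neg, div_self hre.ne]; exact hcos
  filter_upwards [hct.eventually (gt_mem_nhds h1), isOpen_ne.mem_nhds hz0] with a ha ha0
  rw [← Complex.cos_arg ha0, ← Real.cos_abs] at ha
  by_contra! hle
  exact absurd (Real.strictAntiOn_cos.antitoneOn ⟨abs_nonneg _, hle.trans hl.le⟩ ⟨hl0, hl.le⟩ hle) (not_le.2 ha)

lemma continuous_ce : Continuous ce := by unfold ce; fun_prop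

open Classical in
lemma sector (c : ℂ → ZMod 2) {U : Set ℂ} (hU : IsOpen U) (h1 : (-1 : ℂ) ∈ U)
    (hc : ∀ z, ‖z‖ = 1 → z ∉ U → Triv 0 c z) :
    ∃ u, CS u ∧ (∀ z, ‖z‖ < 1 → LZ (dl c + u) z) ∧ ∀ z, z ∉ U → 1 ≤ ‖z‖ → LZ u z := by
  -- the angle bound
  obtain ⟨l, hl0, hlpi, hlU⟩ : ∃ l, 0 ≤ l ∧ l < Real.pi ∧ ∀ θ ∈ Ioo (-Real.pi) Real.pi, ce θ ∉ U → θ ∈ Ioo (-l) l := by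
    have a1 : ∀ᶠ θ in 𝓝 Real.pi, ce θ ∈ U := continuous_ce.continuousAt.eventually
      (hU.mem_nhds (by simpa [ce] using h1))
    have a2 : ∀ᶠ θ in 𝓝 Real.pi, ce (-θ) ∈ U := (continuous_ce.comp continuous_neg).continuousAt.eventually
      (hU.mem_nhds (by simpa [ce, Complex.exp_neg] using h1))
    obtain ⟨δ, hδ, h⟩ := Metric.eventually_nhds_iff_ball.1 (a1.and a2)
    have hmin : 0 < min δ Real.pi := lt_min hδ Real.pi_pos
    refine ⟨Real.pi - min δ Real.pi / 2, ?_, ?_, ?_⟩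
    · linarith [min_le_right δ Real.pi]
    · linarith
    · intro θ hθ hθU
      have := min_le_left δ Real.pi
      constructor
      · by_contra! hlt
        have := (h (-θ) (by rw [Metric.mem_ball, Real.dist_eq, abs_lt]; constructor <;> linarith [hθ.1])).2
        rw [neg_neg] at this
        exact hθU this
      · by_contra! hlt
        exact hθU (h θ (by rw [Metric.mem_ball, Real.dist_eq, abs_lt]; constructor <;> linarith [hθ.2])).1
  obtain ⟨J, hJ1, hJ2, hJ3⟩ := jumps (l0 := -l) (l1 := l) (by linarith)
    (L := {θ | θ ∈ Ioo (-Real.pi) Real.pi ∧ ce θ ∉ U}) (fun θ h => hlU θ h.1 h.2)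
    (fun θ => c (ce θ)) (by
      intro s hs
      by_cases hsU : ce s ∈ U
      · exact ⟨ce ⁻¹' U, hU.preimage continuous_ce, hsU, 0, fun t ht => (ht.2.2 ht.1).elim⟩
      · obtain ⟨V, hV, hsV, h⟩ := hc _ (norm_ce s) hsU
        refine ⟨ce ⁻¹' V, hV.preimage continuous_ce, hsV, c (ce s), fun t ht => ?_⟩
        have := h _ ht.1 _ hsV
        simp only [Pi.zero_apply] at this
        grind)
  have hJpi : ∀ θ ∈ J, θ ∈ Ioo (-Real.pi) Real.pi := fun θ hθ =>
    ⟨by linarith [(hJ1 θ hθ).1.1], by linarith [(hJ1 θ hθ).1.2]⟩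
  have hJU : ∀ θ ∈ J, ce θ ∈ U := fun θ hθ => by
    by_contra h
    exact (hJ1 θ hθ).2 ⟨hJpi θ hθ, h⟩
  let ĉ : ℂ → ZMod 2 := ∑ θ ∈ J, astep θ
  let g : ℂ → ZMod 2 := fun z => if ‖z‖ < 1 then c z + ĉ z else 0
  let u0 : ℂ → ℂ → ZMod 2 := (∑ θ ∈ J, uu (ce θ)) + dl g
  have hopen : IsOpen {z : ℂ | ‖z‖ < 1} := isOpen_lt continuous_norm continuous_const
  have hopen' : IsOpen {z : ℂ | 1 < ‖z‖} := isOpen_lt continuous_const continuous_norm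
  have hout : ∀ z, 1 < ‖z‖ → LZ u0 z := by
    intro z hz
    refine (LZ.sum J fun θ _ => uu_lz' (ce_ne θ) fun hs => ?_).add
      (lz_dl_of_const (k := 0) (hopen'.mem_nhds hz) fun a (ha : 1 < ‖a‖) => if_neg (not_lt.2 ha.le))
    have := seg_norm hs
    rw [norm_ce] at this; linarith
  have hcs : CS u0 := by
    refine ⟨?_, 1, fun z hz => hout z (by simpa using hz)⟩
    exact ((CS.sum J fun θ _ => cs_uu (ce_ne θ)).good.add (good_dl g)).fin
  have hsph : ∀ z, z ∉ U → 1 ≤ ‖z‖ → LZ u0 z := by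
    intro z hzU hz
    rcases hz.eq_or_lt with hz | hz
    swap
    · exact hout z hz
    have hz0 : z ≠ 0 := by rintro rfl; simp at hz
    have hpz := polar z
    rw [← hz, Complex.ofReal_one, one_mul] at hpz
    have hslit : z ∈ Complex.slitPlane := by
      rw [Complex.mem_slitPlane_iff_arg]
      refine ⟨fun h => hzU ?_, hz0⟩
      rw [hpz, h]; simpa [ce] using h1
    have hargL : z.arg ∈ Ioo (-Real.pi) Real.pi :=
      ⟨Complex.neg_pi_lt_arg z, (Complex.arg_le_pi z).lt_of_ne (Complex.mem_slitPlane_iff_arg.1 hslit).1⟩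
    have hne : ∀ θ ∈ J, z.arg ≠ θ := by
      rintro θ hθ h
      apply hzU; rw [hpz, h]; exact hJU θ hθ
    have hval : ĉ z = c z := by
      have := hJ2 z.arg ⟨hargL, by rwa [← hpz]⟩
      simp only [← hpz] at this
      rw [← this]
      simp [ĉ, astep]
    refine (LZ.sum J fun θ hθ => uu_lz' (ce_ne θ) fun hs => ?_).add ?_
    · have := seg_norm_eq hs (by rw [norm_ce, hz])
      exact hzU (this ▸ hJU θ hθ)
    · have e1 : ∀ᶠ a in 𝓝 z, ∀ θ ∈ J, astep θ a = astep θ z :=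
        (Filter.eventually_all_finset J).2 fun θ hθ => astep_lc hslit (hne θ hθ)
      obtain ⟨V, hV, hsV, h⟩ := hc z hz.symm hzU
      have e2 : ∀ᶠ a in 𝓝 z, g a = 0 := by
        filter_upwards [e1, hV.mem_nhds hsV] with a ha haV
        have h2 := h _ haV _ hsV
        have h3 : ĉ a = ĉ z := by
          simp only [ĉ, Finset.sum_apply]
          exact Finset.sum_congr rfl fun θ hθ => ha θ hθ
        simp only [g]
        rw [h3, hval, ← h2]; simp
      exact lz_dl_of_const e2 fun a ha => ha
  have hball : ∀ z, ‖z‖ < 1 → z ≠ 0 → LZ (u0 + dl c) z := by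
    intro z hz hz0
    have h2 : LZ (dl g + (dl c + dl ĉ)) z := by
      refine lz_of_eq_nhds (hopen.mem_nhds hz) ?_
      intro a (ha : ‖a‖ < 1) b (hb : ‖b‖ < 1)
      simp only [dl, g, if_pos ha, if_pos hb, Pi.add_apply]; ring
    have h3 : LZ ((∑ θ ∈ J, uu (ce θ)) + dl ĉ) z := by
      by_cases hslit : z ∈ Complex.slitPlane
      · simp only [ĉ]
        rw [dl_sum, ← Finset.sum_add_distrib]
        exact LZ.sum J fun θ hθ => uu_step (hJpi θ hθ) hslit hz
      · have hz' := hslit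
        rw [Complex.mem_slitPlane_iff] at hz'
        push Not at hz'
        have hargz : z.arg = Real.pi := by
          by_contra h
          exact hslit (Complex.mem_slitPlane_iff_arg.2 ⟨h, hz0⟩)
        refine (LZ.sum J fun θ hθ => uu_lz' (ce_ne θ) fun hs => ?_).add ?_
        · rw [segment_eq_image'] at hs
          obtain ⟨t, ht, rfl⟩ := hs
          simp only [sub_zero, zero_add, Complex.real_smul] at *
          have ht0 : 0 < t := ht.1.lt_of_ne (by rintro rfl; simp at hz0)
          rw [arg_ce ht0 ⟨(hJpi θ hθ).1, (hJpi θ hθ).2.le⟩] at hargz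
          linarith [(hJpi θ hθ).2]
        · refine lz_dl_of_const (k := 0) (neg_axis hl0 hlpi hslit hz0) ?_
          intro a (ha : l < |a.arg|)
          simp only [ĉ, Finset.sum_apply]
          rcases lt_abs.1 ha with h | h
          · rw [← hJ3]
            refine Finset.sum_congr rfl fun θ hθ => if_pos ?_
            linarith [(hJ1 θ hθ).1.2]
          · refine Finset.sum_eq_zero fun θ hθ => if_neg ?_
            linarith [(hJ1 θ hθ).1.1]
    have h4 := h3.add h2
    have : ∑ θ ∈ J, uu (ce θ) + dl ĉ + (dl g + (dl c + dl ĉ)) = u0 + dl c := by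
      simp only [u0]
      rw [show ∑ θ ∈ J, uu (ce θ) + dl ĉ + (dl g + (dl c + dl ĉ)) = ((∑ θ ∈ J, uu (ce θ) + dl g + dl c) + dl ĉ) + dl ĉ by abel, cancel_fun₂']
    rwa [this] at h4
  obtain ⟨φ', k1, k2⟩ := removal_one (φ := u0 + dl c) (p := 0) (c := 0) (by
    rw [eventually_nhdsWithin_iff]
    filter_upwards [hopen.mem_nhds (show ‖(0:ℂ)‖ < 1 by simp)] with z hz hz0 using hball z hz hz0)
  have hu : ∀ z, z ≠ 0 → LZ (u0 + (φ' + dl c)) z := by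
    intro z hz
    have := k2 z hz
    rwa [add_assoc, add_comm (dl c)] at this
  refine ⟨φ' + dl c, ⟨?_, 1, ?_⟩, ?_, ?_⟩
  · refine (hcs.fin.union (finite_singleton 0)).subset ?_
    intro z hz
    by_contra hno
    simp only [mem_union, mem_singleton_iff, mem_setOf_eq, not_or, not_not] at hno
    exact hz ((hu z hno.2).reg hno.1)
  · intro z hz
    rw [dist_zero_right] at hz
    exact (hu z (by rintro rfl; simp at hz; linarith)).triv (hout z hz)
  · intro z hz
    have e : dl c + (φ' + dl c) = φ' := by rw [add_comm, cancel_fun₂']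
    rw [e]
    by_cases h0 : z = 0
    · rw [h0]; exact k1
    · exact (k2 z h0).triv (hball z hz h0)
  · intro z hzU hz
    exact (hu z (by rintro rfl; simp at hz; linarith)).triv (hsph z hzU hz)

end BM

namespace BM
open Set Topology Filter
variable {X Y M : Type} [TopologicalSpace X] [TopologicalSpace Y] [TopologicalSpace M]

lemma absorb1 {ψ : ℂ → ℂ → ZMod 2} (hfin : {z | ¬ Reg ψ z}.Finite) {U : Set ℂ} (hU : IsOpen U)
    (h1 : (-1 : ℂ) ∈ U) (hψ : ∀ z, z ∉ U → 1 ≤ ‖z‖ → LZ ψ z) :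
    ∃ u, CS u ∧ (∀ z, ‖z‖ < 1 → LZ (ψ + u) z) ∧ ∀ z, z ∉ U → 1 ≤ ‖z‖ → LZ (ψ + u) z := by
  classical
  have hgood : Good ψ := ⟨hfin, fun x _ => Iset_C ▸ mem_univ x⟩
  let F : Finset ℂ := hfin.toFinset.filter (fun z => ‖z‖ ≤ 1 ∧ z ≠ 0)
  have hF : ∀ z, z ∈ F ↔ ¬ Reg ψ z ∧ ‖z‖ ≤ 1 ∧ z ≠ 0 := by intro z; simp [F]
  obtain ⟨v, v1, -, v3, v4, v5⟩ := kill F (by simp [hF]) (eps ψ)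
  have vlz : ∀ z, z ∉ U → 1 ≤ ‖z‖ → LZ v z := by
    intro z hz hz1
    apply v5
    intro p hp hs
    have hp' := (hF p).1 hp
    have := seg_norm_eq hs (hp'.2.1.trans hz1)
    rw [← this] at hp'
    exact hp'.1 (hψ z hz hz1).to_reg
  have hev : ∀ z, ‖z‖ ≤ 1 → z ≠ 0 → eps (ψ + v) z = 0 := by
    intro z hz hz0
    rw [hgood.eps_add v1.good]
    by_cases hzF : z ∈ F
    · rw [v3 z hzF]; grind
    · rw [v4 z hzF hz0, add_zero]
      apply eps_of_reg
      by_contra hr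
      exact hzF ((hF z).2 ⟨hr, hz, hz0⟩)
  obtain ⟨v', w1, w2, w3⟩ : ∃ v', CS v' ∧ (∀ z, z ∉ U → 1 ≤ ‖z‖ → LZ v' z) ∧
      ∀ z, ‖z‖ ≤ 1 → eps (ψ + v + v') z = 0 := by
    by_cases h0 : eps (ψ + v) 0 = 0
    · refine ⟨0, cs_zero, fun z _ _ => triv_zero z, fun z hz => ?_⟩
      rw [add_zero]
      by_cases hz0 : z = 0
      · rw [hz0, h0]
      · exact hev z hz hz0
    · obtain ⟨t, ht, htU⟩ : ∃ t : ℝ, 1 < t ∧ ∀ s ∈ Icc 1 t, (-(s:ℂ)) ∈ U := by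
        have hcont : Continuous (fun s : ℝ => (-(s:ℂ))) := by fun_prop
        have := hcont.continuousAt.eventually (hU.mem_nhds (show (-((1:ℝ):ℂ)) ∈ U by simpa using h1))
        obtain ⟨δ, hδ, h⟩ := Metric.eventually_nhds_iff_ball.1 this
        refine ⟨1 + δ/2, by linarith, fun s hs => h s ?_⟩
        rw [Metric.mem_ball, Real.dist_eq, abs_lt]
        constructor <;> linarith [hs.1, hs.2]
      have hb0 : (-(t:ℂ)) ≠ 0 := by
        rw [neg_ne_zero]; exact_mod_cast (by linarith : t ≠ 0)
      refine ⟨uu (-(t:ℂ)), cs_uu hb0, ?_, ?_⟩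
      · intro z hz hz1
        refine uu_lz' hb0 fun hs => hz ?_
        rw [segment_eq_image'] at hs
        obtain ⟨s, hs, rfl⟩ := hs
        simp only [sub_zero, zero_add, Complex.real_smul] at *
        have : (s:ℂ) * -(t:ℂ) = -((s*t : ℝ) : ℂ) := by push_cast; ring
        rw [this] at hz1 ⊢
        apply htU
        rw [norm_neg, Complex.norm_real, Real.norm_eq_abs, abs_of_nonneg (mul_nonneg hs.1 (by linarith))] at hz1
        exact ⟨hz1, by nlinarith [hs.2]⟩
      · intro z hz
        rw [(hgood.add v1.good).eps_add (good_uu hb0)]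
        by_cases hz0 : z = 0
        · subst hz0
          rw [eps_uu0 hb0, (zmod_cases _).resolve_left h0]; decide
        · rw [hev z hz hz0, zero_add]
          apply eps_of_reg (uu_reg hb0 hz0 _)
          rintro rfl
          rw [norm_neg, Complex.norm_real, Real.norm_eq_abs] at hz
          linarith [le_abs_self t]
  have hgood1 := (hgood.add v1.good).add w1.good
  let S : Set ℂ := {z | ¬ Reg (ψ + v + v') z} ∩ {z | ‖z‖ ≤ 1}
  have hS : S.Finite := hgood1.fin.subset inter_subset_left
  obtain ⟨χ, c1, c2⟩ := removal hS (φ := ψ + v + v') (fun p hp => eps_zero_iff.1 (w3 p hp.2))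
  have hχreg : ∀ z, ‖z‖ ≤ 1 → Reg χ z := by
    intro z hz
    by_cases hzS : z ∈ S
    · exact c1 z hzS
    · refine (c2 z hzS).reg ?_
      by_contra h
      exact hzS ⟨h, hz⟩
  have hu1 : ψ + χ = (v + v') + (ψ + v + v' + χ) := by
    rw [show (v + v') + (ψ + v + v' + χ) = (v + v') + ((v + v') + (ψ + χ)) by abel, cancel_fun₂]
  have hκ : CS (ψ + v + v' + χ) := by
    constructor
    · exact hS.subset fun z hz => by
        by_contra h; exact hz (c2 z h).to_reg
    · refine ⟨1, fun z hz => c2 z fun h => ?_⟩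
      rw [dist_zero_right] at hz
      exact absurd h.2 (not_le.2 hz)
  have hcs1 : CS (ψ + χ) := by rw [hu1]; exact (v1.add w1).add hκ
  have hχlz : ∀ z, z ∉ U → 1 ≤ ‖z‖ → LZ χ z := by
    intro z hz hz1
    have hlz : LZ (ψ + v + v') z := ((hψ z hz hz1).add (vlz z hz hz1)).add (w2 z hz hz1)
    exact (c2 z fun h => h.1 hlz.to_reg).triv hlz
  obtain ⟨c, hc⟩ : ∃ c, ∀ z, ‖z‖ ≤ 1 → Triv χ c z := by
    obtain ⟨δ, hδ, hsub⟩ := (isCompact_closedBall (0:ℂ) 1).exists_thickening_subset_open (isOpen_reg χ)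
      (fun z hz => hχreg z (by simpa using hz))
    rw [thickening_closedBall hδ zero_le_one] at hsub
    have hst : StarConvex ℝ (0:ℂ) (Metric.ball 0 (δ + 1)) :=
      (convex_ball _ _).starConvex (Metric.mem_ball_self (by linarith))
    obtain ⟨c, hc⟩ := star_SCo Metric.isOpen_ball hst χ hsub
    exact ⟨c, fun z hz => hc z (by rw [Metric.mem_ball, dist_zero_right]; linarith)⟩
  obtain ⟨u2, s1, s2, s3⟩ := sector c hU h1 (fun z hz hzU => (hc z hz.le).symm' (hχlz z hzU hz.ge))
  have hsum : ψ + (ψ + χ + u2) = χ + u2 := by rw [add_assoc, cancel_fun₂]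
  refine ⟨ψ + χ + u2, hcs1.add s1, ?_, ?_⟩
  · intro z hz
    rw [hsum]
    exact (lz_add_dl_iff.2 (hc z hz.le)).trans (s2 z hz)
  · intro z hz hz1
    rw [hsum]
    exact (hχlz z hz hz1).add (s3 z hz hz1)

lemma CS.rot {u : ℂ → ℂ → ZMod 2} (h : CS u) {w : ℂ} (hw : ‖w‖ = 1) : CS (pull (fun z => z * w) u) := by
  have hw0 : w ≠ 0 := by rintro rfl; simp at hw
  constructor
  · refine (h.fin.preimage (f := fun z => z * w) (mul_left_injective₀ hw0).injOn).subset ?_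
    intro z hz hr
    exact hz (Reg.pull hr (by fun_prop))
  · obtain ⟨R, hR⟩ := h.bdd
    refine ⟨R, fun z hz => LZ.pull (f := fun z => z * w) (hR _ ?_) (by fun_prop)⟩
    rw [dist_zero_right] at *
    rwa [norm_mul, hw, mul_one]

lemma absorb {ψ : ℂ → ℂ → ZMod 2} (hfin : {z | ¬ Reg ψ z}.Finite) {U : Set ℂ} (hU : IsOpen U)
    (hψ : ∀ z, z ∉ U → 1 ≤ ‖z‖ → LZ ψ z) :
    ∃ u, CS u ∧ (∀ z, ‖z‖ < 1 → LZ (ψ + u) z) ∧ ∀ z, z ∉ U → 1 ≤ ‖z‖ → LZ (ψ + u) z := by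
  by_cases hq : ∃ q ∈ U, ‖q‖ = 1
  · obtain ⟨q, hqU, hq⟩ := hq
    have hq0 : q ≠ 0 := by rintro rfl; simp at hq
    have hw : ‖-q‖ = 1 := by rwa [norm_neg]
    have hw' : ‖-q⁻¹‖ = 1 := by rw [norm_neg, norm_inv, hq, inv_one]
    have e1 : ∀ z : ℂ, z * -q⁻¹ * -q = z := by intro z; field_simp
    obtain ⟨u, u1, u2, u3⟩ := absorb1 (ψ := pull (fun z => z * -q) ψ) (U := (fun z => z * -q) ⁻¹' U)
      ((hfin.preimage (f := fun z => z * -q) (mul_left_injective₀ (neg_ne_zero.2 hq0)).injOn).subset (by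
        intro z hz hr
        exact hz (Reg.pull hr (by fun_prop))))
      (hU.preimage (by fun_prop)) (by simpa using hqU) (fun z hz hz1 =>
        LZ.pull (f := fun z => z * -q) (hψ _ hz (by rwa [norm_mul, hw, mul_one])) (by fun_prop))
    have key : ψ + pull (fun z => z * -q⁻¹) u = pull (fun z => z * -q⁻¹) (pull (fun z => z * -q) ψ + u) := by
      ext a b; simp only [pull, Pi.add_apply, e1]
    refine ⟨pull (fun z => z * -q⁻¹) u, u1.rot hw', ?_, ?_⟩
    · intro z hz
      rw [key]
      exact (u2 _ (by rwa [norm_mul, hw', mul_one])).pull (f := fun z => z * -q⁻¹) (by fun_prop)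
    · intro z hz hz1
      rw [key]
      exact (u3 _ (by simpa only [mem_preimage, e1] using hz) (by rwa [norm_mul, hw', mul_one])).pull (f := fun z => z * -q⁻¹) (by fun_prop)
  · push Not at hq
    have hsph : ∀ z, ‖z‖ = 1 → LZ ψ z := fun z hz => hψ z (fun h => hq z h hz) hz.ge
    have hcl : ∀ x ∈ closure (Metric.ball (0:ℂ) 1), x ∉ Metric.ball (0:ℂ) 1 → LZ ψ x := by
      intro x hx hx'
      rw [closure_ball _ one_ne_zero] at hx
      apply hsph
      simp at hx hx'; linarith
    refine ⟨cut (Metric.ball 0 1) ψ, ⟨?_, 1, ?_⟩, ?_, ?_⟩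
    · refine hfin.subset fun z hz hr => hz ?_
      by_cases h : z ∈ Metric.ball (0:ℂ) 1
      · exact (cut_in Metric.isOpen_ball ψ h).reg hr
      · exact (cut_out hcl h).to_reg
    · intro z hz
      exact cut_out hcl (by simp at hz ⊢; linarith)
    · intro z hz
      exact cut_in Metric.isOpen_ball ψ (by simpa using hz)
    · intro z hz hz1
      exact (hψ z hz hz1).add (cut_out hcl (by simpa using hz1))

end BM

namespace BM
open Set Topology Filter
variable {X Y M : Type} [TopologicalSpace X] [TopologicalSpace Y] [TopologicalSpace M]

lemma ext_good (e : OpenPartialHomeomorph X ℂ) (he : e.target = univ) {u : ℂ → ℂ → ZMod 2}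
    (hu : {z | ¬ Reg u z}.Finite) {φ : X → X → ZMod 2} (h1 : ∀ x ∈ e.source, LZ (φ + pull e u) x)
    (h2 : ∀ x ∉ e.source, LZ φ x) : Good φ := by
  have hs : ∀ x, ¬ Reg φ x → x ∈ e.source := fun x hx => by
    by_contra h; exact hx (h2 x h).to_reg
  constructor
  · refine (hu.image e.symm).subset ?_
    intro x hx
    refine ⟨e x, fun hr => hx ((h1 x (hs x hx)).symm.reg (Reg.pull hr (e.continuousAt (hs x hx)))), e.left_inv (hs x hx)⟩
  · exact fun x hx => ⟨e, hs x hx, he⟩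

lemma deg_ext (e : OpenPartialHomeomorph X ℂ) (he : e.target = univ) {u : ℂ → ℂ → ZMod 2}
    {φ : X → X → ZMod 2} (h1 : ∀ x ∈ e.source, LZ (φ + pull e u) x)
    (h2 : ∀ x ∉ e.source, LZ φ x) : deg φ = deg u := by
  unfold deg
  have hinj : InjOn e.symm univ := by
    have := e.symm.injOn; rwa [e.symm_source, he] at this
  have him : e.symm '' univ = e.source := by
    rw [← he]; exact e.symm_image_target_eq_source
  have a1 : ∀ z, eps u z = eps φ (e.symm z) := by
    intro z
    have hz : e.symm z ∈ e.source := e.map_target (he ▸ mem_univ z)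
    rw [eps_congr' (h1 _ hz), eps_pull e u hz, e.right_inv (he ▸ mem_univ z)]
  have a2 : ∑ᶠ z, eps u z = ∑ᶠ x ∈ e.source, eps φ x := by
    rw [← him, finsum_mem_image hinj]
    simp only [a1, mem_univ, finsum_true]
  rw [a2]
  refine finsum_congr fun x => ?_
  by_cases hx : x ∈ e.source
  · simp [hx]
  · simp [hx, eps_of_reg (h2 x hx).to_reg]

lemma parity_aux [T2Space X] (l : List (OpenPartialHomeomorph X ℂ)) :
    (∀ e ∈ l, e.target = univ) → ∀ φ : X → X → ZMod 2, Good φ →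
    (∀ x, ¬ LZ φ x → ∃ e ∈ l, x ∈ e.source ∧ ‖e x‖ < 1) → deg φ = 0 := by
  induction l with
  | nil =>
    intro _ φ _ h
    apply deg_zero_of_eps
    intro x
    apply eps_of_reg
    by_contra hr
    obtain ⟨e, he, -⟩ := h x (fun hlz => hr hlz.to_reg)
    simp at he
  | cons e l ih =>
    intro hl φ hφ h
    have he := hl e (by simp)
    have hco : Continuous e.symm := by
      rw [← continuousOn_univ, ← he]; exact e.continuousOn_symm
    let U : Set X := {x | ∃ e' ∈ l, x ∈ e'.source ∧ ‖e' x‖ < 1}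
    have hU : IsOpen U := by
      have : U = ⋃ e' ∈ l, (e'.source ∩ e' ⁻¹' (Metric.ball 0 1)) := by
        ext x; simp [U]; tauto
      rw [this]
      exact isOpen_biUnion fun e' _ => e'.isOpen_inter_preimage Metric.isOpen_ball
    have hsupp : ∀ x, ¬ LZ φ x → (x ∈ e.source ∧ ‖e x‖ < 1) ∨ x ∈ U := by
      intro x hx
      obtain ⟨e', he', h'⟩ := h x hx
      rcases List.mem_cons.1 he' with rfl | he'
      · exact Or.inl h'
      · exact Or.inr ⟨e', he', h'⟩
    have hsy : ∀ z, e.symm z ∈ e.source := fun z => e.map_target (he ▸ mem_univ z)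
    have hri : ∀ z, e (e.symm z) = z := fun z => e.right_inv (he ▸ mem_univ z)
    obtain ⟨u, u1, u2, u3⟩ := absorb (ψ := pull e.symm φ) (U := e.symm ⁻¹' U)
      (by
        refine (hφ.fin.preimage (f := e.symm) (Set.injOn_of_injective (fun a b hab => by
          rw [← hri a, hab, hri b]))).subset ?_
        intro z hz hr
        exact hz ((reg_pull_symm e (he ▸ mem_univ z)).2 hr))
      (hU.preimage hco) (by
        intro z hz hz1
        refine LZ.pull ?_ hco.continuousAt
        by_contra hn
        rcases hsupp _ hn with h3 | h3
        · rw [hri] at h3; linarith [h3.2]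
        · exact hz h3)
    obtain ⟨R, hR⟩ := u1.bdd
    obtain ⟨φu, k1, k2⟩ := ext_exists e he hR
    have hgu := ext_good e he u1.fin k1 k2
    have hd : deg φu = 0 := by rw [deg_ext e he k1 k2, planar u1]
    have hfin := ih (fun e' he' => hl e' (List.mem_cons_of_mem _ he')) (φ + φu) (hφ.add hgu) (by
      intro x hx
      by_contra hxU
      apply hx
      by_cases hxs : x ∈ e.source
      · have h3 : LZ (pull e (pull e.symm φ + u)) x := by
          refine LZ.pull ?_ (e.continuousAt hxs)
          by_cases hn : ‖e x‖ < 1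
          · exact u2 _ hn
          · refine u3 _ ?_ (not_lt.1 hn)
            rwa [mem_preimage, e.left_inv hxs]
        have h4 := (pull_pull_symm e φ hxs).add (k1 x hxs).symm
        have h5 : pull e (pull e.symm φ) + φ + (pull e u + φu) = pull e (pull e.symm φ + u) + (φ + φu) := by
          ext a b; simp only [pull, Pi.add_apply]; ring
        rw [h5] at h4
        exact h4.triv h3
      · refine LZ.add ?_ (k2 x hxs)
        by_contra hn
        rcases hsupp _ hn with h3 | h3
        · exact hxs h3.1
        · exact hxU h3)
    rw [hφ.deg_add hgu, hd, add_zero] at hfin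
    exact hfin

theorem parity [T2Space X] [CompactSpace X] {φ : X → X → ZMod 2} (hφ : Good φ)
    (h : ∀ x, x ∉ Iset X → LZ φ x) : deg φ = 0 := by
  have hcomp : IsCompact {x | ¬ LZ φ x} := (isOpen_triv φ 0).isClosed_compl.isCompact
  have hI : ∀ x : X, ¬ LZ φ x → x ∈ Iset X := fun x hx => by
    by_contra h'; exact hx (h x h')
  rcases isEmpty_or_nonempty (OpenPartialHomeomorph X ℂ) with hE | hE
  · refine deg_zero_of_eps fun x => eps_of_reg (h x ?_).to_reg
    rintro ⟨e, -⟩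
    exact hE.false e
  choose! e e1 e2 e3 using fun (x : X) (hx : x ∈ Iset X) => Iset_center hx
  obtain ⟨t, ht, hsub⟩ := hcomp.elim_nhds_subcover (fun x => (e x).source ∩ (e x) ⁻¹' (Metric.ball 0 1)) (by
    intro x hx
    refine ((e x).isOpen_inter_preimage Metric.isOpen_ball).mem_nhds ⟨e1 x (hI x hx), ?_⟩
    rw [mem_preimage, e3 x (hI x hx)]
    simp)
  refine parity_aux (t.toList.map e) ?_ φ hφ ?_
  · intro e' he'
    obtain ⟨x, hx, rfl⟩ := List.mem_map.1 he'
    exact e2 x (hI x (ht x (by simpa using hx)))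
  · intro x hx
    obtain ⟨y, hy, hxy⟩ := mem_iUnion₂.1 (hsub hx)
    exact ⟨e y, List.mem_map.2 ⟨y, by simpa using hy, rfl⟩, hxy.1, by simpa using hxy.2⟩

lemma no_single [T2Space X] [CompactSpace X] {φ : X → X → ZMod 2} (hφ : Good φ)
    (h : ∀ x, x ∉ Iset X → LZ φ x) {a : X} (ha : eps φ a = 1) (h0 : ∀ x, x ≠ a → eps φ x = 0) : False := by
  have := parity hφ h
  unfold deg at this
  rw [finsum_eq_single _ a h0, ha] at this
  exact one_ne_zero this

end BM

namespace BM
open Set Topology Filter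
variable {X Y M : Type} [TopologicalSpace X] [TopologicalSpace Y] [TopologicalSpace M]

lemma ext_K [T2Space X] [CompactSpace X] (e : OpenPartialHomeomorph X M) {K : Set M} (hK : IsCompact K)
    (hKt : K ⊆ e.target) {ψ : M → M → ZMod 2} (hψ : ∀ z ∉ K, LZ ψ z) :
    ∃ φ : X → X → ZMod 2, (∀ x ∈ e.source, LZ (φ + pull e ψ) x) ∧
      ∀ x, ¬ LZ φ x → x ∈ e.source ∧ e x ∈ K := by
  have hK' : IsCompact (e.symm '' K) := hK.image_of_continuousOn (e.continuousOn_symm.mono hKt)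
  have hsub : e.symm '' K ⊆ e.source := by
    rintro _ ⟨z, hz, rfl⟩; exact e.map_target (hKt hz)
  obtain ⟨N, hN, hKN, hNs⟩ := normal_exists_closure_subset hK'.isClosed e.open_source hsub
  have hlz : ∀ x ∈ e.source, e x ∉ K → LZ (pull e ψ) x := fun x hx hxK =>
    (hψ _ hxK).pull (e.continuousAt hx)
  have hNK : ∀ x ∈ e.source, x ∉ N → e x ∉ K := fun x hx hxN hxK =>
    hxN (hKN ⟨e x, hxK, e.left_inv hx⟩)
  have hcl : ∀ x ∈ closure N, x ∉ N → LZ (pull e ψ) x := fun x hx hxN =>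
    hlz x (hNs hx) (hNK x (hNs hx) hxN)
  refine ⟨cut N (pull e ψ), ?_, ?_⟩
  · intro x hx
    by_cases hxN : x ∈ N
    · exact (cut_in hN _ hxN).symm
    · exact (cut_out hcl hxN).add (hlz x hx (hNK x hx hxN))
  · intro x hx
    by_cases hxN : x ∈ N
    · have hs := hNs (subset_closure hxN)
      refine ⟨hs, ?_⟩
      by_contra h
      exact hx ((cut_in hN _ hxN).triv (hlz x hs h))
    · exact (hx (cut_out hcl hxN)).elim

lemma disc_shrink (e : OpenPartialHomeomorph X ℂ) {x : X} (hx : x ∈ e.source) {G : Set X} (hG : IsOpen G)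
    (hxG : x ∈ G) : ∃ e' : OpenPartialHomeomorph X ℂ, e'.target = univ ∧ x ∈ e'.source ∧ e' x = 0 ∧
      e'.source ⊆ G := by
  let e1 := e.restrOpen G hG
  have hs : e1.source = e.source ∩ G := rfl
  have hx1 : x ∈ e1.source := ⟨hx, hxG⟩
  obtain ⟨r, hr, hball⟩ := Metric.isOpen_iff.1 e1.open_target _ (e1.map_source hx1)
  let b := (OpenPartialHomeomorph.univBall (e1 x) r).symm
  have hbs : b.source = Metric.ball (e1 x) r := by
    simp [b, OpenPartialHomeomorph.univBall_target _ hr]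
  have hbt : b.target = univ := by simp [b]
  refine ⟨e1.trans b, ?_, ?_, ?_, ?_⟩
  · rw [OpenPartialHomeomorph.trans_target, hbt, univ_inter, eq_univ_iff_forall]
    intro z
    apply hball
    rw [← hbs]
    exact b.map_target (hbt ▸ mem_univ z)
  · rw [OpenPartialHomeomorph.trans_source]
    refine ⟨hx1, ?_⟩
    rw [mem_preimage, hbs]; exact Metric.mem_ball_self hr
  · have := OpenPartialHomeomorph.univBall_symm_apply_center (e1 x) r
    rw [OpenPartialHomeomorph.coe_trans, Function.comp_apply]
    exact this
  · rw [OpenPartialHomeomorph.trans_source]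
    exact fun y hy => hy.1.2

lemma source_sub_Iset (e : OpenPartialHomeomorph X ℂ) : e.source ⊆ Iset X := by
  intro x hx
  obtain ⟨e', h1, h2, -⟩ := disc_shrink e hx isOpen_univ (mem_univ x)
  exact ⟨e', h2, h1⟩

lemma disc_chart {x : X} (hx : x ∈ Iset X) {G : Set X} (hG : IsOpen G)
    (hxG : x ∈ G) : ∃ e' : OpenPartialHomeomorph X ℂ, e'.target = univ ∧ x ∈ e'.source ∧ e' x = 0 ∧
      e'.source ⊆ G := by
  obtain ⟨e, hx, -⟩ := hx
  exact disc_shrink e hx hG hxG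

/-- inclusion of the open upper half plane -/
noncomputable def incl : OpenPartialHomeomorph HP ℂ where
  toFun z := z
  invFun := hpr
  source := {z | 0 < z.1.im}
  target := {z | 0 < z.im}
  map_source' z hz := hz
  map_target' z hz := by
    simp only [mem_setOf_eq, hpr]; exact lt_max_of_lt_left hz
  left_inv' z _ := hpr_coe z
  right_inv' z hz := by
    have hz' : 0 < z.im := hz
    apply Complex.ext <;> simp [hpr, hz'.le]
  open_source := isOpen_lt continuous_const (Complex.continuous_im.comp continuous_subtype_val)
  open_target := isOpen_lt continuous_const Complex.continuous_im
  continuousOn_toFun := continuous_subtype_val.continuousOn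
  continuousOn_invFun := continuous_hpr.continuousOn

lemma hpr_val {z : ℂ} (hz : 0 ≤ z.im) : (hpr z : ℂ) = z := by
  apply Complex.ext <;> simp [hpr, hz]

/-- rescaling a half ball onto the half plane -/
noncomputable def hball (p : HP) (hp : p.1.im = 0) (r : ℝ) (hr : 0 < r) : OpenPartialHomeomorph HP HP where
  toFun z := hpr (((r - ‖z.1 - p.1‖)⁻¹ : ℝ) * (z.1 - p.1))
  invFun z := hpr (p + ((r / (1 + ‖z.1‖) : ℝ)) * z.1)
  source := {z | ‖z.1 - p.1‖ < r}
  target := univ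
  map_source' z hz := mem_univ _
  map_target' z _ := by
    have h1 : 0 ≤ (p.1 + ((r / (1 + ‖z.1‖) : ℝ)) * z.1).im := by
      rw [Complex.add_im, hp, Complex.im_ofReal_mul, zero_add]
      have := z.2; positivity
    simp only [mem_setOf_eq]
    rw [hpr_val h1, add_sub_cancel_left, norm_mul, Complex.norm_real, Real.norm_eq_abs, abs_of_pos (by positivity), div_mul_eq_mul_div,
      div_lt_iff₀ (by positivity)]
    nlinarith [norm_nonneg z.1]
  left_inv' z hz := by
    have hz' : ‖z.1 - p.1‖ < r := hz
    have hpos : 0 < r - ‖z.1 - p.1‖ := by linarith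
    apply Subtype.ext
    have h1 : 0 ≤ ((((r - ‖z.1 - p.1‖)⁻¹ : ℝ) : ℂ) * (z.1 - p.1)).im := by
      rw [Complex.im_ofReal_mul, Complex.sub_im, hp, sub_zero]
      have := z.2; positivity
    have h2 : p.1 + ((r / (1 + ‖(((r - ‖z.1 - p.1‖)⁻¹ : ℝ) : ℂ) * (z.1 - p.1)‖) : ℝ)) * ((((r - ‖z.1 - p.1‖)⁻¹ : ℝ) : ℂ) * (z.1 - p.1)) = z.1 := by
      rw [norm_mul, Complex.norm_real, Real.norm_eq_abs, abs_of_pos (by positivity), ← mul_assoc, ← Complex.ofReal_mul]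
      have : (r / (1 + (r - ‖z.1 - p.1‖)⁻¹ * ‖z.1 - p.1‖)) * (r - ‖z.1 - p.1‖)⁻¹ = 1 := by
        field_simp
        ring
      rw [this, Complex.ofReal_one, one_mul, add_sub_cancel]
    rw [hpr_val h1, h2, hpr_val z.2]
  right_inv' z _ := by
    apply Subtype.ext
    have hn := norm_nonneg z.1
    have h1 : 0 ≤ (p.1 + ((r / (1 + ‖z.1‖) : ℝ)) * z.1).im := by
      rw [Complex.add_im, hp, Complex.im_ofReal_mul, zero_add]
      have := z.2; positivity
    have h2 : (((r - ‖((r / (1 + ‖z.1‖) : ℝ)) * z.1‖)⁻¹ : ℝ) : ℂ) * (((r / (1 + ‖z.1‖) : ℝ)) * z.1) = z.1 := by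
      rw [norm_mul, Complex.norm_real, Real.norm_eq_abs, abs_of_pos (by positivity), ← mul_assoc, ← Complex.ofReal_mul]
      have : (r - r / (1 + ‖z.1‖) * ‖z.1‖)⁻¹ * (r / (1 + ‖z.1‖)) = 1 := by
        have : r - r / (1 + ‖z.1‖) * ‖z.1‖ = r / (1 + ‖z.1‖) := by field_simp; ring
        rw [this]; exact inv_mul_cancel₀ (by positivity)
      rw [this, Complex.ofReal_one, one_mul]
    rw [hpr_val h1, add_sub_cancel_left, h2, hpr_val z.2]
  open_source := isOpen_lt (by fun_prop) continuous_const
  open_target := isOpen_univ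
  continuousOn_toFun := by
    refine continuous_hpr.comp_continuousOn ?_
    refine ContinuousOn.mul ?_ (by fun_prop)
    refine Complex.continuous_ofReal.comp_continuousOn ?_
    refine ContinuousOn.inv₀ (by fun_prop) ?_
    intro z (hz : ‖z.1 - p.1‖ < r)
    linarith
  continuousOn_invFun := by
    refine (continuous_hpr.comp ?_).continuousOn
    refine continuous_const.add (Continuous.mul ?_ continuous_subtype_val)
    refine Complex.continuous_ofReal.comp ?_
    refine continuous_const.div (by fun_prop) ?_
    intro z
    have := norm_nonneg z.1
    linarith

lemma half_shrink (e : OpenPartialHomeomorph X HP) {x : X} (hx : x ∈ e.source) (h0 : (e x).1.im = 0)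
    {G : Set X} (hG : IsOpen G)
    (hxG : x ∈ G) : ∃ e' : OpenPartialHomeomorph X HP, e'.target = univ ∧ x ∈ e'.source ∧ (e' x).1 = 0 ∧
      e'.source ⊆ G := by
  let e1 := e.restrOpen G hG
  have hx1 : x ∈ e1.source := ⟨hx, hxG⟩
  obtain ⟨r, hr, hball'⟩ := Metric.isOpen_iff.1 e1.open_target _ (e1.map_source hx1)
  let b := hball (e1 x) h0 r hr
  have hbs : b.source = Metric.ball (e1 x) r := by
    ext z
    rw [Metric.mem_ball, Subtype.dist_eq, Complex.dist_eq]; rfl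
  have hbt : b.target = univ := rfl
  refine ⟨e1.trans b, ?_, ?_, ?_, ?_⟩
  · rw [OpenPartialHomeomorph.trans_target, hbt, univ_inter, eq_univ_iff_forall]
    intro z
    apply hball'
    rw [← hbs]
    exact b.map_target (hbt ▸ mem_univ z)
  · rw [OpenPartialHomeomorph.trans_source]
    refine ⟨hx1, ?_⟩
    rw [mem_preimage, hbs]; exact Metric.mem_ball_self hr
  · change (hpr (((r - ‖(e1 x).1 - (e1 x).1‖)⁻¹ : ℝ) * ((e1 x).1 - (e1 x).1))).1 = 0
    rw [sub_self, mul_zero, hpr_val (by simp)]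
  · rw [OpenPartialHomeomorph.trans_source]
    exact fun y hy => hy.1.2

def IsM (X : Type) [TopologicalSpace X] : Prop := ∀ x : X, ∃ e : OpenPartialHomeomorph X HP, x ∈ e.source

lemma up_Iset (e : OpenPartialHomeomorph X HP) {x : X} (hx : x ∈ e.source) (h : 0 < (e x).1.im) :
    x ∈ Iset X := source_sub_Iset (e.trans incl) ⟨hx, h⟩

lemma half_chart (hX : IsM X) {x : X} (hx : x ∉ Iset X) {G : Set X} (hG : IsOpen G)
    (hxG : x ∈ G) : ∃ e' : OpenPartialHomeomorph X HP, e'.target = univ ∧ x ∈ e'.source ∧ (e' x).1 = 0 ∧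
      e'.source ⊆ G := by
  obtain ⟨e, he⟩ := hX x
  refine half_shrink e he ?_ hG hxG
  by_contra h
  exact hx (up_Iset e he (lt_of_le_of_ne (e x).2 (Ne.symm h)))

def hpI : HP := ⟨Complex.I, by simp⟩

lemma half_end [T2Space X] [CompactSpace X] (e : OpenPartialHomeomorph X HP) (he : e.target = univ) :
    ∃ φ : X → X → ZMod 2, Good φ ∧ e.symm hpI ∈ Iset X ∧ eps φ (e.symm hpI) = 1 ∧ (∀ x, x ≠ e.symm hpI → eps φ x = 0) ∧
      ∀ x, ¬ LZ φ x → x ∈ e.source ∧ (e x).1.re = 0 := by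
  let j : HP → ℂ := fun z => z.1 / Complex.I
  have hj : Continuous j := continuous_subtype_val.div_const _
  have jre : ∀ z, (j z).re = z.1.im := by intro z; simp [j]
  have jim : ∀ z, (j z).im = - z.1.re := by intro z; simp [j]
  let ψ : HP → HP → ZMod 2 := pull j (W 1)
  let K : Set HP := hpr '' ((fun t : ℝ => (t : ℂ) * Complex.I) '' Icc 0 1)
  have hK : IsCompact K := (isCompact_Icc.image (by fun_prop)).image continuous_hpr
  have hKre : ∀ z ∈ K, z.1.re = 0 := by
    rintro _ ⟨_, ⟨t, ht, rfl⟩, rfl⟩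
    rw [hpr_val (by simpa using ht.1)]; simp
  have hψK : ∀ z ∉ K, LZ ψ z := by
    intro z hz
    refine LZ.pull (f := j) (W_lz ?_) hj.continuousAt
    rw [jre, jim]
    by_contra! h
    apply hz
    refine ⟨z.1, ⟨z.1.im, ⟨z.2, h.1⟩, ?_⟩, hpr_coe z⟩
    apply Complex.ext
    · simp; linarith [h.2]
    · simp
  obtain ⟨φ, k1, k2⟩ := ext_K e hK (he ▸ subset_univ _) hψK
  have hsy : e.symm hpI ∈ e.source := e.map_target (he ▸ mem_univ _)
  have hri : e (e.symm hpI) = hpI := e.right_inv (he ▸ mem_univ _)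
  have hI : e.symm hpI ∈ Iset X := up_Iset e hsy (by rw [hri]; simp [hpI])
  have hreg : ∀ x, x ≠ e.symm hpI → Reg φ x := by
    intro x hx
    by_cases hxs : x ∈ e.source
    · refine (k1 x hxs).symm.reg (Reg.pull ?_ (e.continuousAt hxs))
      refine Reg.pull (f := j) (W_reg ?_) hj.continuousAt
      intro h
      apply hx
      rw [← e.left_inv hxs]
      congr 1
      apply Subtype.ext
      have h1 := congrArg Complex.re h
      have h2 := congrArg Complex.im h
      rw [jre] at h1; rw [jim] at h2
      apply Complex.ext
      · simp [hpI] at h2 ⊢; exact h2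
      · simpa [hpI] using h1
    · by_contra h
      exact hxs (k2 x fun hlz => h hlz.to_reg).1
  refine ⟨φ, ⟨(finite_singleton (e.symm hpI)).subset ?_, ?_⟩, hI, ?_, fun x hx => eps_of_reg (hreg x hx), ?_⟩
  · intro x hx
    by_contra h
    exact hx (hreg x h)
  · intro x hx
    by_cases h : x = e.symm hpI
    · rw [h]; exact hI
    · exact (hx (hreg x h)).elim
  · rw [eps_congr' (k1 _ hsy), eps_pull e ψ hsy, hri]
    have hpos : (0:ℝ) < hpI.1.im := by simp [hpI]
    let e2 := incl.transHomeomorph (Homeomorph.mulRight₀ (Complex.I)⁻¹ (inv_ne_zero Complex.I_ne_zero))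
    have h3 := eps_pull e2 (W 1) (x := hpI) hpos
    have h4 : pull e2 (W 1) = ψ := by
      ext a b
      simp only [pull, ψ, j, e2, div_eq_mul_inv]; rfl
    rw [h4] at h3
    rw [h3]
    have h5 : e2 hpI = ((1:ℝ):ℂ) := by
      change Complex.I * Complex.I⁻¹ = _
      rw [mul_inv_cancel₀ Complex.I_ne_zero]; simp
    rw [h5]
    exact eps_one_iff.2 (W_odd 1)
  · intro x hx
    exact ⟨(k2 x hx).1, hKre _ (k2 x hx).2⟩

end BM

namespace BM
open Set Topology Filter
variable {X Y M : Type} [TopologicalSpace X] [TopologicalSpace Y] [TopologicalSpace M]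

open Classical in
noncomputable def ind (a y : X) : ZMod 2 := if y = a then 1 else 0

lemma ind_self (a : X) : ind a a = 1 := if_pos rfl
lemma ind_ne {a y : X} (h : y ≠ a) : ind a y = 0 := if_neg h

lemma end_aux [T2Space X] [CompactSpace X] (e : OpenPartialHomeomorph X HP) (he : e.target = univ) {x : X}
    (hx : x ∈ e.source) (h0 : (e x).1 = 0) : ∃ φ : X → X → ZMod 2, ∃ a ∈ e.source, a ∈ Iset X ∧ Good φ ∧
      (∀ y, eps φ y = ind a y) ∧ (∀ y, ¬ LZ φ y → y ∈ e.source) ∧ ∀ y, ¬ LZ φ y → y ∉ Iset X → y = x := by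
  obtain ⟨φ, h1, h2, h3, h4, h5⟩ := half_end e he
  refine ⟨φ, e.symm hpI, e.map_target (he ▸ mem_univ _), h2, h1, ?_, fun y hy => (h5 y hy).1, ?_⟩
  · intro y
    by_cases hy : y = e.symm hpI
    · rw [hy, h3, ind_self]
    · rw [h4 y hy, ind_ne hy]
  · intro y hy hyI
    obtain ⟨hys, hre⟩ := h5 y hy
    apply e.injOn hys hx
    apply Subtype.ext
    rw [h0]
    apply Complex.ext hre
    by_contra h
    exact hyI (up_Iset e hys (lt_of_le_of_ne (e y).2 (Ne.symm h)))

lemma bottom [T2Space X] [CompactSpace X] (e : OpenPartialHomeomorph X HP) {x : X} (hx : x ∈ e.source)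
    (h0 : (e x).1.im = 0) : x ∉ Iset X := by
  intro hI
  obtain ⟨e', h1, h2, h3, -⟩ := half_shrink e hx h0 isOpen_univ (mem_univ x)
  obtain ⟨φ, a, ha, haI, hg, he, -, hl⟩ := end_aux e' h1 h2 h3
  refine no_single hg ?_ (a := a) (by rw [he, ind_self]) (fun y hy => by rw [he, ind_ne hy])
  intro y hy
  by_contra h
  rw [hl y h hy] at hy
  exact hy hI

lemma End_exists [T2Space X] [CompactSpace X] (hX : IsM X) {x : X} (hx : x ∉ Iset X) {N : Set X}
    (hN : IsOpen N) (hxN : x ∈ N) : ∃ φ : X → X → ZMod 2, ∃ a ∈ N, a ∈ Iset X ∧ Good φ ∧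
      (∀ y, eps φ y = ind a y) ∧ (∀ y, ¬ LZ φ y → y ∈ N) ∧ ∀ y, ¬ LZ φ y → y ∉ Iset X → y = x := by
  obtain ⟨e, h1, h2, h3, h4⟩ := half_chart hX hx hN hxN
  obtain ⟨φ, a, ha, haI, hg, he, hs, hl⟩ := end_aux e h1 h2 h3
  exact ⟨φ, a, h4 ha, haI, hg, he, fun y hy => h4 (hs y hy), hl⟩

lemma Iset_dense [T2Space X] [CompactSpace X] (hX : IsM X) {V : Set X} (hV : IsOpen V) {x : X} (hx : x ∈ V) :
    ∃ b ∈ V, b ∈ Iset X := by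
  by_cases hxI : x ∈ Iset X
  · exact ⟨x, hx, hxI⟩
  · obtain ⟨φ, a, ha, haI, -⟩ := End_exists hX hxI hV hx
    exact ⟨a, ha, haI⟩

lemma seg_class (p q : ℂ) : ∃ ψ : ℂ → ℂ → ZMod 2, {z | ¬ Reg ψ z}.Finite ∧ (∀ z ∉ segment ℝ p q, LZ ψ z) ∧
    ∀ z, eps ψ z = ind p z + ind q z := by
  by_cases hpq : p = q
  · subst hpq
    refine ⟨0, good_zero.fin, fun z _ => triv_zero z, fun z => ?_⟩
    rw [eps_of_reg ⟨0, triv_zero z⟩]; grind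
  have hne : q - p ≠ 0 := sub_ne_zero.2 (Ne.symm hpq)
  let τ : ℂ ≃ₜ ℂ := Homeomorph.addRight (-p)
  have hτ : ∀ z, τ z = z - p := fun z => (sub_eq_add_neg z p).symm
  refine ⟨pull τ (uu (q - p)), ?_, ?_, ?_⟩
  · refine ((good_uu hne).fin.preimage (f := τ) τ.injective.injOn).subset ?_
    intro z hz hr
    exact hz (Reg.pull hr τ.continuous.continuousAt)
  · intro z hz
    refine LZ.pull (uu_lz' hne ?_) τ.continuous.continuousAt
    intro hs
    apply hz
    rw [segment_eq_image'] at hs ⊢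
    obtain ⟨t, ht, h⟩ := hs
    refine ⟨t, ht, ?_⟩
    simp only [sub_zero, zero_add, hτ] at h
    simp only [h]; ring
  · intro z
    have h3 := eps_pull τ.toOpenPartialHomeomorph (uu (q - p)) (x := z) (by simp)
    have h3 : eps (pull τ (uu (q - p))) z = eps (uu (q-p)) (τ z) := h3
    rw [h3, hτ]
    by_cases hp : z = p
    · rw [hp, sub_self, eps_uu0 hne, ind_self, ind_ne hpq, add_zero]
    by_cases hq : z = q
    · rw [hq, eps_uua hne, ind_self, ind_ne (Ne.symm hpq), zero_add]
    rw [ind_ne hp, ind_ne hq, add_zero, eps_of_reg]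
    exact uu_reg hne (sub_ne_zero.2 hp) (fun h => hq (sub_left_injective h))

lemma isCompact_seg (p q : ℂ) : IsCompact (segment ℝ p q) := by
  rw [segment_eq_image']
  exact isCompact_Icc.image (by fun_prop)

def Link (O : Set X) (a b : X) : Prop := ∃ l : X → X → ZMod 2, Good l ∧ (∀ x, ¬ LZ l x → x ∈ O ∧ x ∈ Iset X) ∧
  ∀ x, eps l x = ind a x + ind b x

lemma link_local [T2Space X] [CompactSpace X] (e : OpenPartialHomeomorph X ℂ) (hcv : Convex ℝ e.target)
    {a b : X} (ha : a ∈ e.source) (hb : b ∈ e.source) : Link e.source a b := by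
  obtain ⟨ψ, h1, h2, h3⟩ := seg_class (e a) (e b)
  obtain ⟨φ, k1, k2⟩ := ext_K e (isCompact_seg (e a) (e b))
    (hcv.segment_subset (e.map_source ha) (e.map_source hb)) h2
  have hs : ∀ x, ¬ Reg φ x → x ∈ e.source := fun x hx => (k2 x (fun h => hx h.to_reg)).1
  refine ⟨φ, ⟨?_, fun x hx => source_sub_Iset e (hs x hx)⟩, fun x hx => ⟨(k2 x hx).1, source_sub_Iset e (k2 x hx).1⟩, ?_⟩
  · refine (h1.image e.symm).subset ?_
    intro x hx
    refine ⟨e x, fun hr => hx ((k1 x (hs x hx)).symm.reg (Reg.pull hr (e.continuousAt (hs x hx)))), e.left_inv (hs x hx)⟩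
  · intro x
    by_cases hx : x ∈ e.source
    · rw [eps_congr' (k1 x hx), eps_pull e ψ hx, h3]
      have hh : ∀ c ∈ e.source, ind (e c) (e x) = ind c x := by
        intro c hc
        by_cases h : x = c
        · rw [h, ind_self, ind_self]
        · rw [ind_ne h, ind_ne (fun h' => h (e.injOn hx hc h'))]
      rw [hh a ha, hh b hb]
    · have hlz : LZ φ x := by
        by_contra h
        exact hx (k2 x h).1
      rw [eps_of_reg hlz.to_reg, ind_ne, ind_ne, add_zero]
      · rintro rfl; exact hx hb
      · rintro rfl; exact hx ha

lemma Link.mono {O O' : Set X} {a b : X} (h : Link O a b) (hO : O ⊆ O') : Link O' a b := by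
  obtain ⟨l, h1, h2, h3⟩ := h
  exact ⟨l, h1, fun x hx => ⟨hO (h2 x hx).1, (h2 x hx).2⟩, h3⟩

lemma Link.trans [T1Space X] {O : Set X} {a b c : X} (h : Link O a b) (h' : Link O b c) : Link O a c := by
  obtain ⟨l, h1, h2, h3⟩ := h
  obtain ⟨l', h1', h2', h3'⟩ := h'
  refine ⟨l + l', h1.add h1', ?_, ?_⟩
  · intro x hx
    by_cases h : LZ l x
    · by_cases h' : LZ l' x
      · exact (hx (h.add h')).elim
      · exact h2' x h'
    · exact h2 x h
  · intro x
    rw [h1.eps_add h1', h3, h3']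
    generalize ind b x = β; grind

lemma link_nbhd [T2Space X] [CompactSpace X] (hX : IsM X) {O : Set X} (hO : IsOpen O) {x : X} (hx : x ∈ O) :
    ∃ V, IsOpen V ∧ x ∈ V ∧ ∀ a ∈ V, a ∈ Iset X → ∀ b ∈ V, b ∈ Iset X → Link O a b := by
  by_cases hxI : x ∈ Iset X
  · obtain ⟨e, h1, h2, -, h4⟩ := disc_chart hxI hO hx
    refine ⟨e.source, e.open_source, h2, fun a ha _ b hb _ => ?_⟩
    exact (link_local e (h1 ▸ convex_univ) ha hb).mono h4
  · obtain ⟨e, h1, h2, -, h4⟩ := half_chart hX hxI hO hx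
    refine ⟨e.source, e.open_source, h2, fun a ha haI b hb hbI => ?_⟩
    have up : ∀ a ∈ e.source, a ∈ Iset X → 0 < (e a).1.im := by
      intro a ha haI
      refine lt_of_le_of_ne (e a).2 fun h => bottom e ha h.symm haI
    have hcv : Convex ℝ (e.trans incl).target := by
      have : (e.trans incl).target = {z : ℂ | 0 < z.im} := by
        rw [OpenPartialHomeomorph.trans_target, h1, preimage_univ, inter_univ]; rfl
      rw [this]
      exact convex_halfSpace_im_gt 0
    refine (link_local (e.trans incl) hcv (a := a) (b := b) ⟨ha, up a ha haI⟩ ⟨hb, up b hb hbI⟩).mono ?_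
    exact fun y hy => h4 hy.1

theorem link [T2Space X] [CompactSpace X] (hX : IsM X) {O : Set X} (hO : IsOpen O) (hc : IsPreconnected O)
    {a b : X} (ha : a ∈ O) (haI : a ∈ Iset X) (hb : b ∈ O) (hbI : b ∈ Iset X) : Link O a b := by
  let A : Set X := {x | ∃ V, IsOpen V ∧ x ∈ V ∧ V ⊆ O ∧ ∀ c ∈ V, c ∈ Iset X → Link O a c}
  let B : Set X := {x | ∃ V, IsOpen V ∧ x ∈ V ∧ V ⊆ O ∧ ∀ c ∈ V, c ∈ Iset X → ¬ Link O a c}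
  have hA : IsOpen A := isOpen_iff_forall_mem_open.2 fun x ⟨V, h1, h2, h3⟩ => ⟨V, fun y hy => ⟨V, h1, hy, h3⟩, h1, h2⟩
  have hB : IsOpen B := isOpen_iff_forall_mem_open.2 fun x ⟨V, h1, h2, h3⟩ => ⟨V, fun y hy => ⟨V, h1, hy, h3⟩, h1, h2⟩
  have nb : ∀ x ∈ O, ∃ V, IsOpen V ∧ x ∈ V ∧ V ⊆ O ∧ ∀ a ∈ V, a ∈ Iset X → ∀ b ∈ V, b ∈ Iset X → Link O a b := by
    intro x hx
    obtain ⟨V, h1, h2, h3⟩ := link_nbhd hX hO hx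
    exact ⟨V ∩ O, h1.inter hO, ⟨h2, hx⟩, inter_subset_right, fun a ha haI b hb hbI => h3 a ha.1 haI b hb.1 hbI⟩
  by_contra hno
  have hcov : O ⊆ A ∪ B := by
    intro x hx
    obtain ⟨V, h1, h2, h3, h4⟩ := nb x hx
    by_cases h : ∃ c ∈ V, c ∈ Iset X ∧ Link O a c
    · obtain ⟨c, hc, hcI, hl⟩ := h
      exact Or.inl ⟨V, h1, h2, h3, fun d hd hdI => hl.trans (h4 c hc hcI d hd hdI)⟩
    · push Not at h
      exact Or.inr ⟨V, h1, h2, h3, h⟩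
  have haA : a ∈ A := by
    obtain ⟨V, h1, h2, h3, h4⟩ := nb a ha
    exact ⟨V, h1, h2, h3, fun c hc hcI => h4 a h2 haI c hc hcI⟩
  have hbB : b ∈ B := by
    rcases hcov hb with ⟨V, h1, h2, h3, h4⟩ | h
    · exact (hno (h4 b h2 hbI)).elim
    · exact h
  obtain ⟨x, hx, ⟨V, h1, h2, h3, h4⟩, ⟨V', h1', h2', h3', h4'⟩⟩ := hc A B hA hB hcov ⟨a, ha, haA⟩ ⟨b, hb, hbB⟩
  obtain ⟨c, hc, hcI⟩ := Iset_dense hX (h1.inter h1') (x := x) ⟨h2, h2'⟩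
  exact h4' c hc.2 hcI (h4 c hc.1 hcI)

end BM

namespace BM
open Set Topology Filter
variable {X Y M : Type} [TopologicalSpace X] [TopologicalSpace Y] [TopologicalSpace M]

structure Setup (h : X → Y) : Prop where
  hX : IsM X
  hY : IsM Y
  g : Nonempty (X ≃ₜ Y)
  hc : Continuous h
  hs : Function.Surjective h
  hm : ∀ y : Y, IsPreconnected (h ⁻¹' {y})

lemma SCo_nbhd (hX : IsM X) (x : X) : ∃ U : Set X, IsOpen U ∧ x ∈ U ∧ SCo U := by
  by_cases hx : x ∈ Iset X
  · obtain ⟨e, h1, h2, -⟩ := disc_chart hx isOpen_univ (mem_univ x)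
    exact ⟨e.source, e.open_source, h2, SCo_chart SCo_univ_C e h1⟩
  · obtain ⟨e, h1, h2, -⟩ := half_chart hX hx isOpen_univ (mem_univ x)
    exact ⟨e.source, e.open_source, h2, SCo_chart SCo_univ_HP e h1⟩

section
variable [T2Space X] [CompactSpace X] [T2Space Y] [CompactSpace Y] [LocallyConnectedSpace X] [LocallyConnectedSpace Y]
variable {h : X → Y}

lemma Setup.hcl (S : Setup h) : IsClosedMap h := S.hc.isClosedMap

lemma Setup.pre (S : Setup h) {A : Set Y} (hA : IsPreconnected A) : IsPreconnected (h ⁻¹' A) :=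
  preimage_preconnected S.hcl S.hs S.hm hA

lemma Setup.even_repr (S : Setup h) {v : X → X → ZMod 2} (hv : Good v) (he : ∀ x, eps v x = 0) :
    ∃ v' w, Coc v' univ ∧ (∀ x, Reg v x → LZ (v + v') x) ∧ (∀ x, LZ v x → LZ v' x) ∧
      Coc w univ ∧ Cob (v' + pull h w) univ := by
  obtain ⟨v', h1, h2⟩ := removal hv.fin (fun p _ => eps_zero_iff.1 (he p))
  have h3 : ∀ x, Reg v x → LZ (v + v') x := fun x hx => h2 x (fun hn => hn hx)
  have h4 : Coc v' univ := by
    intro x _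
    by_cases hx : Reg v x
    · exact (h3 x hx).reg hx
    · exact h1 x hx
  obtain ⟨g⟩ := S.g
  obtain ⟨w, hw, hw2⟩ := surj_H1 (SCo_nbhd S.hX) g S.hc S.hs S.hm h4
  exact ⟨v', w, h4, h3, fun x hx => (h3 x hx.to_reg).triv hx, hw, hw2⟩

lemma Cob.pull {w : Y → Y → ZMod 2} {U : Set Y} (hc : Continuous h) (hw : Cob w U) :
    Cob (pull h w) (h ⁻¹' U) := by
  obtain ⟨c, hc'⟩ := hw
  exact ⟨c ∘ h, fun x hx => (hc' _ hx).pull hc.continuousAt⟩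

lemma Cob.of_add {v w : X → X → ZMod 2} {U : Set X} (h1 : Cob (v + w) U) (h2 : Cob w U) : Cob v U := by
  have := h1.add h2
  rwa [cancel_fun₂'] at this

lemma cob_of_lz {v : X → X → ZMod 2} {U : Set X} (h1 : ∀ x ∈ U, LZ v x) : Cob v U := ⟨0, h1⟩

lemma Setup.lemM (S : Setup h) {E D W : Set Y} (hE : IsOpen E) (hEc : IsPreconnected E) (hED : E ⊆ D)
    (hD : IsClosed D) (hDW : D ⊆ W) (hW : IsOpen W) (hWS : SCo W) (hWD : IsPreconnected (W \ D))
    {P Q : Set X} (hP : IsClosed P) (hQ : IsClosed Q) (hPQ : Disjoint P Q)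
    (hcov : ∀ x, x ∉ Iset X → h x ∈ D → x ∈ P ∪ Q) {x x' : X} (hx : x ∈ P) (hxI : x ∉ Iset X) (hxE : h x ∈ E)
    (hx' : x' ∈ Q) (hxI' : x' ∉ Iset X) (hxE' : h x' ∈ E) : False := by
  classical
  have hEo : IsOpen (h ⁻¹' E) := hE.preimage S.hc
  obtain ⟨v1, a1, ha1, haI1, hg1, he1, hs1, hb1⟩ := End_exists S.hX hxI hEo hxE
  obtain ⟨v2, a2, ha2, haI2, hg2, he2, hs2, hb2⟩ := End_exists S.hX hxI' hEo hxE'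
  obtain ⟨l, hgl, hsl, hel⟩ := link S.hX hEo (S.pre hEc) ha1 haI1 ha2 haI2
  have hgv : Good (v1 + (l + v2)) := hg1.add (hgl.add hg2)
  obtain ⟨v', w, hv', hvr, hvl, hw, hvw⟩ := S.even_repr hgv (fun x => by
    rw [hg1.eps_add (hgl.add hg2), hgl.eps_add hg2, he1, he2, hel]
    generalize ind a1 x = p; generalize ind a2 x = q; clear * -; decide +revert)
  have hvE : ∀ x, h x ∉ E → LZ v' x := by
    intro x hx
    refine hvl x (LZ.add ?_ (LZ.add ?_ ?_))
    · by_contra hn; exact hx (hs1 x hn)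
    · by_contra hn; exact hx (hsl x hn).1
    · by_contra hn; exact hx (hs2 x hn)
  have hw1 : Cob w Dᶜ := by
    refine VB S.hc S.hcl S.hs S.hm hD.isOpen_compl (fun y _ => hw y (mem_univ y)) ?_
    refine Cob.of_add (w := v') ?_ (cob_of_lz fun x hx => hvE x fun hn => hx (hED hn))
    rw [add_comm]
    exact hvw.mono (subset_univ _)
  have hw2 : Cob w W := hWS w fun y _ => hw y (mem_univ y)
  have hw3 : Cob w univ := by
    have := Cob.glue hD.isOpen_compl hW (by rwa [inter_comm, ← diff_eq]) hw1 hw2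
    refine this.mono fun y _ => ?_
    by_cases hy : y ∈ D
    · exact Or.inr (hDW hy)
    · exact Or.inl hy
  obtain ⟨f, hf⟩ := Cob.of_add hvw (hw3.pull S.hc)
  have hf : ∀ x, Triv v' f x := fun x => hf x (mem_univ _)
  have hk : ∃ k, ∀ z, h z ∈ W \ D → f z = k := by
    by_cases hne : (h ⁻¹' (W \ D)).Nonempty
    · obtain ⟨z0, hz0⟩ := hne
      refine ⟨f z0, fun z hz => ?_⟩
      refine lc_const (S.pre hWD) (d := f) ?_ hz hz0
      intro y hy
      exact (hf y).symm' (hvE y fun hn => hy.2 (hED hn))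
    · exact ⟨0, fun z hz => (hne ⟨z, hz⟩).elim⟩
  obtain ⟨k, hk⟩ := hk
  have hWDo : IsOpen (h ⁻¹' (W \ D)) := (hW.sdiff hD).preimage S.hc
  have hIc : IsClosed (Iset X)ᶜ := isOpen_Iset.isClosed_compl
  have hDc : IsClosed (h ⁻¹' D) := hD.preimage S.hc
  have hP0 : IsClosed (P ∩ ((Iset X)ᶜ ∩ h ⁻¹' D)) := hP.inter (hIc.inter hDc)
  have hQ0 : IsClosed (Q ∩ ((Iset X)ᶜ ∩ h ⁻¹' D)) := hQ.inter (hIc.inter hDc)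
  obtain ⟨N, hN, hPN, hNcl⟩ := normal_exists_closure_subset hP0
    ((hW.preimage S.hc).inter hQ0.isOpen_compl) (by
      rintro z ⟨h1, h2, h3⟩
      exact ⟨hDW h3, fun hn => hPQ.le_bot ⟨h1, hn.1⟩⟩)
  let g : X → ZMod 2 := fun z => if z ∈ N then f z + k else 0
  refine no_single (hg1.add (good_dl g)) (a := a1) ?_ ?_ ?_
  · intro y hy
    have hv1 : y ≠ x → LZ v1 y := by
      intro hne; by_contra hn; exact hne (hb1 y hn hy)
    have hv2 : y ≠ x' → LZ v2 y := by
      intro hne; by_contra hn; exact hne (hb2 y hn hy)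
    have hl : LZ l y := by by_contra hn; exact hy (hsl y hn).2
    have hxN : x ∈ N := hPN ⟨hx, hxI, hED hxE⟩
    by_cases hyN : y ∈ N
    · have hyQ : y ≠ x' := by
        rintro rfl
        exact (hNcl (subset_closure hyN)).2 ⟨hx', hxI', hED hxE'⟩
      have t1 : Reg (v1 + (l + v2)) y := by
        by_contra hn; exact hy (hgv.int y hn)
      have t2 : Triv (v1 + (l + v2)) f y := (hvr y t1).symm.triv (hf y)
      have t3 : Triv v1 f y := by
        have := t2.add (hl.add (hv2 hyQ))
        rwa [cancel_fun₂', add_zero] at this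
      rw [lz_add_dl_iff]
      refine (t3.lc (triv_const k y)).congr_right (hN.mem_nhds hyN) ?_
      intro z hz
      simp [g, hz]
    · have hyx : y ≠ x := by rintro rfl; exact hyN hxN
      refine (hv1 hyx).add ?_
      by_cases hyc : y ∈ closure N
      · have hyW := hNcl hyc
        have hyD : h y ∉ D := by
          intro hyD
          rcases hcov y hy hyD with h1 | h1
          · exact hyN (hPN ⟨h1, hy, hyD⟩)
          · exact hyW.2 ⟨h1, hy, hyD⟩
        refine lz_dl_of_const (hWDo.mem_nhds ⟨hyW.1, hyD⟩) (k := 0) ?_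
        intro z hz
        simp only [g]
        rw [hk z hz]
        split_ifs
        · grind
        · rfl
      · refine lz_dl_of_const (isClosed_closure.isOpen_compl.mem_nhds hyc) (k := 0) ?_
        intro z hz
        have : z ∉ N := fun hn => hz (subset_closure hn)
        simp [g, this]
  · rw [hg1.eps_add (good_dl g), he1, ind_self, eps_of_reg (reg_dl g _), add_zero]
  · intro y hy
    rw [hg1.eps_add (good_dl g), he1, ind_ne hy, eps_of_reg (reg_dl g _), add_zero]

/-- points over boundary points -/
lemma Setup.clean {v : X → X → ZMod 2} (hv : Good v) : ∃ v', Good v' ∧ (∀ x, LZ v x → LZ v' x) ∧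
    (∀ x, eps v' x = eps v x) ∧ ∀ x, eps v x = 0 → Reg v' x := by
  have hS : ({x | ¬ Reg v x} ∩ {x | eps v x = 0}).Finite := hv.fin.inter_of_left _
  obtain ⟨v', h1, h2⟩ := removal hS (fun p hp => eps_zero_iff.1 hp.2)
  have h3 : ∀ x, Reg v x → LZ (v + v') x := fun x hx => h2 x (fun hn => hn.1 hx)
  have h4 : ∀ x, ¬ Reg v' x → ¬ Reg v x := fun x hx hn => hx ((h3 x hn).reg hn)
  refine ⟨v', ⟨hv.fin.subset h4, fun x hx => hv.int x (h4 x hx)⟩, fun x hx => (h3 x hx.to_reg).triv hx, ?_, ?_⟩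
  · intro x
    by_cases hx : x ∈ {x | ¬ Reg v x} ∩ {x | eps v x = 0}
    · rw [hx.2, eps_of_reg (h1 x hx)]
    · exact (eps_congr' (h2 x hx)).symm
  · intro x hx
    by_cases hr : Reg v x
    · exact (h3 x hr).reg hr
    · exact h1 x ⟨hr, hx⟩

end
end BM

namespace BM
open Set Topology Filter
variable {X Y M : Type} [TopologicalSpace X] [TopologicalSpace Y] [TopologicalSpace M]

def TT (e : OpenPartialHomeomorph Y M) (A : Set M) : Set Y := e.source ∩ e ⁻¹' A

section
variable (e : OpenPartialHomeomorph Y M)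
lemma TT_open {A : Set M} (hA : IsOpen A) : IsOpen (TT e A) := e.isOpen_inter_preimage hA

lemma TT_image (he : e.target = univ) (A : Set M) : TT e A = e.symm '' A := by
  rw [e.symm_image_eq_source_inter_preimage (by rw [he]; exact subset_univ _)]; rfl

lemma cont_symm (he : e.target = univ) : Continuous e.symm := by
  rw [← continuousOn_univ, ← he]; exact e.continuousOn_symm

lemma TT_pre (he : e.target = univ) {A : Set M} (hA : IsPreconnected A) : IsPreconnected (TT e A) := by
  rw [TT_image e he]
  exact hA.image _ (cont_symm e he).continuousOn

lemma TT_closed [T2Space Y] (he : e.target = univ) {A : Set M} (hA : IsCompact A) : IsClosed (TT e A) := by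
  rw [TT_image e he]
  exact (hA.image (cont_symm e he)).isClosed

lemma TT_diff (A : Set M) : e.source \ TT e A = TT e Aᶜ := by
  ext y; simp only [TT, mem_diff, mem_inter_iff, mem_preimage, mem_compl_iff]; tauto

lemma TT_sub (A : Set M) : TT e A ⊆ e.source := inter_subset_left

lemma TT_mono {A B : Set M} (h : A ⊆ B) : TT e A ⊆ TT e B := fun _ hy => ⟨hy.1, h hy.2⟩
end

def hset (C : Set ℂ) : Set HP := Subtype.val ⁻¹' C

lemma hset_pre {C : Set ℂ} (hC : Convex ℝ C) : IsPreconnected (hset C) := by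
  have h1 : Convex ℝ (C ∩ {z | 0 ≤ z.im}) := hC.inter (convex_halfSpace_im_ge 0)
  have h2 := (h1.isPreconnected).image hpr continuous_hpr.continuousOn
  convert h2 using 1
  ext z
  constructor
  · intro hz
    exact ⟨z, ⟨hz, z.2⟩, hpr_coe z⟩
  · rintro ⟨w, ⟨hw, hw'⟩, rfl⟩
    show (hpr w).1 ∈ C
    rw [hpr_val hw']; exact hw

lemma hset_compact {C : Set ℂ} (hC : IsCompact C) : IsCompact (hset C) := by
  have h2 := (hC.inter_right (isClosed_le continuous_const Complex.continuous_im :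
    IsClosed {z : ℂ | 0 ≤ z.im})).image continuous_hpr
  convert h2 using 1
  ext z
  constructor
  · intro hz
    exact ⟨z, ⟨hz, z.2⟩, hpr_coe z⟩
  · rintro ⟨w, ⟨hw, hw'⟩, rfl⟩
    show (hpr w).1 ∈ C
    rw [hpr_val hw']; exact hw

lemma convex_re_lt (a : ℝ) : Convex ℝ {z : ℂ | z.re < a} := convex_halfSpace_re_lt a
lemma convex_re_gt (a : ℝ) : Convex ℝ {z : ℂ | a < z.re} := convex_halfSpace_re_gt a
lemma convex_im_lt (a : ℝ) : Convex ℝ {z : ℂ | z.im < a} := convex_halfSpace_im_lt a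
lemma convex_im_gt (a : ℝ) : Convex ℝ {z : ℂ | a < z.im} := convex_halfSpace_im_gt a

/-- open box, closed box -/
def obox (r s : ℝ) : Set ℂ := {z | -r < z.re ∧ z.re < r ∧ -s < z.im ∧ z.im < s}
def cbox (r s : ℝ) : Set ℂ := {z | -r ≤ z.re ∧ z.re ≤ r ∧ -s ≤ z.im ∧ z.im ≤ s}

lemma obox_convex (r s : ℝ) : Convex ℝ (obox r s) :=
  (convex_re_gt (-r)).inter ((convex_re_lt r).inter ((convex_im_gt (-s)).inter (convex_im_lt s)))

lemma obox_open (r s : ℝ) : IsOpen (obox r s) :=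
  (isOpen_lt continuous_const Complex.continuous_re).inter
    ((isOpen_lt Complex.continuous_re continuous_const).inter
      ((isOpen_lt continuous_const Complex.continuous_im).inter
        (isOpen_lt Complex.continuous_im continuous_const)))

lemma cbox_compact (r s : ℝ) : IsCompact (cbox r s) := by
  have := (isCompact_Icc (a := -r) (b := r)).reProdIm (isCompact_Icc (a := -s) (b := s))
  convert this using 1
  ext z; simp [cbox, Complex.mem_reProdIm]; tauto

lemma obox_sub (r s : ℝ) : obox r s ⊆ cbox r s := fun _ h => ⟨h.1.le, h.2.1.le, h.2.2.1.le, h.2.2.2.le⟩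

lemma hset_open {C : Set ℂ} (hC : IsOpen C) : IsOpen (hset C) := hC.preimage continuous_subtype_val

lemma hset_zero {z : HP} (hz : z.1 = 0) {r s : ℝ} (hr : 0 < r) (hs : 0 < s) : z ∈ hset (obox r s) := by
  simp [hset, obox, hz, hr, hs]

def hpt (a b : ℝ) (hb : 0 ≤ b) : HP := ⟨⟨a, b⟩, hb⟩

lemma hset_cbox_compl : IsPreconnected (hset (cbox 1 1))ᶜ := by
  have h1 : (hset (cbox 1 1))ᶜ = (hset {z | z.re < -1} ∪ hset {z | 1 < z.im}) ∪ hset {z | 1 < z.re} := by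
    ext z
    have := z.2
    simp only [hset, cbox, mem_compl_iff, mem_preimage, mem_setOf_eq, mem_union]
    constructor
    · intro h
      by_contra! hn
      exact h ⟨hn.1.1, hn.2, by linarith, hn.1.2⟩
    · rintro ((h | h) | h) hn <;> linarith [hn.1, hn.2.1, hn.2.2.2]
  rw [h1]
  refine IsPreconnected.union (hpt 2 2 (by norm_num)) ?_ ?_ (IsPreconnected.union (hpt (-2) 2 (by norm_num)) ?_ ?_
    (hset_pre (convex_re_lt _)) (hset_pre (convex_im_gt _))) (hset_pre (convex_re_gt _)) <;>
    simp [hset, hpt]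

section
variable [T2Space X] [CompactSpace X] [T2Space Y] [CompactSpace Y] [LocallyConnectedSpace X] [LocallyConnectedSpace Y]
variable {h : X → Y}

lemma Setup.two (S : Setup h) {y : Y} (hy : y ∉ Iset Y) : IsPreconnected (h ⁻¹' {y} ∩ (Iset X)ᶜ) := by
  have hIc : IsClosed (Iset X)ᶜ := isOpen_Iset.isClosed_compl
  rw [isPreconnected_iff_subset_of_fully_disjoint_closed ((isClosed_singleton.preimage S.hc).inter hIc)]
  intro u v hu hv huv hd
  by_contra! hcon
  obtain ⟨⟨x, hx, hxu⟩, ⟨x', hx', hxv⟩⟩ := And.imp not_subset.1 not_subset.1 hcon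
  have hxv' : x ∈ v := (huv hx).resolve_left hxu
  have hxu' : x' ∈ u := (huv hx').resolve_right hxv
  obtain ⟨NP, NQ, hNP, hNQ, huN, hvN, hN⟩ := normal_separation hu hv hd
  obtain ⟨V, hV, hyV, hVO⟩ := fiber_nhds S.hcl (O := NP ∪ NQ ∪ Iset X) ((hNP.union hNQ).union isOpen_Iset)
    (y := y) (by
      intro z hz
      by_cases hzI : z ∈ Iset X
      · exact Or.inr hzI
      · rcases huv ⟨hz, hzI⟩ with h1 | h1
        · exact Or.inl (Or.inl (huN h1))
        · exact Or.inl (Or.inr (hvN h1)))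
  obtain ⟨e, he, hye, he0, heV⟩ := half_chart S.hY hy hV hyV
  have hyE : y ∈ TT e (hset (obox 1 1)) := ⟨hye, hset_zero he0 one_pos one_pos⟩
  have hD : IsClosed (TT e (hset (cbox 1 1))) := TT_closed e he (hset_compact (cbox_compact 1 1))
  have hDI : IsClosed ((Iset X)ᶜ ∩ h ⁻¹' TT e (hset (cbox 1 1))) := hIc.inter (hD.preimage S.hc)
  have hyx : h x = y := hx.1
  have hyx' : h x' = y := hx'.1
  have hED : TT e (hset (obox 1 1)) ⊆ TT e (hset (cbox 1 1)) := TT_mono e (preimage_mono (obox_sub 1 1))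
  refine S.lemM (E := TT e (hset (obox 1 1))) (D := TT e (hset (cbox 1 1))) (W := e.source)
    (TT_open e (hset_open (obox_open 1 1))) (TT_pre e he (hset_pre (obox_convex 1 1)))
    hED hD (TT_sub e _) e.open_source
    (SCo_chart SCo_univ_HP e he) (by rw [TT_diff]; exact TT_pre e he hset_cbox_compl)
    (P := NQᶜ ∩ ((Iset X)ᶜ ∩ h ⁻¹' TT e (hset (cbox 1 1))))
    (Q := NPᶜ ∩ ((Iset X)ᶜ ∩ h ⁻¹' TT e (hset (cbox 1 1))))
    (hNQ.isClosed_compl.inter hDI) (hNP.isClosed_compl.inter hDI) ?_ ?_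
    (x := x') (x' := x) ⟨fun hn => hN.le_bot ⟨huN hxu', hn⟩, hx'.2, by rw [mem_preimage, hyx']; exact hED hyE⟩ hx'.2
      (by rw [hyx']; exact hyE)
    ⟨fun hn => hN.le_bot ⟨hn, hvN hxv'⟩, hx.2, by rw [mem_preimage, hyx]; exact hED hyE⟩ hx.2
      (by rw [hyx]; exact hyE)
  · rw [Set.disjoint_left]
    rintro z ⟨h1, h2, h3⟩ ⟨h4, -, -⟩
    rcases hVO (heV h3.1) with (h5 | h5) | h5
    · exact h4 h5
    · exact h1 h5
    · exact h2 h5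
  · intro z hz hzD
    rcases hVO (heV hzD.1) with (h5 | h5) | h5
    · exact Or.inl ⟨fun hn => hN.le_bot ⟨h5, hn⟩, hz, hzD⟩
    · exact Or.inr ⟨fun hn => hN.le_bot ⟨hn, h5⟩, hz, hzD⟩
    · exact (hz h5).elim

lemma hset_G1 : IsPreconnected (hset (obox 1 1) ∪ hset {z | z.re < -1/2} ∪ hset {z | 4 < z.im}) := by
  refine IsPreconnected.union (hpt (-2) 5 (by norm_num)) ?_ ?_ (IsPreconnected.union (hpt (-3/4) (1/2) (by norm_num)) ?_ ?_
    (hset_pre (obox_convex _ _)) (hset_pre (convex_re_lt _))) (hset_pre (convex_im_gt _)) <;>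
    norm_num [hset, hpt, obox]

lemma hset_G2 : IsPreconnected (hset (obox 1 1) ∪ hset {z | 1/2 < z.re} ∪ hset {z | 4 < z.im}) := by
  refine IsPreconnected.union (hpt (2) 5 (by norm_num)) ?_ ?_ (IsPreconnected.union (hpt (3/4) (1/2) (by norm_num)) ?_ ?_
    (hset_pre (obox_convex _ _)) (hset_pre (convex_re_gt _))) (hset_pre (convex_im_gt _)) <;>
    norm_num [hset, hpt, obox]

lemma Setup.one (S : Setup h) {y : Y} (hy : y ∉ Iset Y) : ∃ x, h x = y ∧ x ∉ Iset X := by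
  by_contra! hcon
  obtain ⟨V, hV, hyV, hVO⟩ := fiber_nhds S.hcl (O := Iset X) isOpen_Iset (y := y) (fun z hz => hcon z hz)
  obtain ⟨e, he, hye, he0, heV⟩ := half_chart S.hY hy hV hyV
  have hWI : ∀ x, h x ∈ e.source → x ∈ Iset X := fun x hx => hVO (heV hx)
  let p5 : HP := hpt 0 5 (by norm_num)
  have hp5 : p5 ∈ e.target := he ▸ mem_univ _
  obtain ⟨a, ha⟩ := S.hs y
  obtain ⟨b, hb⟩ := S.hs (e.symm p5)
  have haW : h a ∈ e.source := ha ▸ hye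
  have hbW : h b ∈ e.source := hb ▸ e.map_target hp5
  have hea : (e (h a)).1 = 0 := by rw [ha]; exact he0
  have heb : e (h b) = p5 := by rw [hb, e.right_inv hp5]
  let G1 : Set HP := hset (obox 1 1) ∪ hset {z | z.re < -1/2} ∪ hset {z | 4 < z.im}
  let G2 : Set HP := hset (obox 1 1) ∪ hset {z | 1/2 < z.re} ∪ hset {z | 4 < z.im}
  have hre : ∀ r : ℝ, IsOpen {z : ℂ | z.re < r} := fun r => isOpen_lt Complex.continuous_re continuous_const
  have hre' : ∀ r : ℝ, IsOpen {z : ℂ | r < z.re} := fun r => isOpen_lt continuous_const Complex.continuous_re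
  have him' : ∀ r : ℝ, IsOpen {z : ℂ | r < z.im} := fun r => isOpen_lt continuous_const Complex.continuous_im
  have hG1o : IsOpen G1 := ((hset_open (obox_open 1 1)).union (hset_open (hre _))).union (hset_open (him' _))
  have hG2o : IsOpen G2 := ((hset_open (obox_open 1 1)).union (hset_open (hre' _))).union (hset_open (him' _))
  have ha1 : e (h a) ∈ hset (obox 1 1) := hset_zero hea one_pos one_pos
  have hb1 : e (h b) ∈ hset {z | 4 < z.im} := by rw [heb]; norm_num [hset, p5, hpt]
  have mk : ∀ G : Set HP, IsOpen G → IsPreconnected G → e (h a) ∈ G → e (h b) ∈ G → ∃ u : X → X → ZMod 2, Good u ∧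
      (∀ x, h x ∉ TT e G → LZ u x) ∧ (∀ x, eps u x = ind a x + ind b x) ∧ ∀ x, x ≠ a → x ≠ b → Reg u x := by
    intro G hG hGc haG hbG
    obtain ⟨l, hl, hls, hle⟩ := link S.hX ((TT_open e hG).preimage S.hc) (S.pre (TT_pre e he hGc))
      (a := a) (b := b) ⟨haW, haG⟩ (hWI a haW) ⟨hbW, hbG⟩ (hWI b hbW)
    obtain ⟨u, h1, h2, h3, h4⟩ := Setup.clean hl
    refine ⟨u, h1, fun x hx => h2 x ?_, fun x => by rw [h3, hle], fun x hxa hxb => h4 x ?_⟩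
    · by_contra hn; exact hx (hls x hn).1
    · rw [hle, ind_ne hxa, ind_ne hxb, add_zero]
  obtain ⟨u1, g1, l1, e1, r1⟩ := mk G1 hG1o hset_G1 (Or.inl (Or.inl ha1)) (Or.inr hb1)
  obtain ⟨u2, g2, l2, e2, r2⟩ := mk G2 hG2o hset_G2 (Or.inl (Or.inl ha1)) (Or.inr hb1)
  obtain ⟨v', w, hv', hvr, -, hw, hvw⟩ := S.even_repr (g1.add g2) (fun x => by
    rw [g1.eps_add g2, e1, e2]
    generalize ind a x = p; generalize ind b x = q; clear * -; decide +revert)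
  have hw2 : Cob w e.source := SCo_chart SCo_univ_HP e he w fun y _ => hw y (mem_univ y)
  obtain ⟨f, hf⟩ := Cob.of_add (hvw.mono (subset_univ _)) (hw2.pull S.hc)
  have hcc : IsClosed (hset (cbox 1 1)) := (hset_compact (cbox_compact 1 1)).isClosed
  let V0 : Set HP := hset (obox 4 4) \ hset (cbox 1 1)
  have hV0 : IsOpen V0 := (hset_open (obox_open 4 4)).sdiff hcc
  let V1 : Set HP := V0 ∩ hset {z | -1/2 < z.re}
  let V2 : Set HP := V0 ∩ hset {z | z.re < 1/2}
  have hV1 : IsOpen V1 := hV0.inter (hset_open (hre' _))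
  have hV2 : IsOpen V2 := hV0.inter (hset_open (hre _))
  have hVab : ∀ x, h x ∈ TT e V0 → x ≠ a ∧ x ≠ b := by
    rintro x ⟨hx1, hx2⟩
    constructor
    · rintro rfl
      exact hx2.2 (obox_sub 1 1 ha1)
    · rintro rfl
      have := hx2.1.2.2.2
      have h4 : (4:ℝ) < (e (h x)).1.im := hb1
      linarith
  have hout : ∀ z : HP, z ∉ hset (cbox 1 1) → z ∉ hset (obox 1 1) := fun z hz hn => hz (obox_sub 1 1 hn)
  have c1 : Cob u1 (h ⁻¹' TT e V1) := by
    refine cob_of_lz fun x hx => l1 x ?_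
    rintro ⟨-, (h1 | h1) | h1⟩
    · exact hout _ hx.2.1.2 h1
    · have h2 : -1/2 < (e (h x)).1.re := hx.2.2
      exact absurd h1 (not_lt.2 h2.le)
    · exact absurd h1 (not_lt.2 hx.2.1.1.2.2.2.le)
  have c2 : Cob u1 (h ⁻¹' TT e V2) := by
    refine ⟨f, fun x hx => ?_⟩
    have hab := hVab x ⟨hx.1, hx.2.1⟩
    have t1 := r1 x hab.1 hab.2
    have t2 := r2 x hab.1 hab.2
    have t3 : Triv (u1 + u2) f x := (hvr x (t1.add t2)).symm.triv (hf x hx.1)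
    have t4 : LZ u2 x := by
      apply l2 x
      rintro ⟨-, (h1 | h1) | h1⟩
      · exact hout _ hx.2.1.2 h1
      · have h2 : (e (h x)).1.re < 1/2 := hx.2.2
        exact absurd h1 (not_lt.2 h2.le)
      · exact absurd h1 (not_lt.2 hx.2.1.1.2.2.2.le)
    have := t3.add t4
    rwa [cancel_fun₂', add_zero] at this
  have hV12 : V1 ∩ V2 = hset ({z | -1/2 < z.re} ∩ ({z | z.re < 1/2} ∩ ({z | 1 < z.im} ∩ {z | z.im < 4}))) := by
    ext z
    have := z.2
    simp only [V1, V2, V0, hset, obox, cbox, mem_inter_iff, mem_diff, mem_preimage, mem_setOf_eq]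
    constructor
    · rintro ⟨⟨⟨h1, h2⟩, h3⟩, -, h4⟩
      refine ⟨h3, h4, ?_, h1.2.2.2⟩
      by_contra! hn
      exact h2 ⟨by linarith, by linarith, by linarith, hn⟩
    · rintro ⟨h1, h2, h3, h4⟩
      have : (-4 < z.1.re ∧ z.1.re < 4 ∧ -4 < z.1.im ∧ z.1.im < 4) ∧ ¬ (-1 ≤ z.1.re ∧ z.1.re ≤ 1 ∧ -1 ≤ z.1.im ∧ z.1.im ≤ 1) :=
        ⟨⟨by linarith, by linarith, by linarith, h4⟩, fun hn => by linarith [hn.2.2.2]⟩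
      exact ⟨⟨this, h1⟩, this, h2⟩
  have hpc : IsPreconnected (h ⁻¹' TT e V1 ∩ h ⁻¹' TT e V2) := by
    have : h ⁻¹' TT e V1 ∩ h ⁻¹' TT e V2 = h ⁻¹' TT e (V1 ∩ V2) := by
      ext x; simp only [TT, mem_inter_iff, mem_preimage]; tauto
    rw [this, hV12]
    exact S.pre (TT_pre e he (hset_pre ((convex_re_gt _).inter ((convex_re_lt _).inter
      ((convex_im_gt _).inter (convex_im_lt _))))))
  obtain ⟨c, hc⟩ := Cob.glue ((TT_open e hV1).preimage S.hc) ((TT_open e hV2).preimage S.hc) hpc c1 c2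
  have hc : ∀ x, h x ∈ TT e V0 → LZ (u1 + dl c) x := by
    intro x hx
    rw [lz_add_dl_iff]
    apply hc
    by_cases h1 : -1/2 < (e (h x)).1.re
    · exact Or.inl ⟨hx.1, hx.2, h1⟩
    · refine Or.inr ⟨hx.1, hx.2, ?_⟩
      show (e (h x)).1.re < 1/2
      linarith
  let N : Set X := h ⁻¹' TT e (hset (obox 2 2))
  have hN : IsOpen N := (TT_open e (hset_open (obox_open 2 2))).preimage S.hc
  have hclN : closure N ⊆ h ⁻¹' TT e (hset (cbox 2 2)) :=
    closure_minimal (preimage_mono (TT_mono e (preimage_mono (obox_sub 2 2))))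
      ((TT_closed e he (hset_compact (cbox_compact 2 2))).preimage S.hc)
  have hbd : ∀ x ∈ closure N, x ∉ N → LZ (u1 + dl c) x := by
    intro x hx hxN
    obtain ⟨h1, h2⟩ := hclN hx
    have h3 := (e (h x)).2
    refine hc x ⟨h1, ⟨?_, ?_⟩⟩
    · obtain ⟨k1, k2, k3, k4⟩ := h2
      exact ⟨by linarith, by linarith, by linarith, by linarith⟩
    · intro hn
      obtain ⟨k1, k2, k3, k4⟩ := hn
      exact hxN ⟨h1, by linarith, by linarith, by linarith, by linarith⟩
  have hg : Good (u1 + dl c) := g1.add (good_dl c)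
  have haN : a ∈ N := ⟨haW, hset_zero hea two_pos two_pos⟩
  have hbN : b ∉ N := by
    intro hn
    have h1 := hn.2.2.2.2
    have h4 : (4:ℝ) < (e (h b)).1.im := hb1
    linarith
  have hxi : ∀ x, ¬ Reg (cut N (u1 + dl c)) x → ¬ Reg (u1 + dl c) x := by
    intro x hx hr
    by_cases hxN : x ∈ N
    · exact hx ((cut_in hN _ hxN).reg hr)
    · exact hx (cut_out hbd hxN).to_reg
  have heps : ∀ x, eps (cut N (u1 + dl c)) x = ind a x := by
    intro x
    by_cases hxN : x ∈ N
    · rw [← eps_congr' (cut_in hN _ hxN), g1.eps_add (good_dl c), e1, eps_of_reg (reg_dl c x),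
        ind_ne (a := b) (y := x) (by rintro rfl; exact hbN hxN), add_zero, add_zero]
    · rw [eps_of_reg (cut_out hbd hxN).to_reg, ind_ne (by rintro rfl; exact hxN haN)]
  refine no_single (φ := cut N (u1 + dl c)) ⟨hg.fin.subset hxi, fun x hx => hg.int x (hxi x hx)⟩ ?_ (a := a)
    (by rw [heps, ind_self]) (fun x hx => by rw [heps, ind_ne hx])
  intro x hx
  exact cut_out hbd fun hn => hx (hWI x hn.1)

end
end BM

namespace BM
open Set Topology Filter
variable {X Y M : Type} [TopologicalSpace X] [TopologicalSpace Y] [TopologicalSpace M]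

lemma Iset_homeo (g : X ≃ₜ Y) {x : X} (hx : g x ∈ Iset Y) : x ∈ Iset X := by
  obtain ⟨e, h1, h2⟩ := hx
  refine ⟨g.transOpenPartialHomeomorph e, ?_, ?_⟩
  · simpa using h1
  · simpa using h2

lemma cbox_compl (R : ℝ) : IsPreconnected (cbox R 1)ᶜ := by
  have h1 : (cbox R 1)ᶜ = (({z | z.re < -R} ∪ {z | 1 < z.im}) ∪ {z | R < z.re}) ∪ {z | z.im < -1} := by
    ext z
    simp only [cbox, mem_compl_iff, mem_setOf_eq, mem_union]
    constructor
    · intro h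
      by_contra! hn
      exact h ⟨hn.1.1.1, hn.1.2, hn.2, hn.1.1.2⟩
    · rintro (((h | h) | h) | h) hn <;> linarith [hn.1, hn.2.1, hn.2.2.2, hn.2.2.1]
  rw [h1]
  refine IsPreconnected.union (⟨R + 1, -2⟩ : ℂ) ?_ ?_ (IsPreconnected.union (⟨R + 1, 2⟩ : ℂ) ?_ ?_
    (IsPreconnected.union (⟨-R - 1, 2⟩ : ℂ) ?_ ?_
    (convex_re_lt _).isPreconnected (convex_im_gt _).isPreconnected) (convex_re_gt _).isPreconnected)
    (convex_im_lt _).isPreconnected <;> simp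

noncomputable def shear (p : ℝ → ℝ) (hp : Continuous p) : ℂ ≃ₜ ℂ where
  toFun z := ⟨z.re, z.im - p z.re⟩
  invFun z := ⟨z.re, z.im + p z.re⟩
  left_inv z := by apply Complex.ext <;> simp
  right_inv z := by apply Complex.ext <;> simp
  continuous_toFun := continuous_mk_complex Complex.continuous_re
    (Complex.continuous_im.sub (hp.comp Complex.continuous_re))
  continuous_invFun := continuous_mk_complex Complex.continuous_re
    (Complex.continuous_im.add (hp.comp Complex.continuous_re))

lemma wiggle {k : ℝ → ℂ} (hk : Continuous k) {a b : ℝ} (hne : k a ≠ k b) : ∃ Ψ : ℂ ≃ₜ ℂ, ∃ s t z t1 : ℝ,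
    s < t ∧ t < z ∧ z < t1 ∧ (Ψ (k s)).im = 2 ∧ (Ψ (k t)).im = 0 ∧ (Ψ (k z)).im = 2 ∧ (Ψ (k t1)).im = 0 := by
  classical
  wlog hab : a < b generalizing a b
  · exact this hne.symm (lt_of_le_of_ne (not_lt.1 hab) (by rintro rfl; exact hne rfl))
  let c : ℂ := (starRingEnd ℂ) (k b - k a)
  have hc : c ≠ 0 := (map_ne_zero (starRingEnd ℂ)).2 (sub_ne_zero.2 hne.symm)
  let ρ : ℝ → ℝ := fun τ => (c * k τ).re
  have hρ : Continuous ρ := by fun_prop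
  have hlt : ρ a < ρ b := by
    have h1 : ρ b - ρ a = Complex.normSq (k b - k a) := by
      simp only [ρ, c, Complex.normSq_apply, Complex.mul_re, Complex.conj_re, Complex.conj_im,
        Complex.sub_re, Complex.sub_im]
      ring
    have h2 : 0 < Complex.normSq (k b - k a) := Complex.normSq_pos.2 (sub_ne_zero.2 hne.symm)
    linarith
  obtain ⟨z, hz, hz2⟩ := intermediate_value_Ioo hab.le hρ.continuousOn
    (show (ρ a + 2 * ρ b) / 3 ∈ Ioo (ρ a) (ρ b) from ⟨by linarith, by linarith⟩)
  obtain ⟨t, ht, ht2⟩ := intermediate_value_Ioo hz.1.le hρ.continuousOn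
    (show (2 * ρ a + ρ b) / 3 ∈ Ioo (ρ a) (ρ z) from ⟨by linarith, by linarith⟩)
  let q : ℝ → ℝ := fun τ => (c * k τ).im - if τ = t ∨ τ = b then 0 else 2
  let s : Finset ℝ := {a, t, z, b}
  have hinj : Set.InjOn ρ s := by
    intro x hx y hy hxy
    simp only [s, Finset.coe_insert, Finset.coe_singleton, mem_insert_iff, mem_singleton_iff] at hx hy
    rcases hx with rfl | rfl | rfl | rfl <;> rcases hy with rfl | rfl | rfl | rfl <;> first | rfl | (exfalso; linarith)
  let p : Polynomial ℝ := Lagrange.interpolate s ρ q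
  have hp : ∀ τ ∈ s, p.eval (ρ τ) = q τ := fun τ hτ => Lagrange.eval_interpolate_at_node q hinj hτ
  have key : ∀ τ ∈ s, (((Homeomorph.mulLeft₀ c hc).trans (shear (fun x => p.eval x) p.continuous)) (k τ)).im
      = if τ = t ∨ τ = b then 0 else 2 := by
    intro τ hτ
    have : (c * k τ).im - p.eval (ρ τ) = if τ = t ∨ τ = b then 0 else 2 := by rw [hp τ hτ]; simp [q]
    exact this
  refine ⟨(Homeomorph.mulLeft₀ c hc).trans (shear (fun x => p.eval x) p.continuous), a, t, z, b, ht.1, ht.2, hz.2, ?_, ?_, ?_, ?_⟩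
  · rw [key a (by simp [s]), if_neg]
    rintro (h | h) <;> linarith [ht.1]
  · rw [key t (by simp [s]), if_pos (Or.inl rfl)]
  · rw [key z (by simp [s]), if_neg]
    rintro (h | h) <;> linarith [ht.2, hz.2]
  · rw [key b (by simp [s]), if_pos (Or.inr rfl)]

section
variable [T2Space X] [CompactSpace X] [T2Space Y] [CompactSpace Y] [LocallyConnectedSpace X] [LocallyConnectedSpace Y]
variable {h : X → Y}

lemma Setup.caseI (S : Setup h) {x1 : X} (hx1 : x1 ∉ Iset X) (hy : h x1 ∈ Iset Y)
    (hN : ∀ N : Set X, IsOpen N → x1 ∈ N → ∃ x2 ∈ N, x2 ∉ Iset X ∧ h x2 ≠ h x1) : False := by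
  obtain ⟨θ, hθ, hyθ, -, -⟩ := disc_chart hy isOpen_univ (mem_univ _)
  obtain ⟨e, he, hxe, -, hesub⟩ := half_chart S.hX hx1 (θ.open_source.preimage S.hc) hyθ
  obtain ⟨x2, hx2e, hx2I, hx2⟩ := hN e.source e.open_source hxe
  let ι : ℝ → HP := fun τ => hpt τ 0 le_rfl
  have hι : Continuous ι := by
    apply Continuous.subtype_mk
    exact continuous_mk_complex continuous_id continuous_const
  let σ : ℝ → X := fun τ => e.symm (ι τ)
  have hσ : Continuous σ := (cont_symm e he).comp hι
  have hσe : ∀ τ, σ τ ∈ e.source := fun τ => e.map_target (he ▸ mem_univ _)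
  have heσ : ∀ τ, e (σ τ) = ι τ := fun τ => e.right_inv (he ▸ mem_univ _)
  have hσI : ∀ τ, σ τ ∉ Iset X := fun τ => bottom e (hσe τ) (by rw [heσ]; rfl)
  have hσre : ∀ x ∈ e.source, x ∉ Iset X → x = σ (e x).1.re := by
    intro x hx hxI
    apply e.injOn hx (hσe _)
    rw [heσ]
    apply Subtype.ext
    apply Complex.ext
    · rfl
    · show (e x).1.im = 0
      by_contra hn
      exact hxI (up_Iset e hx (lt_of_le_of_ne (e x).2 (Ne.symm hn)))
  let k : ℝ → ℂ := fun τ => θ (h (σ τ))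
  have hk : Continuous k := by
    rw [continuous_iff_continuousAt]
    intro τ
    exact ContinuousAt.comp (f := fun τ => h (σ τ)) (g := θ) (θ.continuousAt (hesub (hσe τ))) (S.hc.comp hσ).continuousAt
  have hne : k (e x1).1.re ≠ k (e x2).1.re := by
    intro hn
    have := θ.injOn (hesub (hσe _)) (hesub (hσe _)) hn
    rw [← hσre x1 hxe hx1, ← hσre x2 hx2e hx2I] at this
    exact hx2 this.symm
  obtain ⟨Ψ, s, t, z, t1, hst, htz, hzt, is, it, iz, it1⟩ := wiggle hk hne
  let ϑ : OpenPartialHomeomorph Y ℂ := θ.transHomeomorph Ψ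
  have hϑ : ϑ.target = univ := by simp [ϑ, hθ]
  have hϑs : ϑ.source = θ.source := by simp [ϑ]
  have hϑv : ∀ τ, ϑ (h (σ τ)) = Ψ (k τ) := fun τ => rfl
  have hϑm : ∀ τ, h (σ τ) ∈ ϑ.source := fun τ => by rw [hϑs]; exact hesub (hσe τ)
  let R : ℝ := |(Ψ (k t)).re| + |(Ψ (k t1)).re| + 1
  have hED : TT ϑ (obox R 1) ⊆ TT ϑ (cbox R 1) := TT_mono ϑ (obox_sub R 1)
  have hD : IsClosed (TT ϑ (cbox R 1)) := TT_closed ϑ hϑ (cbox_compact R 1)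
  have hDX : IsClosed (h ⁻¹' TT ϑ (cbox R 1)) := hD.preimage S.hc
  have hEt : h (σ t) ∈ TT ϑ (obox R 1) := by
    refine ⟨hϑm t, ?_⟩
    have h1 := abs_le.1 (le_refl |(Ψ (k t)).re|)
    have h2 := abs_nonneg (Ψ (k t1)).re
    show -R < (Ψ (k t)).re ∧ (Ψ (k t)).re < R ∧ -1 < (Ψ (k t)).im ∧ (Ψ (k t)).im < 1
    rw [it]
    exact ⟨by simp only [R]; linarith, by simp only [R]; linarith, by norm_num, by norm_num⟩
  have hEt1 : h (σ t1) ∈ TT ϑ (obox R 1) := by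
    refine ⟨hϑm t1, ?_⟩
    have h1 := abs_le.1 (le_refl |(Ψ (k t1)).re|)
    have h2 := abs_nonneg (Ψ (k t)).re
    show -R < (Ψ (k t1)).re ∧ (Ψ (k t1)).re < R ∧ -1 < (Ψ (k t1)).im ∧ (Ψ (k t1)).im < 1
    rw [it1]
    exact ⟨by simp only [R]; linarith, by simp only [R]; linarith, by norm_num, by norm_num⟩
  let B : Set X := e.source ∩ e ⁻¹' (hset {z' | s < z'.re} ∩ hset {z' | z'.re < z})
  have hB : IsOpen B := e.isOpen_inter_preimage ((hset_open (isOpen_lt continuous_const Complex.continuous_re)).inter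
    (hset_open (isOpen_lt Complex.continuous_re continuous_const)))
  refine S.lemM (E := TT ϑ (obox R 1)) (D := TT ϑ (cbox R 1)) (W := ϑ.source)
    (TT_open ϑ (obox_open R 1)) (TT_pre ϑ hϑ (obox_convex R 1).isPreconnected)
    hED hD (TT_sub ϑ _) ϑ.open_source (SCo_chart SCo_univ_C ϑ hϑ)
    (by rw [TT_diff]; exact TT_pre ϑ hϑ (cbox_compl R))
    (P := σ '' Icc s z ∩ h ⁻¹' TT ϑ (cbox R 1)) (Q := (Iset X)ᶜ ∩ (h ⁻¹' TT ϑ (cbox R 1) ∩ Bᶜ))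
    ((isCompact_Icc.image hσ).isClosed.inter hDX)
    (isOpen_Iset.isClosed_compl.inter (hDX.inter hB.isClosed_compl)) ?_ ?_
    (x := σ t) (x' := σ t1) ⟨⟨t, ⟨hst.le, htz.le⟩, rfl⟩, hED hEt⟩ (hσI t) hEt
    ⟨hσI t1, hED hEt1, ?_⟩ (hσI t1) hEt1
  · rw [Set.disjoint_left]
    rintro x ⟨⟨τ, hτ, rfl⟩, hDτ⟩ ⟨-, -, hnB⟩
    have hDim : (Ψ (k τ)).im ≤ 1 := hDτ.2.2.2.2
    have hs : s ≠ τ := by rintro rfl; linarith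
    have hz : τ ≠ z := by rintro rfl; linarith
    apply hnB
    refine ⟨hσe τ, ?_⟩
    rw [mem_preimage, heσ]
    exact ⟨lt_of_le_of_ne hτ.1 hs, lt_of_le_of_ne hτ.2 hz⟩
  · intro x hxI hxD
    by_cases hxB : x ∈ B
    · left
      exact ⟨⟨(e x).1.re, ⟨hxB.2.1.le, hxB.2.2.le⟩, (hσre x hxB.1 hxI).symm⟩, hxD⟩
    · exact Or.inr ⟨hxI, hxD, hxB⟩
  · rintro ⟨-, h2⟩
    rw [mem_preimage, heσ] at h2
    have : t1 < z := h2.2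
    linarith

lemma Setup.count (S : Setup h) {x : X} (hx : x ∉ Iset X) :
    ∃ b, b ∉ Iset Y ∧ b ∈ connectedComponent (h x) := by
  obtain ⟨g⟩ := S.g
  let BX : Set (ConnectedComponents X) := ConnectedComponents.mk '' (Iset X)ᶜ
  let BY : Set (ConnectedComponents Y) := ConnectedComponents.mk '' (Iset Y)ᶜ
  have key : ∀ f : X → Y, ∀ hf : Continuous f, ∀ a : X, hf.connectedComponentsMap (ConnectedComponents.mk a) = ConnectedComponents.mk (f a) :=
    fun f hf a => rfl
  have h1 : BY ⊆ S.hc.connectedComponentsMap '' BX := by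
    rintro _ ⟨y, hy, rfl⟩
    obtain ⟨a, rfl, ha⟩ := S.one hy
    exact ⟨_, ⟨a, ha, rfl⟩, rfl⟩
  have h2 : BX ⊆ g.symm.continuous.connectedComponentsMap '' BY := by
    rintro _ ⟨a, ha, rfl⟩
    refine ⟨_, ⟨g a, fun hn => ha (Iset_homeo g hn), rfl⟩, ?_⟩
    show ConnectedComponents.mk (g.symm (g a)) = _
    simp
  have h3 : (S.hc.connectedComponentsMap '' BX).ncard ≤ BY.ncard :=
    (Set.ncard_image_le (toFinite _)).trans ((Set.ncard_le_ncard h2 (toFinite _)).trans (Set.ncard_image_le (toFinite _)))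
  have h4 := Set.eq_of_subset_of_ncard_le h1 h3 (toFinite _)
  have h5 : ConnectedComponents.mk (h x) ∈ BY := by
    rw [h4]; exact ⟨_, ⟨x, hx, rfl⟩, rfl⟩
  obtain ⟨b, hb, hbx⟩ := h5
  exact ⟨b, hb, ConnectedComponents.coe_eq_coe'.1 hbx⟩

lemma Setup.caseII (S : Setup h) {x : X} (hxI : x ∉ Iset X) (hy : h x ∈ Iset Y)
    (hN : ∀ x1, x1 ∉ Iset X → h x1 = h x → ∃ N : Set X, IsOpen N ∧ x1 ∈ N ∧ ∀ x2 ∈ N, x2 ∉ Iset X → h x2 = h x) : False := by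
  classical
  obtain ⟨b, hb, hbc⟩ := S.count hxI
  obtain ⟨x', rfl, hxI'⟩ := S.one hb
  have hO : IsOpen (h ⁻¹' connectedComponent (h x)) := isOpen_connectedComponent.preimage S.hc
  have hOc : IsPreconnected (h ⁻¹' connectedComponent (h x)) := S.pre isPreconnected_connectedComponent
  obtain ⟨v1, a1, ha1, haI1, hg1, he1, hs1, hb1⟩ := End_exists S.hX hxI hO mem_connectedComponent
  obtain ⟨v2, a2, ha2, haI2, hg2, he2, hs2, hb2⟩ := End_exists S.hX hxI' hO hbc
  obtain ⟨l, hgl, hsl, hel⟩ := link S.hX hO hOc ha1 haI1 ha2 haI2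
  have hgv : Good (v1 + (l + v2)) := hg1.add (hgl.add hg2)
  obtain ⟨v', w, hv', hvr, hvl, hw, hvw⟩ := S.even_repr hgv (fun x => by
    rw [hg1.eps_add (hgl.add hg2), hgl.eps_add hg2, he1, he2, hel]
    generalize ind a1 x = p; generalize ind a2 x = q; clear * -; decide +revert)
  obtain ⟨θ, hθ, hyθ, -, -⟩ := disc_chart hy isOpen_univ (mem_univ _)
  have hw2 : Cob w θ.source := SCo_chart SCo_univ_C θ hθ w fun y _ => hw y (mem_univ y)
  obtain ⟨f, hf⟩ := Cob.of_add (hvw.mono (subset_univ _)) (hw2.pull S.hc)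
  let N' : Set X := ⋃₀ {N | IsOpen N ∧ ∀ x2 ∈ N, x2 ∉ Iset X → h x2 = h x}
  have hN'o : IsOpen N' := isOpen_sUnion fun N hN => hN.1
  have hN' : ∀ x2 ∈ N', x2 ∉ Iset X → h x2 = h x := by
    rintro x2 ⟨N, hN, hx2⟩ hI
    exact hN.2 x2 hx2 hI
  obtain ⟨N, hNo, hPN, hNcl⟩ := normal_exists_closure_subset
    ((isClosed_singleton.preimage S.hc).inter isOpen_Iset.isClosed_compl : IsClosed (h ⁻¹' {h x} ∩ (Iset X)ᶜ))
    (hN'o.inter (θ.open_source.preimage S.hc)) (by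
      rintro z ⟨h1, h2⟩
      have h1 : h z = h x := h1
      obtain ⟨N, hN1, hN2, hN3⟩ := hN z h2 h1
      exact ⟨⟨N, ⟨hN1, hN3⟩, hN2⟩, by rw [mem_preimage, h1]; exact hyθ⟩)
  let g : X → ZMod 2 := fun z => if z ∈ N then f z else 0
  refine no_single (hg1.add (good_dl g)) (a := a1) ?_ ?_ ?_
  · intro y hyI
    have hv1 : y ≠ x → LZ v1 y := by
      intro hne; by_contra hn; exact hne (hb1 y hn hyI)
    have hv2 : y ≠ x' → LZ v2 y := by
      intro hne; by_contra hn; exact hne (hb2 y hn hyI)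
    have hl : LZ l y := by by_contra hn; exact hyI (hsl y hn).2
    have hxN : x ∈ N := hPN ⟨rfl, hxI⟩
    by_cases hyN : y ∈ N
    · have hyc := hNcl (subset_closure hyN)
      have hyF := hN' y hyc.1 hyI
      have hyQ : y ≠ x' := by
        rintro rfl
        rw [hyF] at hb
        exact hb hy
      have t1 : Reg (v1 + (l + v2)) y := by
        by_contra hn; exact hyI (hgv.int y hn)
      have t2 : Triv (v1 + (l + v2)) f y := (hvr y t1).symm.triv (hf y hyc.2)
      have t3 : Triv v1 f y := by
        have := t2.add (hl.add (hv2 hyQ))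
        rwa [cancel_fun₂', add_zero] at this
      rw [lz_add_dl_iff]
      refine t3.congr_right (hNo.mem_nhds hyN) ?_
      intro z hz
      simp [g, hz]
    · have hyx : y ≠ x := by rintro rfl; exact hyN hxN
      refine (hv1 hyx).add ?_
      have hyc : y ∉ closure N := by
        intro hyc
        exact hyN (hPN ⟨hN' y (hNcl hyc).1 hyI, hyI⟩)
      refine lz_dl_of_const (isClosed_closure.isOpen_compl.mem_nhds hyc) (k := 0) ?_
      intro z hz
      have : z ∉ N := fun hn => hz (subset_closure hn)
      simp [g, this]
  · rw [hg1.eps_add (good_dl g), he1, ind_self, eps_of_reg (reg_dl g _), add_zero]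
  · intro y hy
    rw [hg1.eps_add (good_dl g), he1, ind_ne hy, eps_of_reg (reg_dl g _), add_zero]

lemma Setup.three (S : Setup h) {x : X} (hy : h x ∈ Iset Y) : x ∈ Iset X := by
  by_contra hxI
  refine S.caseII hxI hy ?_
  intro x1 hx1 hh
  by_contra! hcon
  refine S.caseI hx1 (hh ▸ hy) ?_
  intro N hN hxN
  obtain ⟨x2, h1, h2, h3⟩ := hcon N hN hxN
  exact ⟨x2, h1, h2, by rwa [hh]⟩

end

lemma Iset_eq (Z : Type) [TopologicalSpace Z] : Iset Z =
    {x | ∃ U : Set Z, IsOpen U ∧ x ∈ U ∧ Nonempty (↥U ≃ₜ EuclideanSpace ℝ (Fin 2))} := by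
  let L : ℂ ≃ₜ EuclideanSpace ℝ (Fin 2) := Complex.orthonormalBasisOneI.repr.toHomeomorph
  ext x
  constructor
  · rintro ⟨e, hx, he⟩
    refine ⟨e.source, e.open_source, hx, ⟨?_⟩⟩
    exact (e.toHomeomorphSourceTarget.trans ((Homeomorph.setCongr he).trans (Homeomorph.Set.univ ℂ))).trans L
  · rintro ⟨U, hU, hx, ⟨φ⟩⟩
    let U' : TopologicalSpace.Opens Z := ⟨U, hU⟩
    let i := U'.openPartialHomeomorphSubtypeCoe ⟨⟨x, hx⟩⟩
    refine ⟨i.symm.transHomeomorph (φ.trans L.symm), ?_, ?_⟩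
    · simp [i]; exact hx
    · simp [i]

lemma isM_of (Z : Type) [TopologicalSpace Z] [ChartedSpace (EuclideanHalfSpace 2) Z] : IsM Z := by
  let H : EuclideanHalfSpace 2 ≃ₜ HP :=
    { toFun := fun x => ⟨⟨x.1 1, x.1 0⟩, x.2⟩
      invFun := fun z => ⟨!₂[z.1.im, z.1.re], by simpa using z.2⟩
      left_inv := by
        intro x
        apply Subtype.ext
        ext i
        fin_cases i <;> simp
      right_inv := by
        intro z
        apply Subtype.ext
        apply Complex.ext <;> simp
      continuous_toFun := by
        apply Continuous.subtype_mk
        apply continuous_mk_complex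
        · have : Continuous fun x : EuclideanSpace ℝ (Fin 2) => x 1 := by fun_prop
          exact this.comp continuous_subtype_val
        · have : Continuous fun x : EuclideanSpace ℝ (Fin 2) => x 0 := by fun_prop
          exact this.comp continuous_subtype_val
      continuous_invFun := by
        apply Continuous.subtype_mk
        refine (PiLp.continuous_toLp 2 _).comp ?_
        refine continuous_pi fun i => ?_
        fin_cases i
        · exact Complex.continuous_im.comp continuous_subtype_val
        · exact Complex.continuous_re.comp continuous_subtype_val }
  intro x
  exact ⟨(chartAt (EuclideanHalfSpace 2) x).transHomeomorph H, by simp⟩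

end BM

theorem monotone_map_boundary
    (X Y : Type)
    [TopologicalSpace X] [TopologicalSpace Y]
    -- `X` and `Y` are compact 2-manifolds with boundary:
    [ChartedSpace (EuclideanHalfSpace 2) X] [T2Space X] [CompactSpace X]
    [ChartedSpace (EuclideanHalfSpace 2) Y] [T2Space Y] [CompactSpace Y]
    -- that are homeomorphic:
    (hhomeo : Nonempty (X ≃ₜ Y))
    -- `h` is continuous, surjective and monotone:
    (h : X → Y) (hc : Continuous h) (hs : Function.Surjective h)
    (hm : ∀ y : Y, IsPreconnected (h ⁻¹' {y})) :
    manifoldInterior Y ⊆ h '' manifoldInterior X ∧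
    manifoldBoundary Y = h '' manifoldBoundary X ∧
    ∀ y ∈ manifoldBoundary Y, IsPreconnected (h ⁻¹' {y} ∩ manifoldBoundary X) := by
  have _ : LocallyConnectedSpace X := ChartedSpace.locallyConnectedSpace (EuclideanHalfSpace 2) X
  have _ : LocallyConnectedSpace Y := ChartedSpace.locallyConnectedSpace (EuclideanHalfSpace 2) Y
  have S : BM.Setup h := ⟨BM.isM_of X, BM.isM_of Y, hhomeo, hc, hs, hm⟩
  have hXI : manifoldInterior X = BM.Iset X := (BM.Iset_eq X).symm
  have hYI : manifoldInterior Y = BM.Iset Y := (BM.Iset_eq Y).symm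
  unfold manifoldBoundary
  rw [hXI, hYI]
  refine ⟨?_, ?_, fun y hy => S.two hy⟩
  · intro y hy
    obtain ⟨x, rfl⟩ := hs y
    exact ⟨x, S.three hy, rfl⟩
  · ext y
    constructor
    · intro hy
      obtain ⟨x, hx, hxI⟩ := S.one hy
      exact ⟨x, hxI, hx⟩
    · rintro ⟨x, hx, rfl⟩ hn
      exact hx (S.three hn)
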